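/- arXiv:1712.01167 — 5 statements merged into one kernel-verified Lean document; each statement's English description precedes it below -/
import Mathlib

section
/- Let F = x₀³ + x₁³ + x₂³ + x₃³ and let G be the stabilizer of the Fermat cubic surface V(F) in PGL₄(k), i.e., the image in PGL₄(k) of {A ∈ GL₄(k) : ∃ λ ∈ kˣ, F(A·x) = λ·F(x)}. If char k ∉ {2,3}, then G has cardinality 648 (it is isomorphic to 3³ ⋊ S₄). If char k = 2, then G has cardinality 25920 (it is isomorphic to the simple group PSU₄(2)). -/
open MvPolynomial Matrix

/-- The polynomial `F(A·x)`, obtained from `F` by substituting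
`xᵢ ↦ ∑ⱼ Aᵢⱼ xⱼ`. -/
noncomputable def substMatrix {k : Type*} [Field k] (A : Matrix (Fin 4) (Fin 4) k)
    (F : MvPolynomial (Fin 4) k) : MvPolynomial (Fin 4) k :=
  aeval (fun i => ∑ j, C (A i j) * X j) F

/-- A matrix `A` leaves the cubic surface `V(F)` invariant if `F(A·x) = λ·F(x)`
for some `λ ∈ kˣ`. -/
def LeavesInvariant {k : Type*} [Field k] (A : Matrix (Fin 4) (Fin 4) k)
    (F : MvPolynomial (Fin 4) k) : Prop :=
  ∃ lam : kˣ, substMatrix A F = (lam : k) • F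

/-- The subgroup of scalar matrices in `GL₄(k)`; `PGL₄(k)` is the quotient
of `GL₄(k)` by this subgroup. -/
def scalarSubgroup (k : Type*) [Field k] : Subgroup (GL (Fin 4) k) :=
  (Units.map (algebraMap k (Matrix (Fin 4) (Fin 4) k)).toMonoidHom).range

/-- The Fermat cubic form. -/
noncomputable def fermat (k : Type*) [Field k] : MvPolynomial (Fin 4) k :=
  X 0 ^ 3 + X 1 ^ 3 + X 2 ^ 3 + X 3 ^ 3

section FermatAux

variable {k : Type*} [Field k]

theorem exists_omega [IsAlgClosed k] : ∃ w : k, w ^ 2 + w + 1 = 0 := by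
  have hd : (Polynomial.X ^ 2 + Polynomial.X + 1 : Polynomial k).degree = 2 := by
    compute_degree!
  obtain ⟨w, hw⟩ := IsAlgClosed.exists_root (Polynomial.X ^ 2 + Polynomial.X + 1 : Polynomial k)
    (by rw [hd]; norm_num)
  exact ⟨w, by simpa using hw⟩

/-- The cube roots of unity. -/
theorem cube_roots [IsAlgClosed k] (h3 : (3 : k) ≠ 0) :
    ∃ R : Finset k, R.card = 3 ∧ ∀ x, x ∈ R ↔ x ^ 3 = 1 := by
  classical
  obtain ⟨w, hw⟩ := exists_omega (k := k)
  have h1 : w ≠ 1 := by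
    rintro rfl
    exact h3 (by linear_combination hw)
  have h2 : w ^ 2 ≠ 1 := by
    intro h
    have h5 : w = -2 := by linear_combination hw - h
    subst h5
    exact h3 (by linear_combination hw)
  have h0 : w ≠ 0 := by
    rintro rfl
    simp at hw
  have h4 : w ≠ w ^ 2 := by
    intro h
    have : w * (w - 1) = 0 := by linear_combination -h
    rcases mul_eq_zero.1 this with h | h
    · exact h0 h
    · exact h1 (sub_eq_zero.1 h)
  refine ⟨{1, w, w ^ 2}, ?_, ?_⟩
  · rw [Finset.card_insert_of_notMem, Finset.card_insert_of_notMem, Finset.card_singleton]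
    · simpa using h4
    · simp only [Finset.mem_insert, Finset.mem_singleton, not_or]
      exact ⟨h1.symm, h2.symm⟩
  · intro x
    simp only [Finset.mem_insert, Finset.mem_singleton]
    constructor
    · rintro (rfl | rfl | rfl)
      · simp
      · linear_combination (x - 1) * hw
      · linear_combination (w ^ 3 + 1) * (w - 1) * hw
    · intro hx
      have : (x - 1) * ((x - w) * (x - w ^ 2)) = 0 := by
        linear_combination hx + (-x ^ 2 + x + x * (w - 1) - (w - 1)) * hw
      rcases mul_eq_zero.1 this with h | h
      · exact Or.inl (sub_eq_zero.1 h)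
      rcases mul_eq_zero.1 h with h | h
      · exact Or.inr (Or.inl (sub_eq_zero.1 h))
      · exact Or.inr (Or.inr (sub_eq_zero.1 h))

theorem subst_iff [Infinite k] (A : Matrix (Fin 4) (Fin 4) k) (c : k) :
    substMatrix A (fermat k) = c • fermat k ↔
      ∀ x : Fin 4 → k, ∑ i, (∑ j, A i j * x j) ^ 3 = c * ∑ j, x j ^ 3 := by
  have key : ∀ x : Fin 4 → k, eval x (substMatrix A (fermat k)) =
      ∑ i, (∑ j, A i j * x j) ^ 3 := by
    intro x
    simp [substMatrix, fermat, Fin.sum_univ_four]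
  have key2 : ∀ x : Fin 4 → k, eval x (c • fermat k) = c * ∑ j, x j ^ 3 := by
    intro x
    simp [fermat, Fin.sum_univ_four]
    ring
  rw [MvPolynomial.funext_iff]
  simp only [key, key2]

theorem extract_two [IsAlgClosed k] (h3 : (3 : k) ≠ 0) {A : Matrix (Fin 4) (Fin 4) k} {c : k}
    (h : ∀ x : Fin 4 → k, ∑ i, (∑ j, A i j * x j) ^ 3 = c * ∑ j, x j ^ 3) (j l : Fin 4) :
    ∑ i, A i j ^ 2 * A i l = if j = l then c else 0 := by
  have hsingle : ∀ j : Fin 4, ∑ i, A i j ^ 3 = c := by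
    intro j
    have := h (Pi.single j 1)
    simpa [Pi.single_apply, ite_pow] using this
  split_ifs with hjl
  · subst hjl
    rw [← hsingle j]
    exact Finset.sum_congr rfl fun i _ => by ring
  · obtain ⟨w, hw⟩ := exists_omega (k := k)
    have h1 : w - 1 ≠ 0 := by
      intro h
      have : w = 1 := sub_eq_zero.1 h
      subst this
      exact h3 (by linear_combination hw)
    have h0 : w ≠ 0 := by
      rintro rfl
      simp at hw
    have hpair : ∀ t : k, 3 * t * (∑ i, A i j ^ 2 * A i l) +
        3 * t ^ 2 * (∑ i, A i l ^ 2 * A i j) = 0 := by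
      intro t
      have e := h (Pi.single j 1 + Pi.single l t)
      have e1 : ∑ m : Fin 4, (Pi.single j 1 + Pi.single l t : Fin 4 → k) m ^ 3 = 1 + t ^ 3 := by
        have : ∀ m : Fin 4, (Pi.single j 1 + Pi.single l t : Fin 4 → k) m ^ 3 =
            (Pi.single j 1 : Fin 4 → k) m + (Pi.single l (t ^ 3) : Fin 4 → k) m := by
          intro m
          simp only [Pi.add_apply, Pi.single_apply]
          split_ifs with a b b
          · exact absurd (a.symm.trans b) hjl
          all_goals ring
        rw [Finset.sum_congr rfl fun m _ => this m]
        simp [Finset.sum_add_distrib]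
      have e2 : ∀ i, ∑ m : Fin 4, A i m * (Pi.single j 1 + Pi.single l t : Fin 4 → k) m =
          A i j + A i l * t := by
        intro i
        simp [mul_add, Finset.sum_add_distrib, Pi.single_apply]
      rw [e1] at e
      simp only [e2] at e
      have e3 : ∑ i, (A i j + A i l * t) ^ 3 = ∑ i, A i j ^ 3 + 3 * t * (∑ i, A i j ^ 2 * A i l) +
        3 * t ^ 2 * (∑ i, A i l ^ 2 * A i j) + t ^ 3 * ∑ i, A i l ^ 3 := by
        simp only [Finset.mul_sum, ← Finset.sum_add_distrib]
        exact Finset.sum_congr rfl fun i _ => by ring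
      rw [e3, hsingle, hsingle] at e
      linear_combination e
    have p1 := hpair 1
    have p2 := hpair w
    have : 3 * w * (w - 1) * (∑ i, A i j ^ 2 * A i l) = 0 := by
      linear_combination w ^ 2 * p1 - p2
    simpa [h3, h0, h1] using this

theorem extract_three [IsAlgClosed k] (h3 : (3 : k) ≠ 0) (h2 : (2 : k) ≠ 0)
    {A : Matrix (Fin 4) (Fin 4) k} {c : k}
    (h : ∀ x : Fin 4 → k, ∑ i, (∑ j, A i j * x j) ^ 3 = c * ∑ j, x j ^ 3) (j l m : Fin 4) 
    (hjl : j ≠ l) (hjm : j ≠ m) (hlm : l ≠ m) :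
    ∑ i, A i j * A i l * A i m = 0 := by
  have e := h (Pi.single j 1 + Pi.single l 1 + Pi.single m 1)
  have e1 : ∑ n : Fin 4, (Pi.single j 1 + Pi.single l 1 + Pi.single m 1 : Fin 4 → k) n ^ 3
      = 3 := by
    have : ∀ n : Fin 4, (Pi.single j 1 + Pi.single l 1 + Pi.single m 1 : Fin 4 → k) n ^ 3 =
        (Pi.single j 1 + Pi.single l 1 + Pi.single m 1 : Fin 4 → k) n := by
      intro n
      simp only [Pi.add_apply, Pi.single_apply]
      split_ifs <;> first | (exfalso; grind) | ring
    rw [Finset.sum_congr rfl fun m _ => this m]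
    simp [Finset.sum_add_distrib]
    norm_num
  have e2 : ∀ i, ∑ n : Fin 4, A i n * (Pi.single j 1 + Pi.single l 1 + Pi.single m 1
      : Fin 4 → k) n = A i j + A i l + A i m := by
    intro i
    simp [mul_add, Finset.sum_add_distrib, Pi.single_apply]
  rw [e1] at e
  simp only [e2] at e
  have q := fun a b => extract_two h3 h a b
  have e3 : ∑ i, (A i j + A i l + A i m) ^ 3 =
      ∑ i, A i j ^ 2 * A i j + ∑ i, A i l ^ 2 * A i l + ∑ i, A i m ^ 2 * A i m +
      3 * (∑ i, A i j ^ 2 * A i l + ∑ i, A i j ^ 2 * A i m + ∑ i, A i l ^ 2 * A i j +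
        ∑ i, A i l ^ 2 * A i m + ∑ i, A i m ^ 2 * A i j + ∑ i, A i m ^ 2 * A i l) +
      2 * 3 * ∑ i, A i j * A i l * A i m := by
    simp only [Finset.mul_sum, ← Finset.sum_add_distrib]
    exact Finset.sum_congr rfl fun i _ => by ring
  rw [e3] at e
  simp only [q, if_true, if_neg hjl, if_neg hjm, if_neg hlm, if_neg hjl.symm, if_neg hjm.symm,
    if_neg hlm.symm] at e
  have : 2 * 3 * ∑ i, A i j * A i l * A i m = 0 := by linear_combination e
  simpa [h2, h3] using this

/-- Counting modulo scalars. -/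
theorem count_image [IsAlgClosed k] (h3 : (3 : k) ≠ 0) (S : Finset (Matrix (Fin 4) (Fin 4) k))
    (hS : ∀ A : Matrix (Fin 4) (Fin 4) k, A ∈ S ↔ (IsUnit A ∧
      ∀ x : Fin 4 → k, ∑ i, (∑ j, A i j * x j) ^ 3 = ∑ j, x j ^ 3)) (n : ℕ)
    (hn : S.card = n * 3) :
    ((QuotientGroup.mk : GL (Fin 4) k → GL (Fin 4) k ⧸ scalarSubgroup k) ''
          {A : GL (Fin 4) k | LeavesInvariant (A : Matrix (Fin 4) (Fin 4) k)
            (fermat k)}).Finite ∧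
    ((QuotientGroup.mk : GL (Fin 4) k → GL (Fin 4) k ⧸ scalarSubgroup k) ''
          {A : GL (Fin 4) k | LeavesInvariant (A : Matrix (Fin 4) (Fin 4) k)
            (fermat k)}).ncard = n := by
  classical
  have : Infinite k := IsAlgClosed.instInfinite
  obtain ⟨R, hR, hRm⟩ := cube_roots h3
  -- scalar multiples
  have hquot : ∀ A B : GL (Fin 4) k, (QuotientGroup.mk A : GL (Fin 4) k ⧸ scalarSubgroup k) =
      QuotientGroup.mk B ↔ ∃ c : k, c ≠ 0 ∧ (B : Matrix (Fin 4) (Fin 4) k) = c • A.1 := by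
    intro A B
    rw [QuotientGroup.eq]
    constructor
    · rintro ⟨u, hu⟩
      refine ⟨u, u.ne_zero, ?_⟩
      have : B = A * (Units.map (algebraMap k (Matrix (Fin 4) (Fin 4) k)).toMonoidHom u) := by
        rw [hu]; group
      rw [this]
      simp [Algebra.algebraMap_eq_smul_one]
    · rintro ⟨c, hc, hB⟩
      refine ⟨Units.mk0 c hc, ?_⟩
      rw [eq_inv_mul_iff_mul_eq]
      apply Units.ext
      simp [Algebra.algebraMap_eq_smul_one, hB]
  have hval : Function.Injective (Units.val : GL (Fin 4) k → Matrix (Fin 4) (Fin 4) k) :=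
    Units.val_injective
  let T : Finset (GL (Fin 4) k) := S.preimage Units.val hval.injOn
  have hT : ∀ A : GL (Fin 4) k, A ∈ T ↔ ∀ x : Fin 4 → k,
      ∑ i, (∑ j, A.1 i j * x j) ^ 3 = ∑ j, x j ^ 3 := by
    intro A
    rw [Finset.mem_preimage, hS]
    exact ⟨fun h => h.2, fun h => ⟨A.isUnit, h⟩⟩
  have hTc : T.card = S.card := by
    have : T.image Units.val = S := by
      rw [Finset.image_preimage, Finset.filter_true_of_mem]
      intro A hA
      obtain ⟨u, hu⟩ := ((hS A).1 hA).1
      exact ⟨u, hu⟩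
    rw [← this, Finset.card_image_of_injective _ hval]
  have hscale : ∀ (c : k) (A : Matrix (Fin 4) (Fin 4) k) (x : Fin 4 → k),
      ∑ i, (∑ j, (c • A) i j * x j) ^ 3 = c ^ 3 * ∑ i, (∑ j, A i j * x j) ^ 3 := by
    intro c A x
    simp only [Matrix.smul_apply, smul_eq_mul, mul_assoc, ← Finset.mul_sum, mul_pow]
  have himg : ((QuotientGroup.mk : GL (Fin 4) k → GL (Fin 4) k ⧸ scalarSubgroup k) ''
          {A : GL (Fin 4) k | LeavesInvariant (A : Matrix (Fin 4) (Fin 4) k)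
            (fermat k)}) = ↑(T.image
          (QuotientGroup.mk : GL (Fin 4) k → GL (Fin 4) k ⧸ scalarSubgroup k)) := by
    ext q
    simp only [Set.mem_image, Set.mem_ofPred_eq, Finset.coe_image, Finset.mem_coe]
    constructor
    · rintro ⟨A, ⟨lam, hA⟩, rfl⟩
      rw [subst_iff] at hA
      obtain ⟨c, hc⟩ := IsAlgClosed.exists_pow_nat_eq ((lam : k)⁻¹) (n := 3) (by norm_num)
      have hc0 : c ≠ 0 := by
        rintro rfl
        have := lam.ne_zero
        simp at hc
        exact this hc.symm
      have hu : IsUnit (c • A.1) := by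
        rw [← Units.val_mk0 hc0]
        exact (A.isUnit).smul (Units.mk0 c hc0)
      obtain ⟨B, hB⟩ := hu
      refine ⟨B, ?_, ?_⟩
      · rw [hT]
        intro x
        rw [hB, hscale, hA, hc, ← mul_assoc, inv_mul_cancel₀ lam.ne_zero, one_mul]
      · exact ((hquot A B).2 ⟨c, hc0, hB⟩).symm
    · rintro ⟨A, hA, rfl⟩
      refine ⟨A, ⟨1, ?_⟩, rfl⟩
      rw [subst_iff]
      intro x
      rw [(hT A).1 hA x]
      simp
  rw [himg]
  refine ⟨Finset.finite_toSet _, ?_⟩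
  rw [Set.ncard_coe_finset]
  have hsum := Finset.card_eq_sum_card_image
    (QuotientGroup.mk : GL (Fin 4) k → GL (Fin 4) k ⧸ scalarSubgroup k) T
  have hfib : ∀ q ∈ T.image (QuotientGroup.mk : GL (Fin 4) k → GL (Fin 4) k ⧸ scalarSubgroup k),
      (T.filter fun A => (QuotientGroup.mk A : GL (Fin 4) k ⧸ scalarSubgroup k) = q).card = 3 := by
    intro q hq
    obtain ⟨A, hA, rfl⟩ := Finset.mem_image.1 hq
    rw [← hR]
    symm
    have hR0 : ∀ c ∈ R, c ≠ 0 := by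
      rintro c hc rfl
      rw [hRm] at hc
      simp at hc
    have hunit : ∀ c : k, c ≠ 0 → ∃ B : GL (Fin 4) k, B.1 = c • A.1 := by
      intro c hc
      have := (A.isUnit).smul (Units.mk0 c hc)
      exact this
    refine Finset.card_bij (fun c hc => (hunit c (hR0 c hc)).choose) ?_ ?_ ?_
    · intro c hc
      have hB := (hunit c (hR0 c hc)).choose_spec
      rw [Finset.mem_filter, hT]
      refine ⟨?_, ((hquot A _).2 ⟨c, hR0 c hc, hB⟩).symm⟩
      intro x
      rw [hB, hscale, (hRm c).1 hc, one_mul, (hT A).1 hA]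
    · intro c hc d hd hcd
      have hB := (hunit c (hR0 c hc)).choose_spec
      have hB' := (hunit d (hR0 d hd)).choose_spec
      rw [hcd, hB'] at hB
      have hA0 : A.1 ≠ 0 := A.ne_zero
      exact (smul_left_injective k hA0 hB).symm
    · intro B hB
      rw [Finset.mem_filter] at hB
      obtain ⟨c, hc, hBc⟩ := (hquot A B).1 hB.2.symm
      have hcR : c ∈ R := by
        rw [hRm]
        have h1 := (hT B).1 hB.1 (Pi.single 0 1)
        rw [hBc, hscale, (hT A).1 hA] at h1
        simpa [Pi.single_apply, ite_pow] using h1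
      refine ⟨c, hcR, ?_⟩
      apply hval
      rw [(hunit c (hR0 c hcR)).choose_spec, hBc]
  rw [Finset.sum_congr rfl hfib, Finset.sum_const, smul_eq_mul, hTc, hn] at hsum
  omega

end FermatAux

section Monomial

variable {k : Type*} [Field k]

/-- The monomial matrix attached to a permutation and a vector of coefficients. -/
def monoMat (p : Equiv.Perm (Fin 4) × (Fin 4 → k)) : Matrix (Fin 4) (Fin 4) k :=
  fun i j => if i = p.1 j then p.2 j else 0

theorem monoMat_sum (p : Equiv.Perm (Fin 4) × (Fin 4 → k)) (x : Fin 4 → k) :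
    ∑ i, (∑ j, monoMat p i j * x j) ^ 3 = ∑ j, p.2 j ^ 3 * x j ^ 3 := by
  rw [← Equiv.sum_comp p.1]
  refine Finset.sum_congr rfl fun i _ => ?_
  simp [monoMat, mul_pow]

theorem column_single [IsAlgClosed k] (h3 : (3 : k) ≠ 0) (h2 : (2 : k) ≠ 0)
    {A : Matrix (Fin 4) (Fin 4) k} (hu : IsUnit A)
    (h : ∀ x : Fin 4 → k, ∑ i, (∑ j, A i j * x j) ^ 3 = ∑ j, x j ^ 3) (m i i' : Fin 4)
    (hi : A i m ≠ 0) (hi' : A i' m ≠ 0) : i = i' := by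
  have h' : ∀ x : Fin 4 → k, ∑ i, (∑ j, A i j * x j) ^ 3 = 1 * ∑ j, x j ^ 3 := by
    intro x; rw [h, one_mul]
  have hd := (Matrix.isUnit_iff_isUnit_det A).1 hu
  have key : Aᵀ * Matrix.diagonal (fun i => A i m) * A = Matrix.single m m 1 := by
    ext j l
    rw [Matrix.mul_apply]
    simp only [Matrix.mul_diagonal, Matrix.transpose_apply, Matrix.single_apply]
    have q := fun a b => extract_two h3 h' a b
    by_cases hjl : j = l
    · subst hjl
      have : ∑ x, A x j * A x m * A x j = ∑ x, A x j ^ 2 * A x m :=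
        Finset.sum_congr rfl fun i _ => by ring
      rw [this, q]
      by_cases hh : j = m
      · simp [hh]
      · simp [hh, Ne.symm hh]
    by_cases hjm : j = m
    · subst hjm
      have : ∑ x, A x j * A x j * A x l = ∑ x, A x j ^ 2 * A x l :=
        Finset.sum_congr rfl fun i _ => by ring
      rw [this, q]
      simp [hjl]
    by_cases hlm : l = m
    · subst hlm
      have : ∑ x, A x j * A x l * A x l = ∑ x, A x l ^ 2 * A x j :=
        Finset.sum_congr rfl fun i _ => by ring
      rw [this, q]
      simp [hjl, eq_comm]
    · rw [extract_three h3 h2 h' j m l hjm hjl (Ne.symm hlm)]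
      simp [Ne.symm hjm]
  have hB : A * A⁻¹ = 1 := Matrix.mul_nonsing_inv A hd
  have hBt : (A⁻¹)ᵀ * Aᵀ = 1 := by rw [← Matrix.transpose_mul, hB, Matrix.transpose_one]
  have hD : Matrix.diagonal (fun i => A i m) = (A⁻¹)ᵀ * Matrix.single m m 1 * A⁻¹ := by
    rw [← key]
    generalize Matrix.diagonal (fun i => A i m) = D
    calc D = ((A⁻¹)ᵀ * Aᵀ) * D * (A * A⁻¹) := by rw [hB, hBt, one_mul, mul_one]
      _ = _ := by simp only [Matrix.mul_assoc]
  have hent : ∀ a b, Matrix.diagonal (fun i => A i m) a b = A⁻¹ m a * A⁻¹ m b := by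
    intro a b
    rw [hD, Matrix.mul_apply]
    simp [Matrix.mul_apply, Matrix.single_apply, ite_and]
  by_contra hne
  have e1 := hent i i
  have e2 := hent i' i'
  have e3 := hent i i'
  rw [Matrix.diagonal_apply_eq] at e1 e2
  rw [Matrix.diagonal_apply_ne _ hne] at e3
  rcases mul_eq_zero.1 e3.symm with h | h
  · rw [h, zero_mul] at e1; exact hi e1
  · rw [h, zero_mul] at e2; exact hi' e2

theorem fermat_ne_two [IsAlgClosed k] (h3 : (3 : k) ≠ 0) (h2 : (2 : k) ≠ 0) :
    ∃ S : Finset (Matrix (Fin 4) (Fin 4) k), S.card = 648 * 3 ∧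
    ∀ A : Matrix (Fin 4) (Fin 4) k, A ∈ S ↔ (IsUnit A ∧
      ∀ x : Fin 4 → k, ∑ i, (∑ j, A i j * x j) ^ 3 = ∑ j, x j ^ 3) := by
  classical
  obtain ⟨R, hR, hRm⟩ := cube_roots h3
  have hR0 : ∀ c ∈ R, c ≠ 0 := by
    rintro c hc rfl
    rw [hRm] at hc
    simp at hc
  refine ⟨((Finset.univ : Finset (Equiv.Perm (Fin 4))) ×ˢ
    Fintype.piFinset (fun _ : Fin 4 => R)).image monoMat, ?_, ?_⟩
  · rw [Finset.card_image_of_injOn]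
    · simp [hR, Fintype.card_perm, Nat.factorial]
    · rintro ⟨s, c⟩ h1 ⟨t, d⟩ h2 he
      have hc : ∀ j, c j ≠ 0 := by
        intro j
        simp only [Finset.coe_product, Set.mem_prod, Finset.mem_coe, Fintype.mem_piFinset] at h1
        exact hR0 _ (h1.2 j)
      have hst : ∀ j, s j = t j ∧ c j = d j := by
        intro j
        have := congrFun (congrFun he (s j)) j
        simp only [monoMat, if_true] at this
        split_ifs at this with h
        · exact ⟨h, this⟩
        · exact absurd this (hc j)
      exact Prod.ext (Equiv.ext fun j => (hst j).1) (funext fun j => (hst j).2)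
  · intro A
    rw [Finset.mem_image]
    constructor
    · rintro ⟨p, hp, rfl⟩
      rw [Finset.mem_product, Fintype.mem_piFinset] at hp
      constructor
      · have : IsUnit (monoMat p)ᵀ := by
          refine IsUnit.of_mul_eq_one (Matrix.of fun i j => if i = p.1 j then p.2 j ^ 2 else 0) ?_
          ext a b
          rw [Matrix.mul_apply]
          by_cases hab : a = b
          · subst hab
            simp only [monoMat, Matrix.transpose_apply, Matrix.one_apply_eq]
            have := (hRm _).1 (hp.2 a)
            simp
            linear_combination this
          · simp [monoMat, hab, Matrix.transpose_apply]
            intro h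
            exact absurd h.symm hab
        exact (Matrix.isUnit_transpose _).1 this
      · intro x
        rw [monoMat_sum]
        refine Finset.sum_congr rfl fun j _ => ?_
        rw [(hRm _).1 (hp.2 j), one_mul]
    · rintro ⟨hu, h⟩
      have hcol : ∀ j, ∑ i, A i j ^ 3 = 1 := by
        intro j
        have := h (Pi.single j 1)
        simpa [Pi.single_apply, ite_pow] using this
      have hex : ∀ j, ∃ i, A i j ≠ 0 := by
        intro j
        by_contra hn
        push Not at hn
        have := hcol j
        simp [hn] at this
      choose s hs using hex
      have hz : ∀ i j, i ≠ s j → A i j = 0 := by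
        intro i j hij
        by_contra hn
        exact hij (column_single h3 h2 hu h j i (s j) hn (hs j))
      have hsurj : Function.Surjective s := by
        intro i
        by_contra hn
        push Not at hn
        have hrow : ∀ j, A i j = 0 := fun j => hz i j (hn j).symm
        have hd := (Matrix.isUnit_iff_isUnit_det A).1 hu
        rw [Matrix.det_eq_zero_of_row_eq_zero i hrow] at hd
        simp at hd
      let σ : Equiv.Perm (Fin 4) := Equiv.ofBijective s (Finite.injective_iff_bijective.1
        (Finite.injective_iff_surjective.2 hsurj))
      refine ⟨(σ, fun j => A (s j) j), ?_, ?_⟩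
      · rw [Finset.mem_product, Fintype.mem_piFinset]
        refine ⟨Finset.mem_univ _, fun j => ?_⟩
        rw [hRm, ← hcol j]
        symm
        apply Finset.sum_eq_single (s j)
        · intro b _ hb
          rw [hz b j hb]; simp
        · simp
      · ext i j
        simp only [monoMat]
        have : σ j = s j := rfl
        rw [this]
        split_ifs with hij
        · rw [hij]
        · exact (hz i j hij).symm

end Monomial

section Hermitian

variable {k : Type*} [Field k]

/-- The hermitian form `∑ uᵢ² wᵢ`. -/
def hform (u w : Fin 4 → k) : k := ∑ i, u i ^ 2 * w i

theorem four_set [IsAlgClosed k] (h3 : (3 : k) ≠ 0) :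
    ∃ K : Finset k, K.card = 4 ∧ ∀ x, x ∈ K ↔ x ^ 4 = x := by
  classical
  obtain ⟨R, hR, hRm⟩ := cube_roots h3
  refine ⟨insert 0 R, ?_, ?_⟩
  · rw [Finset.card_insert_of_notMem, hR]
    rw [hRm]; simp
  · intro x
    rw [Finset.mem_insert, hRm]
    constructor
    · rintro (rfl | h)
      · simp
      · linear_combination x * h
    · intro h
      have : x * (x ^ 3 - 1) = 0 := by linear_combination h
      rcases mul_eq_zero.1 this with h | h
      · exact Or.inl h
      · exact Or.inr (sub_eq_zero.1 h)

theorem hform_add_right (u v w : Fin 4 → k) : hform u (v + w) = hform u v + hform u w := by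
  simp [hform, mul_add, Finset.sum_add_distrib]

theorem hform_smul_right (c : k) (u w : Fin 4 → k) : hform u (c • w) = c * hform u w := by
  simp only [hform, Finset.mul_sum, Pi.smul_apply, smul_eq_mul]
  exact Finset.sum_congr rfl fun i _ => by ring

theorem hform_add_left [CharP k 2] (u v w : Fin 4 → k) :
    hform (u + v) w = hform u w + hform v w := by
  simp [hform, CharTwo.add_sq, add_mul, Finset.sum_add_distrib]

theorem hform_smul_left (c : k) (u w : Fin 4 → k) : hform (c • u) w = c ^ 2 * hform u w := by
  simp only [hform, Finset.mul_sum, Pi.smul_apply, smul_eq_mul]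
  exact Finset.sum_congr rfl fun i _ => by ring

theorem hform_sq [CharP k 2] {u w : Fin 4 → k} (hu : ∀ i, u i ^ 4 = u i) :
    hform u w ^ 2 = hform w u := by
  simp only [hform, CharTwo.sum_sq]
  refine Finset.sum_congr rfl fun i _ => ?_
  linear_combination w i ^ 2 * hu i

/-- `U` is a good set: a space of vectors over the field with four elements, of size `N`
and with signed count `d` of isotropic minus unit vectors. -/
structure GoodSet (K : Finset k) (U : Finset (Fin 4 → k)) : Prop where
  ent : ∀ u ∈ U, ∀ i, u i ∈ K
  add : ∀ u ∈ U, ∀ v ∈ U, u + v ∈ U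
  smul : ∀ c ∈ K, ∀ u ∈ U, c • u ∈ U

/-- Sign of a norm. -/
noncomputable def sgn (a : k) : ℤ := by
  classical exact if a = 0 then 1 else -1

theorem sgn_add [CharP k 2] {a b : k} (ha : a = 0 ∨ a = 1) (hb : b = 0 ∨ b = 1) :
    sgn (a + b) = sgn a * sgn b := by
  have h2 : (1 + 1 : k) = 0 := CharTwo.add_self_eq_zero 1
  rcases ha with rfl | rfl <;> rcases hb with rfl | rfl <;> simp [sgn, h2]

theorem norm_zero_one [CharP k 2] {u : Fin 4 → k} (hu : ∀ i, u i ^ 4 = u i) :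
    hform u u = 0 ∨ hform u u = 1 := by
  have h := hform_sq (w := u) hu
  have : hform u u * (hform u u - 1) = 0 := by linear_combination h
  rcases mul_eq_zero.1 this with h | h
  · exact Or.inl h
  · exact Or.inr (sub_eq_zero.1 h)

theorem sum_sgn_cube {K : Finset k} (hK : K.card = 4) (hKm : ∀ x, x ∈ K ↔ x ^ 4 = x) :
    ∑ c ∈ K, sgn (c ^ 3) = -2 := by
  classical
  have h0 : (0 : k) ∈ K := by rw [hKm]; simp
  rw [← Finset.add_sum_erase K _ h0]
  have : ∑ x ∈ K.erase 0, sgn (x ^ 3) = ∑ x ∈ K.erase 0, (-1) := by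
    refine Finset.sum_congr rfl fun x hx => ?_
    have := Finset.ne_of_mem_erase hx
    simp [sgn, this]
  rw [this, Finset.sum_const, Finset.card_erase_of_mem h0, hK]
  simp [sgn]

open scoped Classical in
/-- The orthogonal complement of `u` in `U`. -/
noncomputable def perp (U : Finset (Fin 4 → k)) (u : Fin 4 → k) : Finset (Fin 4 → k) :=
  U.filter fun w => hform u w = 0

open scoped Classical in
/-- The unit vectors in `U`. -/
noncomputable def unitVecs (U : Finset (Fin 4 → k)) : Finset (Fin 4 → k) :=
  U.filter fun w => hform w w = 1

theorem GoodSet.perp {K : Finset k} {U : Finset (Fin 4 → k)} (h : GoodSet K U) (u : Fin 4 → k) :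
    GoodSet K (perp U u) := by
  classical
  constructor
  · intro w hw
    exact h.ent w (Finset.mem_filter.1 hw).1
  · intro v hv w hw
    have hv := Finset.mem_filter.1 hv
    have hw := Finset.mem_filter.1 hw
    refine Finset.mem_filter.2 ⟨h.add v hv.1 w hw.1, ?_⟩
    rw [hform_add_right, hv.2, hw.2, add_zero]
  · intro c hc w hw
    have hw := Finset.mem_filter.1 hw
    refine Finset.mem_filter.2 ⟨h.smul c hc w hw.1, ?_⟩
    rw [hform_smul_right, hw.2, mul_zero]

/-- Signed count. -/
noncomputable def scount (U : Finset (Fin 4 → k)) : ℤ := ∑ w ∈ U, sgn (hform w w)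

/-- Splitting off a unit vector. -/
theorem split_sum [CharP k 2] {K : Finset k} (hKm : ∀ x, x ∈ K ↔ x ^ 4 = x)
    {U : Finset (Fin 4 → k)} (h : GoodSet K U) {u : Fin 4 → k} (hu : u ∈ unitVecs U)
    (f : k → ℤ) :
    ∑ x ∈ U, f (hform x x) = ∑ p ∈ K ×ˢ perp U u, f (p.1 ^ 3 + hform p.2 p.2) := by
  classical
  obtain ⟨huU, hu1⟩ := Finset.mem_filter.1 hu
  have hK4 : ∀ w ∈ U, ∀ i, w i ^ 4 = w i := fun w hw i => (hKm _).1 (h.ent w hw i)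
  have h2 : (2 : k) = 0 := CharTwo.two_eq_zero
  have hhK : ∀ w ∈ U, hform u w ∈ K := by
    intro w hw
    rw [hKm]
    have e1 := hform_sq (w := w) (hK4 u huU)
    have e2 := hform_sq (w := u) (hK4 w hw)
    rw [← e1] at e2
    linear_combination e2
  symm
  refine Finset.sum_bij' (fun p _ => p.1 • u + p.2)
    (fun x _ => (hform u x, x + hform u x • u)) ?_ ?_ ?_ ?_ ?_
  · rintro ⟨c, w⟩ hp
    obtain ⟨hc, hw⟩ := Finset.mem_product.1 hp
    exact h.add _ (h.smul c hc u huU) _ (Finset.mem_filter.1 hw).1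
  · intro x hx
    refine Finset.mem_product.2 ⟨hhK x hx, Finset.mem_filter.2
      ⟨h.add _ hx _ (h.smul _ (hhK x hx) u huU), ?_⟩⟩
    simp only [hform_add_right, hform_smul_right, hu1]
    linear_combination hform u x * h2
  · rintro ⟨c, w⟩ hp
    obtain ⟨hc, hw⟩ := Finset.mem_product.1 hp
    have hw0 : hform u w = 0 := (Finset.mem_filter.1 hw).2
    have : hform u (c • u + w) = c := by
      rw [hform_add_right, hform_smul_right, hu1, hw0]; ring
    simp only [this]
    refine Prod.ext rfl ?_
    funext i
    simp only [Pi.add_apply, Pi.smul_apply, smul_eq_mul]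
    linear_combination c * u i * h2
  · intro x hx
    funext i
    simp only [Pi.add_apply, Pi.smul_apply, smul_eq_mul]
    linear_combination hform u x * u i * h2
  · rintro ⟨c, w⟩ hp
    obtain ⟨hc, hw⟩ := Finset.mem_product.1 hp
    obtain ⟨hwU, hw0⟩ := Finset.mem_filter.1 hw
    have hw0' : hform w u = 0 := by
      rw [← hform_sq (hK4 u huU), hw0]; simp
    congr 1
    simp only [hform_add_left, hform_add_right, hform_smul_left, hform_smul_right, hu1, hw0, hw0']
    ring

theorem perp_counts [CharP k 2] {K : Finset k} (hK : K.card = 4) (hKm : ∀ x, x ∈ K ↔ x ^ 4 = x)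
    {U : Finset (Fin 4 → k)} (h : GoodSet K U) {u : Fin 4 → k} (hu : u ∈ unitVecs U) :
    U.card = 4 * (perp U u).card ∧ scount U = -2 * scount (perp U u) := by
  constructor
  · have := split_sum hKm h hu (fun _ => 1)
    simp only [Finset.sum_const, Finset.card_product, hK] at this
    simp only [nsmul_eq_mul, mul_one] at this
    exact_mod_cast this
  · rw [scount, split_sum hKm h hu sgn, Finset.sum_product, scount, ← sum_sgn_cube hK hKm,
      Finset.sum_mul_sum]
    refine Finset.sum_congr rfl fun c hc => Finset.sum_congr rfl fun w hw => ?_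
    refine sgn_add ?_ (norm_zero_one fun i => (hKm _).1 ((h.perp u).ent w hw i))
    have hc4 := (hKm c).1 hc
    by_cases h0 : c = 0
    · left; simp [h0]
    · right
      apply mul_left_cancel₀ h0
      linear_combination hc4

theorem unit_count [CharP k 2] {K : Finset k} (hKm : ∀ x, x ∈ K ↔ x ^ 4 = x)
    {U : Finset (Fin 4 → k)} (h : GoodSet K U) :
    2 * ((unitVecs U).card : ℤ) = U.card - scount U := by
  classical
  rw [unitVecs, Finset.card_filter, scount, Finset.card_eq_sum_ones]
  push_cast
  rw [Finset.mul_sum, ← Finset.sum_sub_distrib]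
  refine Finset.sum_congr rfl fun w hw => ?_
  rcases norm_zero_one fun i => (hKm _).1 (h.ent w hw i) with e | e <;> simp [e, sgn]

theorem full_counts [CharP k 2] {K : Finset k} (hK : K.card = 4)
    (hKm : ∀ x, x ∈ K ↔ x ^ 4 = x) :
    GoodSet K (Fintype.piFinset fun _ : Fin 4 => K) ∧
    (Fintype.piFinset fun _ : Fin 4 => K).card = 256 ∧
    scount (Fintype.piFinset fun _ : Fin 4 => K) = 16 := by
  classical
  refine ⟨⟨?_, ?_, ?_⟩, ?_, ?_⟩
  · intro u hu i
    exact Fintype.mem_piFinset.1 hu i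
  · intro u hu v hv
    rw [Fintype.mem_piFinset] at *
    intro i
    have e1 := (hKm _).1 (hu i)
    have e2 := (hKm _).1 (hv i)
    rw [hKm, Pi.add_apply]
    have : (u i + v i) ^ 4 = u i ^ 4 + v i ^ 4 := by
      have h2 : (2 : k) = 0 := CharTwo.two_eq_zero
      linear_combination (2 * u i ^ 3 * v i + 3 * u i ^ 2 * v i ^ 2 + 2 * u i * v i ^ 3) * h2
    rw [this, e1, e2]
  · intro c hc u hu
    rw [Fintype.mem_piFinset] at *
    intro i
    have e1 := (hKm _).1 (hu i)
    have e2 := (hKm _).1 hc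
    rw [hKm, Pi.smul_apply, smul_eq_mul, mul_pow, e1, e2]
  · simp [hK]
  · have h01 : ∀ c ∈ K, c ^ 3 = 0 ∨ c ^ 3 = 1 := by
      intro c hc
      have hc4 := (hKm c).1 hc
      by_cases h0 : c = 0
      · left; simp [h0]
      · right
        apply mul_left_cancel₀ h0
        linear_combination hc4
    have hadd : ∀ a b : k, (a = 0 ∨ a = 1) → (b = 0 ∨ b = 1) → (a + b = 0 ∨ a + b = 1) := by
      have h2 : (1 + 1 : k) = 0 := CharTwo.add_self_eq_zero 1
      rintro a b (rfl | rfl) (rfl | rfl) <;> simp [h2]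
    have : ∀ w ∈ (Fintype.piFinset fun _ : Fin 4 => K), sgn (hform w w) =
        ∏ i, sgn (w i ^ 3) := by
      intro w hw
      rw [Fintype.mem_piFinset] at hw
      have e : hform w w = w 0 ^ 3 + w 1 ^ 3 + w 2 ^ 3 + w 3 ^ 3 := by
        simp only [hform, Fin.sum_univ_four]; ring
      have a0 := h01 _ (hw 0)
      have a1 := h01 _ (hw 1)
      have a2 := h01 _ (hw 2)
      have a3 := h01 _ (hw 3)
      rw [e, sgn_add (hadd _ _ (hadd _ _ a0 a1) a2) a3, sgn_add (hadd _ _ a0 a1) a2,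
        sgn_add a0 a1, Fin.prod_univ_four]
    rw [scount, Finset.sum_congr rfl this,
      ← Finset.prod_univ_sum (fun _ : Fin 4 => K) (fun _ c => sgn (c ^ 3))]
    simp [sum_sgn_cube hK hKm]

theorem fermat_two [IsAlgClosed k] [CharP k 2] :
    ∃ S : Finset (Matrix (Fin 4) (Fin 4) k), S.card = 25920 * 3 ∧
    ∀ A : Matrix (Fin 4) (Fin 4) k, A ∈ S ↔ (IsUnit A ∧
      ∀ x : Fin 4 → k, ∑ i, (∑ j, A i j * x j) ^ 3 = ∑ j, x j ^ 3) := by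
  classical
  have h2 : (2 : k) = 0 := CharTwo.two_eq_zero
  have h3 : (3 : k) ≠ 0 := by
    intro h
    exact one_ne_zero (α := k) (by linear_combination h - h2)
  obtain ⟨K, hK, hKm⟩ := four_set h3
  obtain ⟨g0, n0, s0⟩ := full_counts hK hKm
  set U := Fintype.piFinset fun _ : Fin 4 => K with hU
  let Q : Finset (Σ _ : Fin 4 → k, Σ _ : Fin 4 → k, Σ _ : Fin 4 → k, Fin 4 → k) :=
    (unitVecs U).sigma fun u1 => (unitVecs (perp U u1)).sigma fun u2 =>
      (unitVecs (perp (perp U u1) u2)).sigma fun u3 => unitVecs (perp (perp (perp U u1) u2) u3)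
  have hQ : Q.card = 25920 * 3 := by
    have c0 : (unitVecs U).card = 120 := by
      have := unit_count hKm g0
      rw [n0, s0] at this
      omega
    rw [Finset.card_sigma]
    refine (Finset.sum_const_nat (m := 648) ?_).trans (by rw [c0])
    intro u1 hu1
    obtain ⟨n1, s1⟩ := perp_counts hK hKm g0 hu1
    have g1 := g0.perp u1
    have c1 : (unitVecs (perp U u1)).card = 36 := by
      have := unit_count hKm g1
      omega
    rw [Finset.card_sigma]
    refine (Finset.sum_const_nat (m := 18) ?_).trans (by rw [c1])
    intro u2 hu2
    obtain ⟨n2, s2⟩ := perp_counts hK hKm g1 hu2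
    have g2 := g1.perp u2
    have c2 : (unitVecs (perp (perp U u1) u2)).card = 6 := by
      have := unit_count hKm g2
      omega
    rw [Finset.card_sigma]
    refine (Finset.sum_const_nat (m := 3) ?_).trans (by rw [c2])
    intro u3 hu3
    obtain ⟨n3, s3⟩ := perp_counts hK hKm g2 hu3
    have g3 := g2.perp u3
    have := unit_count hKm g3
    omega
  refine ⟨Q.image fun q => (Matrix.of ![q.1, q.2.1, q.2.2.1, q.2.2.2])ᵀ, ?_, ?_⟩
  · rw [Finset.card_image_of_injective, hQ]
    rintro ⟨a1, a2, a3, a4⟩ ⟨b1, b2, b3, b4⟩ h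
    have hh : ∀ i j, (![a1, a2, a3, a4] j) i = (![b1, b2, b3, b4] j) i := fun i j =>
      congrFun (congrFun h i) j
    obtain rfl : a1 = b1 := funext fun i => hh i 0
    obtain rfl : a2 = b2 := funext fun i => hh i 1
    obtain rfl : a3 = b3 := funext fun i => hh i 2
    obtain rfl : a4 = b4 := funext fun i => hh i 3
    rfl
  · intro A
    -- the unitary condition
    have hun : (∀ x : Fin 4 → k, ∑ i, (∑ j, A i j * x j) ^ 3 = ∑ j, x j ^ 3) ↔
        ∀ j l, hform (A.col j) (A.col l) = if j = l then 1 else 0 := by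
      constructor
      · intro h j l
        exact extract_two h3 (c := 1) (by intro x; rw [h, one_mul]) j l
      · intro h x
        have : ∀ i, (∑ j, A i j * x j) ^ 3 =
            ∑ j, ∑ l, x j ^ 2 * x l * (A i j ^ 2 * A i l) := by
          intro i
          rw [pow_succ, CharTwo.sum_sq, Finset.sum_mul_sum]
          exact Finset.sum_congr rfl fun j _ => Finset.sum_congr rfl fun l _ => by ring
        rw [Finset.sum_congr rfl fun i _ => this i, Finset.sum_comm]
        refine Finset.sum_congr rfl fun j _ => ?_
        rw [Finset.sum_comm]
        have h' : ∀ l, ∑ i, x j ^ 2 * x l * (A i j ^ 2 * A i l) =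
            x j ^ 2 * x l * (if j = l then 1 else 0) := by
          intro l
          rw [← Finset.mul_sum, ← h j l]
          rfl
        rw [Finset.sum_congr rfl fun l _ => h' l]
        simp
        ring
    have hmul : (∀ j l, hform (A.col j) (A.col l) = if j = l then 1 else 0) →
        (A.map (· ^ 2))ᵀ * A = 1 := by
      intro h
      ext j l
      rw [Matrix.one_apply, ← h j l, Matrix.mul_apply]
      rfl
    have hent : (∀ j l, hform (A.col j) (A.col l) = if j = l then 1 else 0) →
        ∀ i j, A i j ^ 4 = A i j := by
      intro h
      have e1 := hmul h
      have e2 : ((A.map (· ^ 2)).map (· ^ 2))ᵀ * A.map (· ^ 2) = 1 := by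
        ext j l
        have := congrArg (· ^ 2) (h j l)
        simp only [hform, CharTwo.sum_sq] at this
        rw [Matrix.mul_apply, Matrix.one_apply]
        simp only [Matrix.transpose_apply, Matrix.map_apply]
        rw [← Finset.sum_congr rfl fun i _ => mul_pow _ _ 2]
        refine this.trans ?_
        split_ifs <;> simp
      have e3 : (A.map (· ^ 2))ᵀ * (A.map (· ^ 2)).map (· ^ 2) = 1 := by
        have := congrArg Matrix.transpose e2
        rwa [Matrix.transpose_mul, Matrix.transpose_transpose, Matrix.transpose_one] at this
      have e4 : A * (A.map (· ^ 2))ᵀ = 1 := mul_eq_one_comm.1 e1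
      have e5 : (A.map (· ^ 2)).map (· ^ 2) = A := by
        calc (A.map (· ^ 2)).map (· ^ 2) = A * (A.map (· ^ 2))ᵀ * (A.map (· ^ 2)).map (· ^ 2) := by
              rw [e4, one_mul]
          _ = A := by rw [mul_assoc, e3, mul_one]
      intro i j
      have := congrFun (congrFun e5 i) j
      simp only [Matrix.map_apply] at this
      linear_combination this
    rw [hun, Finset.mem_image]
    have mU : ∀ w, w ∈ U ↔ ∀ i, w i ^ 4 = w i := by
      intro w
      rw [hU, Fintype.mem_piFinset]
      simp only [hKm]
    constructor
    · rintro ⟨⟨a1, a2, a3, a4⟩, hq, hA⟩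
      have c0 : A.col 0 = a1 := by rw [← hA]; rfl
      have c1 : A.col 1 = a2 := by rw [← hA]; rfl
      have c2 : A.col 2 = a3 := by rw [← hA]; rfl
      have c3 : A.col 3 = a4 := by rw [← hA]; rfl
      simp only [Q, Finset.mem_sigma, unitVecs, perp, Finset.mem_filter, mU] at hq
      have sy : ∀ u w : Fin 4 → k, (∀ i, u i ^ 4 = u i) → hform u w = 0 → hform w u = 0 := by
        intro u w hu h
        rw [← hform_sq hu, h]; simp
      have hh : ∀ j l, hform (A.col j) (A.col l) = if j = l then 1 else 0 := by
        intro j l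
        fin_cases j <;> fin_cases l <;> simp [c0, c1, c2, c3] <;> grind
      exact ⟨IsUnit.of_mul_eq_one _ (mul_eq_one_comm.1 (hmul hh)), hh⟩
    · rintro ⟨-, h⟩
      have he := hent h
      refine ⟨⟨A.col 0, A.col 1, A.col 2, A.col 3⟩, ?_, ?_⟩
      · simp only [Q, Finset.mem_sigma, unitVecs, perp, Finset.mem_filter, mU, h]
        simp [he]
      · ext i j
        fin_cases j <;> rfl

end Hermitian

theorem natCast_ne_zero_of_ringChar {k : Type*} [Field k] {p : ℕ} (hp : p.Prime)
    (h : ringChar k ≠ p) : (p : k) ≠ 0 := by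
  intro h0
  rcases (Nat.dvd_prime hp).1 ((ringChar.spec k p).1 h0) with h1 | h1
  · exact CharP.ringChar_ne_one h1
  · exact h h1

/-- The stabilizer of the Fermat cubic surface
`V(x₀³+x₁³+x₂³+x₃³)` in `PGL₄(k)` has cardinality `648` when
`char k ∉ {2,3}` (it is `3³ ⋊ S₄`), and cardinality `25920` when
`char k = 2` (it is the simple group `PSU₄(2)`). -/
theorem stmt11 {k : Type*} [Field k] [IsAlgClosed k] :
    (ringChar k ≠ 2 → ringChar k ≠ 3 →
      ((QuotientGroup.mk :
          GL (Fin 4) k → GL (Fin 4) k ⧸ scalarSubgroup k) ''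
          {A : GL (Fin 4) k | LeavesInvariant (A : Matrix (Fin 4) (Fin 4) k)
            (X 0 ^ 3 + X 1 ^ 3 + X 2 ^ 3 + X 3 ^ 3 : MvPolynomial (Fin 4) k)}).Finite ∧
      ((QuotientGroup.mk :
          GL (Fin 4) k → GL (Fin 4) k ⧸ scalarSubgroup k) ''
          {A : GL (Fin 4) k | LeavesInvariant (A : Matrix (Fin 4) (Fin 4) k)
            (X 0 ^ 3 + X 1 ^ 3 + X 2 ^ 3 + X 3 ^ 3 : MvPolynomial (Fin 4) k)}).ncard
        = 648) ∧
    (ringChar k = 2 →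
      ((QuotientGroup.mk :
          GL (Fin 4) k → GL (Fin 4) k ⧸ scalarSubgroup k) ''
          {A : GL (Fin 4) k | LeavesInvariant (A : Matrix (Fin 4) (Fin 4) k)
            (X 0 ^ 3 + X 1 ^ 3 + X 2 ^ 3 + X 3 ^ 3 : MvPolynomial (Fin 4) k)}).Finite ∧
      ((QuotientGroup.mk :
          GL (Fin 4) k → GL (Fin 4) k ⧸ scalarSubgroup k) ''
          {A : GL (Fin 4) k | LeavesInvariant (A : Matrix (Fin 4) (Fin 4) k)
            (X 0 ^ 3 + X 1 ^ 3 + X 2 ^ 3 + X 3 ^ 3 : MvPolynomial (Fin 4) k)}).ncard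
        = 25920) := by
  refine ⟨fun hc2 hc3 => ?_, fun hc2 => ?_⟩
  · have h2 : (2 : k) ≠ 0 := by
      exact_mod_cast natCast_ne_zero_of_ringChar Nat.prime_two hc2
    have h3 : (3 : k) ≠ 0 := by
      exact_mod_cast natCast_ne_zero_of_ringChar Nat.prime_three hc3
    obtain ⟨S, hS, hSm⟩ := fermat_ne_two h3 h2
    exact count_image h3 S hSm 648 hS
  · have : CharP k 2 := ringChar.of_eq hc2
    have h3 : (3 : k) ≠ 0 := by
      exact_mod_cast natCast_ne_zero_of_ringChar (k := k) Nat.prime_three (by omega)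
    obtain ⟨S, hS, hSm⟩ := fermat_two (k := k)
    exact count_image h3 S hSm 25920 hS
end

section
/- Let F₄ be the finite field with 4 elements. (i) The number of 1-dimensional F₄-linear subspaces L ⊆ F₄⁴ such that x₀³ + x₁³ + x₂³ + x₃³ = 0 for every x ∈ L is exactly 45. (ii) The number of 2-dimensional F₄-linear subspaces W ⊆ F₄⁴ such that x₀³ + x₁³ + x₂³ + x₃³ = 0 for every x ∈ W is exactly 27. -/
namespace Fermat

/-- Properties of a field with four elements used below. -/
structure IsF4 (K : Type) [Field K] : Prop where
  card : Nat.card K = 4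
  cube : ∀ a : K, a ≠ 0 → a ^ 3 = 1
  two : (1 : K) + 1 = 0
  om : ∃ w : K, w ≠ 0 ∧ w ≠ 1

theorem galois_isF4 : IsF4 (GaloisField 2 2) := by
  have hc : Nat.card (GaloisField 2 2) = 4 := by
    rw [GaloisField.card 2 2 (by norm_num)]; norm_num
  have : Fintype (GaloisField 2 2) := Fintype.ofFinite _
  have hf : Fintype.card (GaloisField 2 2) = 4 := by rw [← Nat.card_eq_fintype_card, hc]
  refine ⟨hc, ?_, ?_, ?_⟩
  · intro a ha
    have := FiniteField.pow_card_sub_one_eq_one a ha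
    rwa [hf] at this
  · exact CharTwo.add_self_eq_zero 1
  · classical
    have : ∃ w : GaloisField 2 2, w ∉ ({0, 1} : Finset (GaloisField 2 2)) := by
      by_contra h
      push Not at h
      have h1 : Finset.univ ⊆ ({0, 1} : Finset (GaloisField 2 2)) := fun x _ => h x
      have h2 := Finset.card_le_card h1
      rw [Finset.card_univ, hf] at h2
      have h3 := Finset.card_le_two (a := (0 : GaloisField 2 2)) (b := 1)
      omega
    obtain ⟨w, hw⟩ := this
    simp at hw
    exact ⟨w, hw⟩

variable {K : Type} [Field K]

/-- The Fermat cubic. -/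
def Q (x : Fin 4 → K) : K := (x 0) ^ 3 + (x 1) ^ 3 + (x 2) ^ 3 + (x 3) ^ 3

/-- Nonzero scalars. -/
abbrev NZ (K : Type) [Field K] := {a : K // a ≠ 0}

theorem card_NZ (h : IsF4 K) : Nat.card (NZ K) = 3 := by
  have h4 := h.card
  have : Finite K := Nat.finite_of_card_ne_zero (by omega)
  have e := Nat.card_congr (unitsEquivNeZero (G₀ := K))
  have := Nat.card_units K
  change Nat.card {a : K // a ≠ 0} = 3
  rw [← e]; omega

/-- Parametrization of the 27 lines. -/
def lin (p : Fin 3) (a b : K) : K × K →ₗ[K] (Fin 4 → K) where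
  toFun z := match p with
    | 0 => ![z.1, b * z.1, z.2, a * z.2]
    | 1 => ![z.1, z.2, b * z.1, a * z.2]
    | 2 => ![z.1, z.2, a * z.2, b * z.1]
  map_add' x y := by
    fin_cases p <;> ext i <;> fin_cases i <;> simp <;> ring
  map_smul' c x := by
    fin_cases p <;> ext i <;> fin_cases i <;> simp <;> ring

theorem lin_inj (p : Fin 3) (a b : K) : Function.Injective (lin p a b) := by
  rintro ⟨s, t⟩ ⟨s', t'⟩ h
  have h0 := congrFun h 0
  have h1 := congrFun h 1
  have h2 := congrFun h 2
  fin_cases p <;> simp_all [lin]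

theorem lin_finrank (p : Fin 3) (a b : K) :
    Module.finrank K (LinearMap.range (lin p a b)) = 2 := by
  rw [LinearMap.finrank_range_of_inj (lin_inj p a b)]; simp

theorem lin_Q (h : IsF4 K) (p : Fin 3) (a b : NZ K) (z : K × K) :
    Q (lin p a.1 b.1 z) = 0 := by
  have ha := h.cube a.1 a.2
  have hb := h.cube b.1 b.2
  have h2 := h.two
  fin_cases p <;> simp [lin, Q, mul_pow, ha, hb] <;> grind

/-- The 27 lines. -/
def lines (i : Fin 3 × NZ K × NZ K) : Submodule K (Fin 4 → K) :=
  LinearMap.range (lin i.1 i.2.1.1 i.2.2.1)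

theorem lines_inj : Function.Injective (lines (K := K)) := by
  rintro ⟨p, ⟨a, ha⟩, ⟨b, hb⟩⟩ ⟨q, ⟨c, hc⟩, ⟨d, hd⟩⟩ h
  have h1 : lin p a b (1, 0) ∈ lines (K := K) ⟨q, ⟨c, hc⟩, ⟨d, hd⟩⟩ := by
    rw [← h]; exact ⟨_, rfl⟩
  have h2 : lin p a b (0, 1) ∈ lines (K := K) ⟨q, ⟨c, hc⟩, ⟨d, hd⟩⟩ := by
    rw [← h]; exact ⟨_, rfl⟩
  obtain ⟨⟨s, t⟩, h1⟩ := h1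
  obtain ⟨⟨s', t'⟩, h2⟩ := h2
  have e0 := congrFun h1 0
  have e1 := congrFun h1 1
  have e2 := congrFun h1 2
  have e3 := congrFun h1 3
  have f0 := congrFun h2 0
  have f1 := congrFun h2 1
  have f2 := congrFun h2 2
  have f3 := congrFun h2 3
  clear h h1 h2
  fin_cases p <;> fin_cases q <;> simp [lin] at e0 e1 e2 e3 f0 f1 f2 f3 ⊢ <;> grind

theorem exists_zero_coord (W : Submodule K (Fin 4 → K)) (hW : Module.finrank K W = 2)
    (i : Fin 4) : ∃ w ∈ W, w ≠ 0 ∧ w i = 0 := by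
  have := LinearMap.ker_ne_bot_of_finrank_lt
    (f := (LinearMap.proj i : (Fin 4 → K) →ₗ[K] K).comp W.subtype) (by simp [hW])
  obtain ⟨x, hx, hx0⟩ := Submodule.exists_mem_ne_zero_of_ne_bot this
  refine ⟨x.1, x.2, by simpa using hx0, by simpa using hx⟩

theorem key (h : IsF4 K) {v0 v1 v3 w2 w3 : K} (hw2 : w2 ≠ 0) (hw3 : w3 ≠ 0)
    (hc : ∀ c : K, v0 ^ 3 + v1 ^ 3 + (c * w2) ^ 3 + (v3 + c * w3) ^ 3 = 0) : v3 = 0 := by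
  by_contra hv
  obtain ⟨o, ho0, ho1⟩ := h.om
  have h0 := hc 0
  have h1 := hc (o * v3 / w3)
  have n1 : o * v3 / w3 * w2 ≠ 0 := by simp [*]
  have n2 : v3 + o * v3 / w3 * w3 ≠ 0 := by
    have : v3 + o * v3 / w3 * w3 = v3 * (1 + o) := by field_simp
    rw [this]
    refine mul_ne_zero hv fun hh => ho1 ?_
    have := h.two
    grind
  rw [h.cube _ n1, h.cube _ n2] at h1
  have h3 := h.cube _ hv
  have h2 := h.two
  simp [h3] at h0
  have : (1 : K) = 0 := by linear_combination h1 - h0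
  exact one_ne_zero this

theorem cube_cases (h : IsF4 K) (a : K) : a = 0 ∨ (a ≠ 0 ∧ a ^ 3 = 1) := by
  by_cases ha : a = 0
  · exact Or.inl ha
  · exact Or.inr ⟨ha, h.cube a ha⟩

/-- Two nonzero vectors on disjoint pairs of coordinates. -/
theorem lines_of_le (W : Submodule K (Fin 4 → K)) (hW : Module.finrank K W = 2)
    (i : Fin 3 × NZ K × NZ K) (h1 : lin i.1 i.2.1.1 i.2.2.1 (1, 0) ∈ W)
    (h2 : lin i.1 i.2.1.1 i.2.2.1 (0, 1) ∈ W) : lines i = W := by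
  have : FiniteDimensional K W := inferInstance
  refine Submodule.eq_of_le_of_finrank_eq ?_ ?_
  · rintro _ ⟨⟨s, t⟩, rfl⟩
    have : ((s, t) : K × K) = s • (1, 0) + t • (0, 1) := by simp
    rw [this, map_add, map_smul, map_smul]
    exact W.add_mem (W.smul_mem _ h1) (W.smul_mem _ h2)
  · rw [hW]; exact lin_finrank _ _ _

theorem vec_ne (x : Fin 4 → K) (hx : x ≠ 0) : ¬ (x 0 = 0 ∧ x 1 = 0 ∧ x 2 = 0 ∧ x 3 = 0) := by
  rintro ⟨h0, h1, h2, h3⟩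
  apply hx
  ext i
  fin_cases i <;> simpa

theorem pair_ne (h : IsF4 K) {a b : K} (hab : a ^ 3 + b ^ 3 = 0) (hn : ¬ (a = 0 ∧ b = 0)) :
    a ≠ 0 ∧ b ≠ 0 := by
  constructor
  · rintro rfl
    simp at hab
    exact hn ⟨rfl, hab⟩
  · rintro rfl
    simp at hab
    exact hn ⟨hab, rfl⟩

theorem lines_surj (h : IsF4 K) (W : Submodule K (Fin 4 → K)) (hW : Module.finrank K W = 2)
    (hQ : ∀ x ∈ W, Q x = 0) : ∃ i, lines i = W := by
  obtain ⟨w, hw, hwn, hw0⟩ := exists_zero_coord W hW 0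
  have hwn := vec_ne w hwn
  have hwQ := hQ w hw
  have h2 := h.two
  have hcases : (w 1 = 0 ∧ w 2 ≠ 0 ∧ w 3 ≠ 0) ∨ (w 2 = 0 ∧ w 1 ≠ 0 ∧ w 3 ≠ 0) ∨
      (w 3 = 0 ∧ w 1 ≠ 0 ∧ w 2 ≠ 0) := by
    simp only [Q] at hwQ
    rcases cube_cases h (w 1) with a | ⟨a, a'⟩ <;> rcases cube_cases h (w 2) with b | ⟨b, b'⟩ <;>
    rcases cube_cases h (w 3) with c | ⟨c, c'⟩ <;> simp_all
  rcases hcases with ⟨z, n, m⟩ | ⟨z, n, m⟩ | ⟨z, n, m⟩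
  · obtain ⟨v, hv, hvn, hv0⟩ := exists_zero_coord W hW 2
    have hv3 : v 3 = 0 := key h n m (v0 := v 0) (v1 := v 1) fun c => by
      have := hQ _ (W.add_mem hv (W.smul_mem c hw))
      simp [Q, hv0, hw0, z] at this
      linear_combination this
    have hvQ := hQ v hv
    have hp := pair_ne h (a := v 0) (b := v 1) (by simpa [Q, hv0, hv3] using hvQ)
      (fun hh => vec_ne v hvn ⟨hh.1, hh.2, hv0, hv3⟩)
    refine ⟨⟨0, ⟨w 3 / w 2, div_ne_zero m n⟩, ⟨v 1 / v 0, div_ne_zero hp.2 hp.1⟩⟩,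
      lines_of_le W hW _ ?_ ?_⟩
    · convert W.smul_mem (v 0)⁻¹ hv using 1
      ext i; fin_cases i <;> simp [lin, hv0, hv3, hp.1] <;> field_simp
    · convert W.smul_mem (w 2)⁻¹ hw using 1
      ext i; fin_cases i <;> simp [lin, hw0, z, n] <;> field_simp
  · obtain ⟨v, hv, hvn, hv0⟩ := exists_zero_coord W hW 1
    have hv3 : v 3 = 0 := key h n m (v0 := v 0) (v1 := v 2) fun c => by
      have := hQ _ (W.add_mem hv (W.smul_mem c hw))
      simp [Q, hv0, hw0, z] at this
      linear_combination this
    have hvQ := hQ v hv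
    have hp := pair_ne h (a := v 0) (b := v 2) (by simpa [Q, hv0, hv3] using hvQ)
      (fun hh => vec_ne v hvn ⟨hh.1, hv0, hh.2, hv3⟩)
    refine ⟨⟨1, ⟨w 3 / w 1, div_ne_zero m n⟩, ⟨v 2 / v 0, div_ne_zero hp.2 hp.1⟩⟩,
      lines_of_le W hW _ ?_ ?_⟩
    · convert W.smul_mem (v 0)⁻¹ hv using 1
      ext i; fin_cases i <;> simp [lin, hv0, hv3, hp.1] <;> field_simp
    · convert W.smul_mem (w 1)⁻¹ hw using 1
      ext i; fin_cases i <;> simp [lin, hw0, z, n] <;> field_simp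
  · obtain ⟨v, hv, hvn, hv0⟩ := exists_zero_coord W hW 1
    have hv3 : v 2 = 0 := key h n m (v0 := v 0) (v1 := v 3) fun c => by
      have := hQ _ (W.add_mem hv (W.smul_mem c hw))
      simp [Q, hv0, hw0, z] at this
      linear_combination this
    have hvQ := hQ v hv
    have hp := pair_ne h (a := v 0) (b := v 3) (by simpa [Q, hv0, hv3] using hvQ)
      (fun hh => vec_ne v hvn ⟨hh.1, hv0, hv3, hh.2⟩)
    refine ⟨⟨2, ⟨w 2 / w 1, div_ne_zero m n⟩, ⟨v 3 / v 0, div_ne_zero hp.2 hp.1⟩⟩,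
      lines_of_le W hW _ ?_ ?_⟩
    · convert W.smul_mem (v 0)⁻¹ hv using 1
      ext i; fin_cases i <;> simp [lin, hv0, hv3, hp.1] <;> field_simp
    · convert W.smul_mem (w 1)⁻¹ hw using 1
      ext i; fin_cases i <;> simp [lin, hw0, z, n] <;> field_simp

theorem count_lines (h : IsF4 K) :
    {W : Submodule K (Fin 4 → K) | Module.finrank K W = 2 ∧ ∀ x ∈ W, Q x = 0}.ncard = 27 := by
  have : {W : Submodule K (Fin 4 → K) | Module.finrank K W = 2 ∧ ∀ x ∈ W, Q x = 0}
      = Set.range (lines (K := K)) := by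
    ext W
    constructor
    · rintro ⟨h1, h2⟩
      exact lines_surj h W h1 h2
    · rintro ⟨i, rfl⟩
      refine ⟨lin_finrank _ _ _, ?_⟩
      rintro _ ⟨z, rfl⟩
      exact lin_Q h _ _ _ _
  rw [this, ← Nat.card_coe_set_eq, Nat.card_range_of_injective lines_inj]
  simp [Nat.card_prod, card_NZ h]

/-- Representatives of the 45 points. -/
def rep : (Fin 6 × NZ K) ⊕ (NZ K × NZ K × NZ K) → (Fin 4 → K)
  | .inl (p, a) => match p with
    | 0 => ![1, a.1, 0, 0]
    | 1 => ![1, 0, a.1, 0]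
    | 2 => ![1, 0, 0, a.1]
    | 3 => ![0, 1, a.1, 0]
    | 4 => ![0, 1, 0, a.1]
    | 5 => ![0, 0, 1, a.1]
  | .inr (a, b, c) => ![1, a.1, b.1, c.1]

theorem rep_ne (i) : rep (K := K) i ≠ 0 := by
  rcases i with ⟨p, a, ha⟩ | ⟨⟨a, ha⟩, ⟨b, hb⟩, ⟨c, hc⟩⟩
  · fin_cases p <;> simp [rep]
  · simp [rep]

theorem rep_Q (h : IsF4 K) (i) : Q (rep (K := K) i) = 0 := by
  have h2 := h.two
  rcases i with ⟨p, a, ha⟩ | ⟨⟨a, ha⟩, ⟨b, hb⟩, ⟨c, hc⟩⟩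
  · have := h.cube a ha
    fin_cases p <;> simp [rep, Q, this, h2]
  · simp [rep, Q, h.cube a ha, h.cube b hb, h.cube c hc, h2]

theorem rep_inj : Function.Injective (fun i => Submodule.span K {rep (K := K) i}) := by
  intro i j hij
  dsimp only at hij
  have hm : rep i ∈ Submodule.span K {rep (K := K) j} := by
    rw [← hij]; exact Submodule.mem_span_singleton_self _
  obtain ⟨k, hk⟩ := Submodule.mem_span_singleton.1 hm
  have e0 := congrFun hk 0
  have e1 := congrFun hk 1
  have e2 := congrFun hk 2
  have e3 := congrFun hk 3
  clear hm hij hk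
  rcases i with ⟨p, a, ha⟩ | ⟨⟨a, ha⟩, ⟨b, hb⟩, ⟨c, hc⟩⟩ <;>
  rcases j with ⟨q, a', ha'⟩ | ⟨⟨a', ha'⟩, ⟨b', hb'⟩, ⟨c', hc'⟩⟩
  · fin_cases p <;> fin_cases q <;> simp [rep] at e0 e1 e2 e3 ⊢ <;> grind
  · fin_cases p <;> simp [rep] at e0 e1 e2 e3 ⊢ <;> grind
  · fin_cases q <;> simp [rep] at e0 e1 e2 e3 ⊢ <;> grind
  · simp [rep] at e0 e1 e2 e3 ⊢; grind

theorem rep_surj (h : IsF4 K) (v : Fin 4 → K) (hv : v ≠ 0) (hQ : Q v = 0) :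
    ∃ i, ∃ c : K, c ≠ 0 ∧ c • rep i = v := by
  have h2 := h.two
  have hv := vec_ne v hv
  have ext4 : ∀ u : Fin 4 → K, u 0 = v 0 → u 1 = v 1 → u 2 = v 2 → u 3 = v 3 → u = v := by
    intro u a b c d
    ext i; fin_cases i <;> assumption
  simp only [Q] at hQ
  rcases cube_cases h (v 0) with a | ⟨a, a'⟩ <;> rcases cube_cases h (v 1) with b | ⟨b, b'⟩ <;>
  rcases cube_cases h (v 2) with c | ⟨c, c'⟩ <;> rcases cube_cases h (v 3) with d | ⟨d, d'⟩ <;>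
  first
  | (exfalso; simp_all; done)
  | (refine ⟨.inl (0, ⟨v 1 / v 0, div_ne_zero b a⟩), v 0, a, ?_⟩
     apply ext4 <;> simp [rep, *] <;> field_simp
     done)
  | (refine ⟨.inl (1, ⟨v 2 / v 0, div_ne_zero c a⟩), v 0, a, ?_⟩
     apply ext4 <;> simp [rep, *] <;> field_simp
     done)
  | (refine ⟨.inl (2, ⟨v 3 / v 0, div_ne_zero d a⟩), v 0, a, ?_⟩
     apply ext4 <;> simp [rep, *] <;> field_simp
     done)
  | (refine ⟨.inl (3, ⟨v 2 / v 1, div_ne_zero c b⟩), v 1, b, ?_⟩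
     apply ext4 <;> simp [rep, *] <;> field_simp
     done)
  | (refine ⟨.inl (4, ⟨v 3 / v 1, div_ne_zero d b⟩), v 1, b, ?_⟩
     apply ext4 <;> simp [rep, *] <;> field_simp
     done)
  | (refine ⟨.inl (5, ⟨v 3 / v 2, div_ne_zero d c⟩), v 2, c, ?_⟩
     apply ext4 <;> simp [rep, *] <;> field_simp
     done)
  | (refine ⟨.inr (⟨v 1 / v 0, div_ne_zero b a⟩, ⟨v 2 / v 0, div_ne_zero c a⟩,
      ⟨v 3 / v 0, div_ne_zero d a⟩), v 0, a, ?_⟩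
     apply ext4 <;> simp [rep] <;> field_simp
     done)

theorem count_points (h : IsF4 K) :
    {L : Submodule K (Fin 4 → K) | Module.finrank K L = 1 ∧ ∀ x ∈ L, Q x = 0}.ncard = 45 := by
  have : {L : Submodule K (Fin 4 → K) | Module.finrank K L = 1 ∧ ∀ x ∈ L, Q x = 0}
      = Set.range (fun i => Submodule.span K {rep (K := K) i}) := by
    ext L
    constructor
    · rintro ⟨h1, hQ⟩
      have hb : L ≠ ⊥ := by
        rintro rfl
        simp at h1
      obtain ⟨v, hv, hv0⟩ := Submodule.exists_mem_ne_zero_of_ne_bot hb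
      obtain ⟨i, c, hc, hi⟩ := rep_surj h v hv0 (hQ v hv)
      refine ⟨i, Submodule.eq_of_le_of_finrank_eq ?_ ?_⟩
      · rw [Submodule.span_singleton_le_iff_mem]
        rw [← hi] at hv
        exact (L.smul_mem_iff hc).1 hv
      · rw [h1, finrank_span_singleton (rep_ne i)]
    · rintro ⟨i, rfl⟩
      refine ⟨finrank_span_singleton (rep_ne i), ?_⟩
      intro x hx
      obtain ⟨c, rfl⟩ := Submodule.mem_span_singleton.1 hx
      have := rep_Q h i
      simp only [Q, Pi.smul_apply, smul_eq_mul] at this ⊢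
      linear_combination c ^ 3 * this
  rw [this, ← Nat.card_coe_set_eq, Nat.card_range_of_injective rep_inj]
  have : Finite (NZ K) := Nat.finite_of_card_ne_zero (by rw [card_NZ h]; omega)
  rw [Nat.card_sum]
  simp [Nat.card_prod, card_NZ h]

end Fermat



/-- Over the field `F₄` with four elements, the Fermat cubic
surface `x₀³ + x₁³ + x₂³ + x₃³ = 0` contains exactly `45` points of `ℙ³(F₄)`
(1-dimensional subspaces of `F₄⁴`, its Eckardt points) and exactly `27` lines
of `ℙ³(F₄)` (2-dimensional subspaces, its exceptional lines). -/
theorem stmt13 :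
    {L : Submodule (GaloisField 2 2) (Fin 4 → GaloisField 2 2) |
        Module.finrank (GaloisField 2 2) L = 1 ∧
        ∀ x ∈ L, (x 0) ^ 3 + (x 1) ^ 3 + (x 2) ^ 3 + (x 3) ^ 3 = 0}.ncard = 45 ∧
    {W : Submodule (GaloisField 2 2) (Fin 4 → GaloisField 2 2) |
        Module.finrank (GaloisField 2 2) W = 2 ∧
        ∀ x ∈ W, (x 0) ^ 3 + (x 1) ^ 3 + (x 2) ^ 3 + (x 3) ^ 3 = 0}.ncard = 27 := by
  exact ⟨Fermat.count_points Fermat.galois_isF4, Fermat.count_lines Fermat.galois_isF4⟩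
end

section
/- Let k be an algebraically closed field of arbitrary characteristic. Identify the 20-dimensional k-vector space of homogeneous degree-3 polynomials in k[x₀,x₁,x₂,x₃] with k²⁰ via the coefficients of the 20 cubic monomials. Then there exists a nonzero polynomial function P on this coefficient space such that every homogeneous cubic F whose coefficient vector does not lie in the zero set of P admits A ∈ GL₄(k), λ ∈ kˣ and scalars a₀₁₂, a₀₁₃, a₀₂₃, a₁₂₃ ∈ k with λ·F(A·x) = x₀³ + x₁³ + x₂³ + x₃³ + a₁₂₃x₁x₂x₃ + a₀₂₃x₀x₂x₃ + a₀₁₃x₀x₁x₃ + a₀₁₂x₀x₁x₂. (A general cubic surface over any algebraically closed field can be written in Emch's normal form.) -/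
open MvPolynomial Matrix

namespace Emch

theorem weight_one_eq {τ : Type*} (d : τ →₀ ℕ) :
    Finsupp.weight (1 : τ → ℕ) d = d.degree := by
  rw [Finsupp.degree_eq_weight_one]; rfl

/-- Scaling the arguments of a homogeneous polynomial. -/
theorem aeval_smul_of_hom {k τ S : Type*} [Field k] [CommRing S] [Algebra k S]
    {Q : MvPolynomial τ k} {n : ℕ} (hQ : Q.IsHomogeneous n) (T : S) (s : τ → S) :
    aeval (fun m => T * s m) Q = T ^ n * aeval s Q := by
  rw [aeval_def, aeval_def, eval₂_eq, eval₂_eq, Finset.mul_sum]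
  refine Finset.sum_congr rfl fun d hd => ?_
  have h1 : ∑ i ∈ d.support, d i = n := by
    have := hQ (mem_support_iff.mp hd)
    rw [weight_one_eq] at this
    rwa [Finsupp.degree_apply] at this
  simp only [mul_pow, Finset.prod_mul_distrib, Finset.prod_pow_eq_pow_sum, h1]
  ring

/-- Infinitesimal surjectivity along curves implies algebraic independence. -/
theorem injective_of_curves {k σ τ : Type*} [Field k] [Infinite k]
    (f : τ → MvPolynomial σ k) (b : τ → k)
    (H : ∀ w : τ → k, ∃ (x : σ → Polynomial k) (r : τ → Polynomial k), ∀ m,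
      aeval x (f m) = Polynomial.C (b m) + Polynomial.X * Polynomial.C (w m)
        + Polynomial.X ^ 2 * r m) :
    Function.Injective (aeval f : MvPolynomial τ k →ₐ[k] MvPolynomial σ k) := by
  classical
  rw [injective_iff_map_eq_zero]
  intro Q hQ
  by_contra hne
  set Q' : MvPolynomial τ k := aeval (fun m => X m + C (b m)) Q with hQ'
  have hback : aeval (fun m => X m - C (b m)) Q' = Q := by
    rw [hQ', ← AlgHom.comp_apply]
    have : (aeval (fun m => X m - C (b m)) : MvPolynomial τ k →ₐ[k] MvPolynomial τ k).comp
        (aeval (fun m => X m + C (b m))) = AlgHom.id k _ := by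
      ext m
      simp [algHom_C]
    rw [this]; rfl
  have hQ'0 : Q' ≠ 0 := by
    intro h; apply hne; rw [← hback, h, map_zero]
  have hex : ∃ d, homogeneousComponent d Q' ≠ 0 := by
    by_contra! h
    apply hQ'0
    rw [← sum_homogeneousComponent Q']
    exact Finset.sum_eq_zero fun i _ => h i
  set d := Nat.find hex with hd
  have hdn : homogeneousComponent d Q' ≠ 0 := Nat.find_spec hex
  have hlt : ∀ e < d, homogeneousComponent e Q' = 0 := fun e he => by
    have := Nat.find_min hex he
    simpa using this
  obtain ⟨w, hw⟩ : ∃ w : τ → k, eval w (homogeneousComponent d Q') ≠ 0 := by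
    by_contra! h
    exact hdn (MvPolynomial.funext fun w => by simpa using h w)
  obtain ⟨x, r, hx⟩ := H w
  set s : τ → Polynomial k := fun m => Polynomial.C (w m) + Polynomial.X * r m with hs
  have h0 : aeval (fun m => Polynomial.X * s m) Q' = 0 := by
    have e1 : aeval (fun m => Polynomial.X * s m) Q' = aeval x (aeval f Q) := by
      rw [hQ', ← AlgHom.comp_apply, ← AlgHom.comp_apply]
      congr 1
      ext1 m
      simp only [AlgHom.comp_apply, aeval_X, map_add, hx, algHom_C, hs]
      rw [Polynomial.algebraMap_eq]
      ring
    rw [e1, hQ, map_zero]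
  have h1 : aeval (fun m => Polynomial.X * s m) Q' =
      ∑ e ∈ Finset.range (Q'.totalDegree + 1),
        Polynomial.X ^ e * aeval s (homogeneousComponent e Q') := by
    conv_lhs => rw [← sum_homogeneousComponent Q']
    rw [map_sum]
    exact Finset.sum_congr rfl fun e _ =>
      aeval_smul_of_hom (homogeneousComponent_isHomogeneous e Q') _ _
  have hdle : d ∈ Finset.range (Q'.totalDegree + 1) := by
    by_contra h
    exact hdn (homogeneousComponent_eq_zero d Q' (by simpa using h))
  have h2 : (∑ e ∈ Finset.range (Q'.totalDegree + 1),
        Polynomial.X ^ e * aeval s (homogeneousComponent e Q')).coeff d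
        = eval w (homogeneousComponent d Q') := by
    rw [Polynomial.finsetSum_coeff, Finset.sum_eq_single_of_mem d hdle]
    · rw [Polynomial.coeff_X_pow_mul', if_pos le_rfl, Nat.sub_self, Polynomial.coeff_zero_eq_eval_zero,
        ← Polynomial.coe_aeval_eq_eval, ← AlgHom.restrictScalars_apply k, ← AlgHom.comp_apply,
        ← coe_aeval_eq_eval]
      show _ = aeval w _
      congr 1
      ext1 m
      simp [hs]
    · intro e _ hed
      rcases lt_or_gt_of_ne hed with h | h
      · rw [hlt e h]; simp
      · rw [Polynomial.coeff_X_pow_mul', if_neg (by omega)]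
  rw [← h1, h0] at h2
  exact hw (by simpa using h2.symm)

theorem dominant {k σ τ : Type*} [Field k] [IsAlgClosed k] [Finite σ] [Finite τ]
    (f : τ → MvPolynomial σ k)
    (hf : Function.Injective (aeval f : MvPolynomial τ k →ₐ[k] MvPolynomial σ k))
    (h : MvPolynomial σ k) (hh : h ≠ 0) :
    ∃ P : MvPolynomial τ k, P ≠ 0 ∧ ∀ y : τ → k, eval y P ≠ 0 →
      ∃ x : σ → k, eval x h ≠ 0 ∧ ∀ m, eval x (f m) = y m := by
  set φ : MvPolynomial τ k →+* MvPolynomial σ k :=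
    (aeval f : MvPolynomial τ k →ₐ[k] MvPolynomial σ k).toRingHom with hφ
  have hfp : φ.FinitePresentation := by
    refine RingHom.FinitePresentation.of_comp_finiteType (C : k →+* MvPolynomial τ k) ?_ ?_
    · have : φ.comp (C : k →+* MvPolynomial τ k) = algebraMap k (MvPolynomial σ k) := by
        ext1 a; simp [hφ, algHom_C]
      rw [this, RingHom.finitePresentation_algebraMap]
      infer_instance
    · have : (C : k →+* MvPolynomial τ k) = algebraMap k _ := rfl
      rw [this, RingHom.finiteType_algebraMap]
      infer_instance
  obtain ⟨S, hS⟩ := PrimeSpectrum.exists_constructibleSetData_iff.mpr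
    (PrimeSpectrum.isConstructible_comap_image hfp
      (PrimeSpectrum.isConstructible_basicOpen (f := h)))
  have hbot : (⊥ : PrimeSpectrum (MvPolynomial τ k)) ∈ S.toSet := by
    rw [hS]
    refine ⟨⊥, ?_, ?_⟩
    · simpa [PrimeSpectrum.mem_basicOpen] using hh
    · ext a
      simp only [PrimeSpectrum.comap_asIdeal, PrimeSpectrum.asIdeal_bot, Ideal.mem_comap,
        Ideal.mem_bot]
      exact map_eq_zero_iff φ hf
  simp only [PrimeSpectrum.ConstructibleSetData.toSet, Set.mem_iUnion] at hbot
  obtain ⟨D, hDS, hD1, hD2⟩ := hbot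
  have hg : ∀ i, D.g i = 0 := fun i => by
    have := hD1 (Set.mem_range_self i)
    simpa using this
  have hfne : D.f ≠ 0 := fun h0 => hD2 (by simp [h0])
  refine ⟨D.f, hfne, fun y hy => ?_⟩
  let p : PrimeSpectrum (MvPolynomial τ k) := ⟨vanishingIdeal k {y}, inferInstance⟩
  have hp : p ∈ S.toSet := by
    simp only [PrimeSpectrum.ConstructibleSetData.toSet, Set.mem_iUnion]
    refine ⟨D, hDS, ?_, ?_⟩
    · rintro _ ⟨i, rfl⟩
      rw [hg i]; exact Ideal.zero_mem _
    · intro hc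
      have : D.f ∈ vanishingIdeal k {y} := hc rfl
      rw [mem_vanishingIdeal_singleton_iff] at this
      exact hy this
  rw [hS] at hp
  obtain ⟨q, hq, hqp⟩ := hp
  have hq' : h ∉ q.asIdeal := hq
  have := q.2
  rw [← IsPrime.vanishingIdeal_zeroLocus (K := k) q.asIdeal, mem_vanishingIdeal_iff] at hq'
  push Not at hq'
  obtain ⟨x, hx, hxh⟩ := hq'
  refine ⟨x, hxh, fun m => ?_⟩
  have h1 : X m - C (y m) ∈ p.asIdeal := by
    show _ ∈ vanishingIdeal k {y}
    rw [mem_vanishingIdeal_singleton_iff]; simp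
  rw [← hqp] at h1
  have h2 : φ (X m - C (y m)) ∈ q.asIdeal := h1
  have h3 := hx _ h2
  have h4 : φ (X m - C (y m)) = f m - C (y m) := by simp [hφ, algHom_C]
  rw [h4] at h3
  have h5 : eval x (f m) - y m = 0 := by simpa using h3
  exact sub_eq_zero.mp h5

/-- The generic form `E_{c,a}(A x)`. -/
noncomputable def gen {S : Type*} [CommRing S] (A : Fin 4 → Fin 4 → S) (c a : Fin 4 → S) :
    MvPolynomial (Fin 4) S :=
  let l : Fin 4 → MvPolynomial (Fin 4) S := fun i => ∑ j, C (A i j) * X j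
  C (c 0) * l 0 ^ 3 + C (c 1) * l 1 ^ 3 + C (c 2) * l 2 ^ 3 + C (c 3) * l 3 ^ 3
    + C (a 0) * (l 1 * l 2 * l 3) + C (a 1) * (l 0 * l 2 * l 3)
    + C (a 2) * (l 0 * l 1 * l 3) + C (a 3) * (l 0 * l 1 * l 2)

theorem map_gen {S T : Type*} [CommRing S] [CommRing T] (φ : S →+* T)
    (A : Fin 4 → Fin 4 → S) (c a : Fin 4 → S) :
    map φ (gen A c a) = gen (fun i j => φ (A i j)) (fun i => φ (c i)) (fun i => φ (a i)) := by
  simp [gen]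

theorem gen_isHomogeneous {S : Type*} [CommRing S] (A : Fin 4 → Fin 4 → S) (c a : Fin 4 → S) :
    (gen A c a).IsHomogeneous 3 := by
  have hl : ∀ i, (∑ j, C (A i j) * X j : MvPolynomial (Fin 4) S).IsHomogeneous 1 := fun i =>
    IsHomogeneous.sum _ _ _ fun j _ => by
      simpa using (isHomogeneous_C (Fin 4) (A i j)).mul (isHomogeneous_X S j)
  have h3 : ∀ (s : S) (i j l : Fin 4), (C s * ((∑ m, C (A i m) * X m) * (∑ m, C (A j m) * X m) *
      (∑ m, C (A l m) * X m)) : MvPolynomial (Fin 4) S).IsHomogeneous 3 := fun s i j l => by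
    simpa using (isHomogeneous_C (Fin 4) s).mul (((hl i).mul (hl j)).mul (hl l))
  have h3' : ∀ (s : S) (i : Fin 4), (C s * (∑ m, C (A i m) * X m) ^ 3 :
      MvPolynomial (Fin 4) S).IsHomogeneous 3 := fun s i => by
    rw [pow_three']; exact h3 s i i i
  exact (((((((h3' _ _).add (h3' _ _)).add (h3' _ _)).add (h3' _ _)).add (h3 _ _ _ _)).add
    (h3 _ _ _ _)).add (h3 _ _ _ _)).add (h3 _ _ _ _)

/-- An explicit parametrization of all cubic forms. -/
noncomputable def cub {S : Type*} [CommRing S] (b : Fin 4 → Fin 4 → S) (e : Fin 4 → S) :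
    MvPolynomial (Fin 4) S :=
  ∑ j, ∑ l, C (b j l) * (X j ^ 2 * X l) + (C (e 0) * (X 1 * X 2 * X 3)
    + C (e 1) * (X 0 * X 2 * X 3) + C (e 2) * (X 0 * X 1 * X 3) + C (e 3) * (X 0 * X 1 * X 2))

theorem map_cub {S T : Type*} [CommRing S] [CommRing T] (φ : S →+* T)
    (b : Fin 4 → Fin 4 → S) (e : Fin 4 → S) :
    map φ (cub b e) = cub (fun i j => φ (b i j)) (fun i => φ (e i)) := by
  simp [cub]

theorem cub_add {S : Type*} [CommRing S] (b b' : Fin 4 → Fin 4 → S) (e e' : Fin 4 → S) :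
    cub (b + b') (e + e') = cub b e + cub b' e' := by
  simp only [cub, Pi.add_apply, C_add, add_mul, Finset.sum_add_distrib]
  ring

theorem cub_smul {S : Type*} [CommRing S] (s : S) (b : Fin 4 → Fin 4 → S) (e : Fin 4 → S) :
    cub (s • b) (s • e) = C s * cub b e := by
  simp only [cub, Pi.smul_apply, smul_eq_mul, C_mul, mul_assoc, ← Finset.mul_sum, mul_add]

theorem cub_sq {S : Type*} [CommRing S] (i j : Fin 4) :
    (X i ^ 2 * X j : MvPolynomial (Fin 4) S) =
      cub (fun p q => if p = i then (if q = j then 1 else 0) else 0) 0 := by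
  have : ∀ p q, (C (if p = i then (if q = j then (1 : S) else 0) else 0) :
      MvPolynomial (Fin 4) S) = if p = i then (if q = j then 1 else 0) else 0 := by
    intro p q; split_ifs <;> simp
  simp only [cub, this]
  simp

theorem exists_cub_mon {S : Type*} [CommRing S] (i j l : Fin 4) :
    ∃ b e, (X i * X j * X l : MvPolynomial (Fin 4) S) = cub b e := by
  by_cases h1 : i = j
  · subst h1; exact ⟨_, _, by rw [← cub_sq i l]; ring⟩
  by_cases h2 : i = l
  · subst h2; exact ⟨_, _, by rw [← cub_sq i j]; ring⟩
  by_cases h3 : j = l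
  · subst h3; exact ⟨_, _, by rw [← cub_sq j i]; ring⟩
  refine ⟨0, fun m => if m ≠ i ∧ m ≠ j ∧ m ≠ l then 1 else 0, ?_⟩
  fin_cases i <;> fin_cases j <;> (first | exact absurd rfl h1 | skip) <;> fin_cases l <;>
    (first | exact absurd rfl h2 | exact absurd rfl h3 | skip) <;> simp [cub] <;> ring

theorem exists_cub {S : Type*} [CommRing S] (W : MvPolynomial (Fin 4) S)
    (hW : W.IsHomogeneous 3) : ∃ b e, W = cub b e := by
  classical
  have hm : ∀ m : Fin 4 →₀ ℕ, ∀ n, m.degree = n + 1 →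
      ∃ i m', m = m' + Finsupp.single i 1 ∧ m'.degree = n := by
    intro m n hmn
    have : m ≠ 0 := by rintro rfl; simp at hmn
    obtain ⟨i, hi⟩ := Finsupp.ne_iff.mp this
    have hle : Finsupp.single i 1 ≤ m := by
      rw [Finsupp.single_le_iff]; simp at hi; omega
    refine ⟨i, m - Finsupp.single i 1, (tsub_add_cancel_of_le hle).symm, ?_⟩
    have := congrArg Finsupp.degree (tsub_add_cancel_of_le hle)
    rw [map_add, Finsupp.degree_single] at this
    omega
  have key : ∀ s : Finset (Fin 4 →₀ ℕ), (∀ m ∈ s, m.degree = 3) →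
      ∃ b e, (∑ m ∈ s, monomial m (coeff m W)) = cub b e := by
    intro s
    induction s using Finset.induction_on with
    | empty => intro _; exact ⟨0, 0, by simp [cub]⟩
    | insert m s hms ih =>
      intro hs
      obtain ⟨b, e, hbe⟩ := ih fun m' h => hs m' (Finset.mem_insert_of_mem h)
      obtain ⟨i, m1, rfl, h1⟩ := hm m 2 (hs m (Finset.mem_insert_self _ _))
      obtain ⟨j, m2, rfl, h2⟩ := hm m1 1 h1
      obtain ⟨l, m3, rfl, h3⟩ := hm m2 0 h2
      obtain rfl : m3 = 0 := (Finsupp.degree_eq_zero_iff _).mp h3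
      obtain ⟨b', e', hbe'⟩ := exists_cub_mon (S := S) l j i
      refine ⟨coeff (0 + Finsupp.single l 1 + Finsupp.single j 1 + Finsupp.single i 1) W • b' + b,
        coeff (0 + Finsupp.single l 1 + Finsupp.single j 1 + Finsupp.single i 1) W • e' + e, ?_⟩
      rw [Finset.sum_insert hms, cub_add, ← hbe, cub_smul, ← hbe', zero_add]
      congr 1
      simp only [X, monomial_mul, C_mul_monomial, mul_one]
  obtain ⟨b, e, h⟩ := key W.support fun m hm' => by
    have := hW (mem_support_iff.mp hm')
    rwa [weight_one_eq] at this
  exact ⟨b, e, by rw [← h]; exact W.as_sum⟩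

theorem expand {P : Type*} [CommRing P] (T a α u u' v v' w w' : P) :
    ∃ r, (a + T * α) * ((u + T * u') * (v + T * v') * (w + T * w')) =
      a * (u * v * w) + T * (α * (u * v * w) + a * (u' * v * w + u * v' * w + u * v * w'))
        + T ^ 2 * r :=
  ⟨α * (u' * v * w + u * v' * w + u * v * w') + (a + T * α) * (u' * v' * w + u' * v * w'
    + u * v' * w' + T * (u' * v' * w')), by ring⟩

/-- The linear part of `gen` at the point `(1, c, a)` in the direction `(N, γ, α)`. -/
noncomputable def lin {S : Type*} [CommRing S] (c a : Fin 4 → S) (N : Fin 4 → Fin 4 → S)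
    (γ α : Fin 4 → S) : MvPolynomial (Fin 4) S :=
  let v : Fin 4 → MvPolynomial (Fin 4) S := fun i => ∑ j, C (N i j) * X j
  let q : Fin 4 → Fin 4 → Fin 4 → MvPolynomial (Fin 4) S := fun i j l =>
    v i * X j * X l + X i * v j * X l + X i * X j * v l
  (∑ i, (C (γ i) * (X i * X i * X i) + C (c i) * q i i i))
    + (C (α 0) * (X 1 * X 2 * X 3) + C (a 0) * q 1 2 3)
    + (C (α 1) * (X 0 * X 2 * X 3) + C (a 1) * q 0 2 3)
    + (C (α 2) * (X 0 * X 1 * X 3) + C (a 2) * q 0 1 3)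
    + (C (α 3) * (X 0 * X 1 * X 2) + C (a 3) * q 0 1 2)

theorem gen_curve {S : Type*} [CommRing S] (T : S) (c a : Fin 4 → S) (N : Fin 4 → Fin 4 → S)
    (γ α : Fin 4 → S) :
    ∃ r, gen (fun i j => (if i = j then 1 else 0) + T * N i j) (fun i => c i + T * γ i)
        (fun i => a i + T * α i) =
      gen (fun i j => if i = j then 1 else 0) c a + C T * lin c a N γ α + C T ^ 2 * r := by
  have h0 : ∀ i : Fin 4, (∑ j, C (if i = j then (1 : S) else 0) * X j : MvPolynomial (Fin 4) S)
      = X i := by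
    intro i
    rw [Finset.sum_eq_single i] <;> simp +contextual [eq_comm]
  have h1 : ∀ i : Fin 4, (∑ j, C ((if i = j then (1 : S) else 0) + T * N i j) * X j :
      MvPolynomial (Fin 4) S) = X i + C T * ∑ j, C (N i j) * X j := by
    intro i
    conv_rhs => rw [← h0 i]
    rw [Finset.mul_sum, ← Finset.sum_add_distrib]
    exact Finset.sum_congr rfl fun j _ => by rw [C_add, C_mul]; ring
  simp only [gen, lin, h0, h1]
  simp only [C_add, C_mul]
  generalize hv : (fun i => ∑ j, C (N i j) * X j : Fin 4 → MvPolynomial (Fin 4) S) = v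
  have hv' : ∀ i, (∑ j, C (N i j) * X j : MvPolynomial (Fin 4) S) = v i := fun i =>
    congrFun hv i
  simp only [hv', Fin.sum_univ_four]
  obtain ⟨r0, e0⟩ := expand (C T) (C (c 0)) (C (γ 0)) (X 0) (v 0) (X 0) (v 0) (X 0) (v 0)
  obtain ⟨r1, e1⟩ := expand (C T) (C (c 1)) (C (γ 1)) (X 1) (v 1) (X 1) (v 1) (X 1) (v 1)
  obtain ⟨r2, e2⟩ := expand (C T) (C (c 2)) (C (γ 2)) (X 2) (v 2) (X 2) (v 2) (X 2) (v 2)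
  obtain ⟨r3, e3⟩ := expand (C T) (C (c 3)) (C (γ 3)) (X 3) (v 3) (X 3) (v 3) (X 3) (v 3)
  obtain ⟨s0, g0⟩ := expand (C T) (C (a 0)) (C (α 0)) (X 1) (v 1) (X 2) (v 2) (X 3) (v 3)
  obtain ⟨s1, g1⟩ := expand (C T) (C (a 1)) (C (α 1)) (X 0) (v 0) (X 2) (v 2) (X 3) (v 3)
  obtain ⟨s2, g2⟩ := expand (C T) (C (a 2)) (C (α 2)) (X 0) (v 0) (X 1) (v 1) (X 3) (v 3)
  obtain ⟨s3, g3⟩ := expand (C T) (C (a 3)) (C (α 3)) (X 0) (v 0) (X 1) (v 1) (X 2) (v 2)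
  exact ⟨r0 + r1 + r2 + r3 + s0 + s1 + s2 + s3, by
    linear_combination e0 + e1 + e2 + e3 + g0 + g1 + g2 + g3⟩

theorem lin_two {S : Type*} [CommRing S] (h2 : (2 : S) = 0) (b : Fin 4 → Fin 4 → S)
    (e : Fin 4 → S) : lin 1 0 b 0 e = cub b e := by
  have h2' : (2 : MvPolynomial (Fin 4) S) = 0 := by
    have := congrArg (C : S → MvPolynomial (Fin 4) S) h2
    rwa [C_0, show (2 : S) = 1 + 1 by norm_num, C_add, C_1, one_add_one_eq_two] at this
  have h3 : (3 : MvPolynomial (Fin 4) S) = 1 := by linear_combination h2'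
  have hq : ∀ i : Fin 4, (∑ j, C (b i j) * X j : MvPolynomial (Fin 4) S) * X i * X i
      + X i * (∑ j, C (b i j) * X j) * X i + X i * X i * (∑ j, C (b i j) * X j)
      = ∑ j, C (b i j) * (X i ^ 2 * X j) := by
    intro i
    have : ∑ j, C (b i j) * (X i ^ 2 * X j) = X i ^ 2 * ∑ j, C (b i j) * X j := by
      rw [Finset.mul_sum]; exact Finset.sum_congr rfl fun j _ => by ring
    rw [this]
    linear_combination (X i ^ 2 * ∑ j, C (b i j) * X j) * h3
  simp only [lin, cub, hq]
  simp
  ring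

theorem lin_odd {S : Type*} [CommRing S] (t : S) (ht : 2 * t = 1) (b : Fin 4 → Fin 4 → S)
    (e : Fin 4 → S) : ∃ N γ α, lin 0 1 N γ α = cub b e := by
  have htC : 2 * C t = (1 : MvPolynomial (Fin 4) S) := by
    have := congrArg (C : S → MvPolynomial (Fin 4) S) ht
    rwa [C_mul, show (2 : S) = 1 + 1 by norm_num, C_add, C_1, one_add_one_eq_two] at this
  let N : Fin 4 → Fin 4 → S := fun i j =>
    if i = j then 0 else t * (b j 0 + b j 1 + b j 2 + b j 3 - b j j) - b j i
  refine ⟨N, fun i => b i i, fun m => e m - ∑ j, N m j, ?_⟩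
  simp only [lin, cub, Fin.sum_univ_four, N]
  simp
  linear_combination (X 0 ^ 2 * (X 1 + X 2 + X 3) * (C (b 0 1) + C (b 0 2) + C (b 0 3))
    + X 1 ^ 2 * (X 0 + X 2 + X 3) * (C (b 1 0) + C (b 1 2) + C (b 1 3))
    + X 2 ^ 2 * (X 0 + X 1 + X 3) * (C (b 2 0) + C (b 2 1) + C (b 2 3))
    + X 3 ^ 2 * (X 0 + X 1 + X 2) * (C (b 3 0) + C (b 3 1) + C (b 3 2))) * htC

/-- Index type of the parameters: a matrix and two vectors. -/
abbrev Par := (Fin 4 × Fin 4) ⊕ (Fin 4 ⊕ Fin 4)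

abbrev Mon := {m : Fin 4 →₀ ℕ // ∑ i, m i = 3}

theorem finite_mon : Finite Mon := by
  refine Finite.of_injective (β := Fin 4 → Fin 4)
    (fun m i => ⟨m.1 i, ?_⟩) ?_
  · have := m.2
    have h : m.1 i ≤ ∑ j, m.1 j := Finset.single_le_sum (fun j _ => Nat.zero_le _)
      (Finset.mem_univ i)
    omega
  · intro m n h
    apply Subtype.ext
    ext i
    have := congrFun h i
    simpa using this

/-- The coefficients of the generic form as polynomials in the parameters. -/
noncomputable def co (k : Type*) [Field k] (m : Mon) : MvPolynomial Par k :=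
  coeff m.1 (gen (fun i j => (X (Sum.inl (i, j)) : MvPolynomial Par k))
    (fun i => X (Sum.inr (Sum.inl i))) (fun i => X (Sum.inr (Sum.inr i))))

theorem aeval_co {k S : Type*} [Field k] [CommRing S] [Algebra k S] (x : Par → S) (m : Mon) :
    aeval x (co k m) = coeff m.1 (gen (fun i j => x (Sum.inl (i, j)))
      (fun i => x (Sum.inr (Sum.inl i))) (fun i => x (Sum.inr (Sum.inr i)))) := by
  have := coeff_map (aeval x : MvPolynomial Par k →ₐ[k] S).toRingHom
    (gen (fun i j => (X (Sum.inl (i, j)) : MvPolynomial Par k))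
    (fun i => X (Sum.inr (Sum.inl i))) (fun i => X (Sum.inr (Sum.inr i)))) m.1
  rw [map_gen] at this
  simp at this
  exact this.symm

theorem map_lin {S T : Type*} [CommRing S] [CommRing T] (φ : S →+* T)
    (c a : Fin 4 → S) (N : Fin 4 → Fin 4 → S) (γ α : Fin 4 → S) :
    map φ (lin c a N γ α) = lin (fun i => φ (c i)) (fun i => φ (a i)) (fun i j => φ (N i j))
      (fun i => φ (γ i)) (fun i => φ (α i)) := by
  simp [lin]

/-- It suffices that the differential is onto at one point. -/
theorem curves_of_lin {k : Type*} [Field k] (c a : Fin 4 → k)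
    (H : ∀ b e, ∃ N γ α, lin c a N γ α = cub b e) (w : Mon → k) :
    ∃ (x : Par → Polynomial k) (r : Mon → Polynomial k), ∀ m,
      aeval x (co k m) = Polynomial.C (coeff m.1 (gen (fun i j => if i = j then 1 else 0) c a))
        + Polynomial.X * Polynomial.C (w m) + Polynomial.X ^ 2 * r m := by
  classical
  have := finite_mon
  have := Fintype.ofFinite Mon
  set W : MvPolynomial (Fin 4) k := ∑ m : Mon, monomial m.1 (w m) with hWdef
  have hW : W.IsHomogeneous 3 := IsHomogeneous.sum _ _ _ fun m _ =>
    isHomogeneous_monomial _ (by rw [Finsupp.degree_eq_sum]; exact m.2)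
  have hWc : ∀ m : Mon, coeff m.1 W = w m := by
    intro m
    rw [hWdef, coeff_sum, Finset.sum_eq_single m]
    · simp
    · intro n _ hn
      rw [coeff_monomial, if_neg (fun h => hn (Subtype.ext h))]
    · simp
  obtain ⟨b, e, hbe⟩ := exists_cub W hW
  obtain ⟨N, γ, α, hl⟩ := H b e
  obtain ⟨r, hr⟩ := gen_curve (S := Polynomial k) Polynomial.X (fun i => Polynomial.C (c i))
    (fun i => Polynomial.C (a i)) (fun i j => Polynomial.C (N i j))
    (fun i => Polynomial.C (γ i)) (fun i => Polynomial.C (α i))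
  refine ⟨Sum.elim (fun p => (if p.1 = p.2 then 1 else 0) + Polynomial.X * Polynomial.C (N p.1 p.2))
    (Sum.elim (fun i => Polynomial.C (c i) + Polynomial.X * Polynomial.C (γ i))
      (fun i => Polynomial.C (a i) + Polynomial.X * Polynomial.C (α i))),
    fun m => coeff m.1 r, fun m => ?_⟩
  rw [aeval_co]
  simp only [Sum.elim_inl, Sum.elim_inr]
  rw [hr, ← map_lin, hl, ← hbe]
  have h0 := map_gen (Polynomial.C : k →+* Polynomial k) (fun i j => if i = j then 1 else 0) c a
  simp only [apply_ite (Polynomial.C : k → Polynomial k), map_one, map_zero] at h0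
  rw [← h0, ← C_pow, coeff_add, coeff_add, coeff_C_mul, coeff_C_mul, coeff_map, coeff_map, hWc]

theorem co_injective (k : Type*) [Field k] [Infinite k] :
    Function.Injective (aeval (co k) : MvPolynomial Mon k →ₐ[k] MvPolynomial Par k) := by
  by_cases h2 : (2 : k) = 0
  · exact injective_of_curves _ _ (curves_of_lin 1 0 fun b e => ⟨b, 0, e, lin_two h2 b e⟩)
  · exact injective_of_curves _ _ (curves_of_lin 0 1 fun b e =>
      lin_odd (2⁻¹) (mul_inv_cancel₀ h2) b e)

theorem substMatrix_substMatrix {k : Type*} [Field k] (A B : Matrix (Fin 4) (Fin 4) k)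
    (F : MvPolynomial (Fin 4) k) : substMatrix B (substMatrix A F) = substMatrix (A * B) F := by
  unfold substMatrix
  rw [← AlgHom.comp_apply]
  refine DFunLike.congr_fun (MvPolynomial.algHom_ext fun i => ?_) F
  rw [AlgHom.comp_apply, aeval_X, aeval_X, map_sum]
  have h1 : ∀ j, aeval (fun i => ∑ l, C (B i l) * X l) (C (A i j) * X j : MvPolynomial (Fin 4) k)
      = ∑ l, C (A i j * B j l) * X l := fun j => by
    rw [map_mul, aeval_X, algHom_C, Finset.mul_sum]
    refine Finset.sum_congr rfl fun l _ => ?_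
    rw [algebraMap_eq, C_mul, mul_assoc]
  simp only [h1, Matrix.mul_apply, map_sum, Finset.sum_mul]
  exact Finset.sum_comm

theorem gen_eq_subst {k : Type*} [Field k] (A : Matrix (Fin 4) (Fin 4) k) (c a : Fin 4 → k) :
    gen (fun i j => A i j) c a = substMatrix A (C (c 0) * X 0 ^ 3 + C (c 1) * X 1 ^ 3
      + C (c 2) * X 2 ^ 3 + C (c 3) * X 3 ^ 3
      + C (a 0) * (X 1 * X 2 * X 3) + C (a 1) * (X 0 * X 2 * X 3)
      + C (a 2) * (X 0 * X 1 * X 3) + C (a 3) * (X 0 * X 1 * X 2)) := by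
  simp [gen, substMatrix, algHom_C]

end Emch

/-- **Emch's normal form for a general cubic surface.**
Identifying cubic forms with their coefficient vectors (indexed by the 20
exponent vectors of total degree 3), there is a nonzero polynomial `P` on the
coefficient space such that every homogeneous cubic `F` on which `P` does not
vanish can be brought, by an invertible linear change of variables and a
scaling, to the form `x₀³+x₁³+x₂³+x₃³ + Σ a_{ijl} xᵢxⱼx_l`. -/
theorem stmt14 {k : Type*} [Field k] [IsAlgClosed k] :
    ∃ P : MvPolynomial {m : Fin 4 →₀ ℕ // ∑ i, m i = 3} k, P ≠ 0 ∧
      ∀ F : MvPolynomial (Fin 4) k, F.IsHomogeneous 3 →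
        eval (fun m : {m : Fin 4 →₀ ℕ // ∑ i, m i = 3} => F.coeff m.1) P ≠ 0 →
        ∃ (A : Matrix (Fin 4) (Fin 4) k) (lam : kˣ)
          (a012 a013 a023 a123 : k), IsUnit A.det ∧
          (lam : k) • substMatrix A F =
            X 0 ^ 3 + X 1 ^ 3 + X 2 ^ 3 + X 3 ^ 3 +
            C a123 * (X 1 * X 2 * X 3) + C a023 * (X 0 * X 2 * X 3) +
            C a013 * (X 0 * X 1 * X 3) + C a012 * (X 0 * X 1 * X 2) := by
  classical
  have := Emch.finite_mon
  have hinf : Infinite k := IsAlgClosed.instInfinite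
  let M : Matrix (Fin 4) (Fin 4) (MvPolynomial Emch.Par k) :=
    Matrix.of fun i j => X (Sum.inl (i, j))
  let h : MvPolynomial Emch.Par k := M.det * ∏ i : Fin 4, X (Sum.inr (Sum.inl i))
  have heval : ∀ x : Emch.Par → k, eval x h =
      (Matrix.of fun i j => x (Sum.inl (i, j)) : Matrix (Fin 4) (Fin 4) k).det
        * ∏ i : Fin 4, x (Sum.inr (Sum.inl i)) := by
    intro x
    simp only [h, map_mul, map_prod, eval_X, RingHom.map_det]
    congr 2
    ext i j
    simp [M]
  have hne : h ≠ 0 := by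
    intro h0
    have := heval (Sum.elim (fun p => (1 : Matrix (Fin 4) (Fin 4) k) p.1 p.2) fun _ => 1)
    rw [h0] at this
    have h1 : (Matrix.of fun i j => (1 : Matrix (Fin 4) (Fin 4) k) i j) = 1 := rfl
    simp [h1] at this
  obtain ⟨P, hP, H⟩ := Emch.dominant (Emch.co k) (Emch.co_injective k) h hne
  refine ⟨P, hP, fun F hF hFP => ?_⟩
  obtain ⟨x, hx, hxF⟩ := H _ hFP
  rw [heval] at hx
  set A : Matrix (Fin 4) (Fin 4) k := Matrix.of fun i j => x (Sum.inl (i, j)) with hA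
  set c : Fin 4 → k := fun i => x (Sum.inr (Sum.inl i)) with hc
  set a : Fin 4 → k := fun i => x (Sum.inr (Sum.inr i)) with ha
  have hdet : A.det ≠ 0 := left_ne_zero_of_mul hx
  have hc0 : ∀ i, c i ≠ 0 := fun i =>
    Finset.prod_ne_zero_iff.mp (right_ne_zero_of_mul hx) i (Finset.mem_univ i)
  have hFG : F = Emch.gen (fun i j => A i j) c a := by
    ext m
    by_cases hm : ∑ i, m i = 3
    · rw [← hxF ⟨m, hm⟩]
      exact Emch.aeval_co x ⟨m, hm⟩
    · have hd : m.degree ≠ 3 := by rwa [Finsupp.degree_eq_sum]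
      rw [hF.coeff_eq_zero hd, (Emch.gen_isHomogeneous _ _ _).coeff_eq_zero hd]
  have hcube : ∀ i, ∃ d : k, d ^ 3 = (c i)⁻¹ := fun i =>
    IsAlgClosed.exists_pow_nat_eq _ (by norm_num)
  choose d hd using hcube
  have hd0 : ∀ i, d i ≠ 0 := fun i h0 => by
    have := hd i
    rw [h0] at this
    exact inv_ne_zero (hc0 i) (by rw [← this]; simp)
  have hcd : ∀ i, c i * d i ^ 3 = 1 := fun i => by rw [hd, mul_inv_cancel₀ (hc0 i)]
  have hunit : IsUnit A.det := isUnit_iff_ne_zero.mpr hdet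
  refine ⟨A⁻¹ * Matrix.diagonal d, 1, a 3 * (d 0 * d 1 * d 2), a 2 * (d 0 * d 1 * d 3),
    a 1 * (d 0 * d 2 * d 3), a 0 * (d 1 * d 2 * d 3), ?_, ?_⟩
  · rw [Matrix.det_mul, Matrix.det_diagonal]
    refine IsUnit.mul ?_ ?_
    · rw [Matrix.det_nonsing_inv]; simpa using hdet
    · exact isUnit_iff_ne_zero.mpr (Finset.prod_ne_zero_iff.mpr fun i _ => hd0 i)
  · rw [hFG, Emch.gen_eq_subst, Emch.substMatrix_substMatrix, ← mul_assoc,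
      Matrix.mul_nonsing_inv _ hunit, one_mul, Units.val_one, one_smul, ← Emch.gen_eq_subst]
    have hl : ∀ i : Fin 4, (∑ j, C (Matrix.diagonal d i j) * X j : MvPolynomial (Fin 4) k)
        = C (d i) * X i := by
      intro i
      rw [Finset.sum_eq_single i]
      · simp
      · intro j _ hj
        simp [Matrix.diagonal_apply_ne' d hj]
      · simp
    have hcd' : ∀ i, (C (c i) * C (d i) ^ 3 : MvPolynomial (Fin 4) k) = 1 := fun i => by
      rw [← C_pow, ← C_mul, hcd, C_1]
    simp only [Emch.gen, hl, C_mul]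
    linear_combination X 0 ^ 3 * hcd' 0 + X 1 ^ 3 * hcd' 1 + X 2 ^ 3 * hcd' 2 + X 3 ^ 3 * hcd' 3
end

section
/- Let k be an algebraically closed field of characteristic p > 0, let n ≥ 1 and m ≥ 2 be integers with p dividing m, and let F ∈ k[x₀,…,x_n] be homogeneous of degree m such that the hypersurface V(F) is smooth (the only common zero in k^{n+1} of F, ∂₀F, …, ∂ₙF is the origin). Let I = (∂₀F, …, ∂ₙF) be the ideal generated by the n+1 partial derivatives of F. Then for all sufficiently large d, the k-dimension of the degree-d homogeneous component of the graded ring k[x₀,…,x_n]/I equals ((m−1)^{n+1} − (−1)^{n+1})/m. (The critical scheme of a smooth degree-m hypersurface in ℙⁿ in characteristic dividing m is 0-dimensional of degree J_m(n) = ((m−1)^{n+1} − (−1)^{n+1})/m.) -/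
open MvPolynomial


namespace CritDeg

section Depth
variable {k : Type*} [Field k] {S : Type*} [CommRing S] [Algebra k S]

/-- `a` is a nonzerodivisor modulo `K`. -/
def Reg (K : Ideal S) (a : S) : Prop := ∀ s, a * s ∈ K → s ∈ K

/-- No nonzero element of `S/K` is killed by `W`. -/
def SF (W : Submodule k S) (K : Ideal S) : Prop := ∀ s, (∀ w ∈ W, w * s ∈ K) → s ∈ K

/-- There is a regular sequence of length `r` on `S/K` with entries in `W`. -/
def G (W : Submodule k S) : ℕ → Ideal S → Prop
  | 0, _ => True
  | r + 1, K => ∃ a ∈ W, Reg K a ∧ G W r (K ⊔ Ideal.span {a})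

theorem mem_sup_span {K : Ideal S} {a s : S} :
    s ∈ K ⊔ Ideal.span {a} ↔ ∃ x ∈ K, ∃ t, s = x + a * t := by
  rw [Submodule.mem_sup]
  constructor
  · rintro ⟨x, hx, y, hy, rfl⟩
    obtain ⟨t, rfl⟩ := Ideal.mem_span_singleton'.1 hy
    exact ⟨x, hx, t, by ring⟩
  · rintro ⟨x, hx, t, rfl⟩
    exact ⟨x, hx, a * t, Ideal.mem_span_singleton'.2 ⟨t, by ring⟩, rfl⟩

theorem Reg.swap {K : Ideal S} {a c : S} (ha : Reg K a)
    (hc' : Reg (K ⊔ Ideal.span {a}) c) : Reg (K ⊔ Ideal.span {c}) a := by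
  intro s hs
  obtain ⟨x, hx, t, h⟩ := mem_sup_span.1 hs
  have h1 : c * t ∈ K ⊔ Ideal.span {a} :=
    mem_sup_span.2 ⟨-x, K.neg_mem hx, s, by rw [h]; ring⟩
  obtain ⟨x', hx', u, hu⟩ := mem_sup_span.1 (hc' t h1)
  have h2 : a * (s - c * u) ∈ K := by
    have : a * (s - c * u) = x + c * x' := by rw [mul_sub, h, hu]; ring
    rw [this]; exact K.add_mem hx (K.mul_mem_left _ hx')
  exact mem_sup_span.2 ⟨_, ha _ h2, u, by ring⟩

theorem SF.of_reg {W : Submodule k S} {K : Ideal S} {a : S} (ha : a ∈ W) (h : Reg K a) :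
    SF W K := fun s hs => h s (hs a ha)

theorem G.sf {W : Submodule k S} {K : Ideal S} {r : ℕ} (h : G W (r + 1) K) : SF W K := by
  obtain ⟨a, ha, hr, -⟩ := h
  exact SF.of_reg ha hr

/-- Depth zero transfers between quotients by regular elements. -/
theorem SF.exchange {W : Submodule k S} {K : Ideal S} {a f : S} (haW : a ∈ W)
    (ha : Reg K a) (hf : Reg K f) (hs : SF W (K ⊔ Ideal.span {a})) :
    SF W (K ⊔ Ideal.span {f}) := by
  intro s h
  obtain ⟨x, hx, t, h1⟩ := mem_sup_span.1 (h a haW)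
  have ht : t ∈ K ⊔ Ideal.span {a} := by
    apply hs
    intro w hw
    obtain ⟨y, hy, u, h2⟩ := mem_sup_span.1 (h w hw)
    have h3 : f * (w * t - a * u) ∈ K := by
      have : f * (w * t - a * u) = a * y - w * x := by
        linear_combination a * h2 - w * h1
      rw [this]; exact K.sub_mem (K.mul_mem_left _ hy) (K.mul_mem_left _ hx)
    exact mem_sup_span.2 ⟨_, hf _ h3, u, by ring⟩
  obtain ⟨y, hy, u, h2⟩ := mem_sup_span.1 ht
  have h3 : a * (s - f * u) ∈ K := by
    have : a * (s - f * u) = x + f * y := by linear_combination h1 + f * h2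
    rw [this]; exact K.add_mem hx (K.mul_mem_left _ hy)
  exact mem_sup_span.2 ⟨_, ha _ h3, u, by ring⟩

/-- A vector space over an infinite field is not a finite union of proper subspaces. -/
theorem exists_notMem_finite [Infinite k] {E : Type*} [AddCommGroup E] [Module k E]
    (T : Set (Submodule k E)) (hT : T.Finite) (h : ∀ p ∈ T, p ≠ ⊤) :
    ∃ v : E, ∀ p ∈ T, v ∉ p := by
  classical
  have h1 := Subspace.biUnion_ne_univ_of_top_notMem (k := k) (E := E) (s := hT.toFinset)
    (by intro hh; exact h ⊤ (by simpa using hh) rfl)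
  by_contra hcon
  push Not at hcon
  apply h1
  ext v
  simp only [Set.mem_univ, iff_true, Set.mem_iUnion]
  obtain ⟨p, hp, hv⟩ := hcon v
  exact ⟨p, by simpa using hp, hv⟩

variable [IsNoetherianRing S]

theorem exists_primes (K : Ideal S) : ∃ T : Set (Ideal S), T.Finite ∧
    (∀ a, (∀ P ∈ T, a ∉ P) → Reg K a) ∧
    (∀ P ∈ T, P.IsPrime ∧ K ≤ P ∧ ∃ s, s ∉ K ∧ ∀ x ∈ P, x * s ∈ K) := by
  refine ⟨associatedPrimes S (S ⧸ K), associatedPrimes.finite S (S ⧸ K), ?_, ?_⟩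
  · intro a ha s hs
    by_contra hsK
    have : a ∈ ⋃ p ∈ associatedPrimes S (S ⧸ K), (p : Set S) := by
      rw [biUnion_associatedPrimes_eq_zero_divisors]
      refine ⟨Ideal.Quotient.mk K s, ?_, ?_⟩
      · rwa [Ne, Ideal.Quotient.eq_zero_iff_mem]
      · rw [← Ideal.Quotient.eq_zero_iff_mem] at hs
        simpa [Algebra.smul_def] using hs
    simp only [Set.mem_iUnion] at this
    obtain ⟨p, hp, h⟩ := this
    exact ha p hp h
  · intro P hP
    have hP' : IsAssociatedPrime P (S ⧸ K) := hP
    obtain ⟨hprime, x, hx⟩ := isAssociatedPrime_iff.1 hP'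
    obtain ⟨s, rfl⟩ := Ideal.Quotient.mk_surjective x
    have key : ∀ y, y ∈ P ↔ y * s ∈ K := by
      intro y
      rw [hx, Submodule.mem_colon_singleton, ← Ideal.Quotient.eq_zero_iff_mem (a := y * s)]
      simp [Algebra.smul_def]
    refine ⟨hprime, fun y hy => (key y).2 (K.mul_mem_right _ hy), s, ?_, fun y hy => (key y).1 hy⟩
    intro hs
    exact hprime.ne_top ((Ideal.eq_top_iff_one _).2 ((key 1).2 (by simpa using hs)))

/-- Subspaces to avoid in order to get a regular element, from a parametrisation. -/
theorem exists_subspaces {E : Type*} [AddCommGroup E] [Module k E] (H : E →ₗ[k] S)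
    (K : Ideal S) (h : ∀ s, (∀ v, H v * s ∈ K) → s ∈ K) :
    ∃ T : Set (Submodule k E), T.Finite ∧ (∀ p ∈ T, p ≠ ⊤) ∧
      ∀ v, (∀ p ∈ T, v ∉ p) → Reg K (H v) := by
  obtain ⟨T, hT, h1, h2⟩ := exists_primes K
  refine ⟨(fun P : Ideal S => (P.restrictScalars k).comap H) '' T, hT.image _, ?_, ?_⟩
  · rintro _ ⟨P, hP, rfl⟩ htop
    simp only at htop
    obtain ⟨-, -, s, hs, hs'⟩ := h2 P hP
    apply hs
    apply h
    intro v
    apply hs'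
    have : v ∈ (P.restrictScalars k).comap H := by rw [htop]; trivial
    exact this
  · intro v hv
    apply h1
    intro P hP hh
    exact hv _ ⟨P, hP, rfl⟩ hh

variable [Infinite k]

theorem exists_reg3 {W : Submodule k S} {K₁ K₂ K₃ : Ideal S} (h₁ : SF W K₁) (h₂ : SF W K₂)
    (h₃ : SF W K₃) : ∃ c ∈ W, Reg K₁ c ∧ Reg K₂ c ∧ Reg K₃ c := by
  have conv : ∀ {K : Ideal S}, SF W K → ∀ s, (∀ v, W.subtype v * s ∈ K) → s ∈ K :=
    fun h s hs => h s fun w hw => hs ⟨w, hw⟩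
  obtain ⟨T₁, f₁, n₁, r₁⟩ := exists_subspaces W.subtype K₁ (conv h₁)
  obtain ⟨T₂, f₂, n₂, r₂⟩ := exists_subspaces W.subtype K₂ (conv h₂)
  obtain ⟨T₃, f₃, n₃, r₃⟩ := exists_subspaces W.subtype K₃ (conv h₃)
  obtain ⟨v, hv⟩ := exists_notMem_finite (T₁ ∪ (T₂ ∪ T₃)) (f₁.union (f₂.union f₃)) (by
    rintro p (hp | hp | hp)
    exacts [n₁ p hp, n₂ p hp, n₃ p hp])
  exact ⟨v, v.2, r₁ v fun p hp => hv p (Or.inl hp), r₂ v fun p hp => hv p (Or.inr (Or.inl hp)),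
    r₃ v fun p hp => hv p (Or.inr (Or.inr hp))⟩

/-- Exchange theorem: all maximal regular sequences have the same length. -/
theorem G.exchange {W : Submodule k S} : ∀ (r : ℕ) {K : Ideal S} {f : S}, G W (r + 1) K →
    f ∈ W → Reg K f → G W r (K ⊔ Ideal.span {f})
  | 0, _, _, _, _, _ => trivial
  | r + 1, K, f, ⟨a, haW, ha, hG⟩, hfW, hf => by
    have hsa : SF W (K ⊔ Ideal.span {a}) := hG.sf
    have hsf := SF.exchange haW ha hf hsa
    obtain ⟨c, hcW, c1, c2, c3⟩ := exists_reg3 (SF.of_reg haW ha) hsa hsf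
    have e1 := G.exchange r hG hcW c2
    rw [sup_right_comm] at e1
    have e2 : G W (r + 1) (K ⊔ Ideal.span {c}) := ⟨a, haW, ha.swap c2, e1⟩
    have e3 := G.exchange r e2 hfW (hf.swap c3)
    rw [sup_right_comm] at e3
    exact ⟨c, hcW, c3, e3⟩

theorem G.conv {W W' : Submodule k S} (hW : W ≤ W') : ∀ (r : ℕ) (K₀ : Ideal S)
    (_ : ∀ K, K₀ ≤ K → SF W' K → SF W K), G W' r K₀ → G W r K₀
  | 0, _, _, _ => trivial
  | r + 1, K₀, h, hG => by
    have h1 := h K₀ le_rfl hG.sf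
    obtain ⟨c, hc, hr, -, -⟩ := exists_reg3 h1 h1 h1
    exact ⟨c, hc, hr, G.conv hW r _ (fun K hK => h K (le_sup_left.trans hK))
      (G.exchange r hG (hW hc) hr)⟩

end Depth
end CritDeg


namespace CritDeg

section Graded
variable {k : Type*} [Field k] {σ : Type*}

/-- Homogeneous ideals, elementwise. -/
def HomI (I : Ideal (MvPolynomial σ k)) : Prop :=
  ∀ s ∈ I, ∀ d, homogeneousComponent d s ∈ I

theorem comp_mul {a : MvPolynomial σ k} {e : ℕ} (ha : a.IsHomogeneous e)
    (t : MvPolynomial σ k) (d : ℕ) :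
    homogeneousComponent (e + d) (a * t) = a * homogeneousComponent d t := by
  let _ := MvPolynomial.gradedAlgebra (σ := σ) (R := k)
  have := DirectSum.coe_decompose_mul_add_of_left_mem (homogeneousSubmodule σ k) (i := e) (j := d)
    (a := a) (b := t) ha
  exact (decomposition.decompose'_apply (a * t) (e + d)).symm.trans
    (this.trans (congrArg (a * ·) (decomposition.decompose'_apply t d)))

theorem comp_mul_lt {a : MvPolynomial σ k} {e : ℕ} (ha : a.IsHomogeneous e)
    (t : MvPolynomial σ k) {d : ℕ} (hd : d < e) :
    homogeneousComponent d (a * t) = 0 := by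
  let _ := MvPolynomial.gradedAlgebra (σ := σ) (R := k)
  have := DirectSum.coe_decompose_mul_of_left_mem_of_not_le (homogeneousSubmodule σ k) (i := e)
    (n := d) (a := a) (b := t) ha (by omega)
  exact (decomposition.decompose'_apply (a * t) d).symm.trans this

theorem HomI.sup_span {I : Ideal (MvPolynomial σ k)} (hI : HomI I) {a : MvPolynomial σ k} {e : ℕ}
    (ha : a.IsHomogeneous e) : HomI (I ⊔ Ideal.span {a}) := by
  intro s hs d
  obtain ⟨x, hx, t, rfl⟩ := mem_sup_span.1 hs
  rw [map_add]
  rcases lt_or_ge d e with h | h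
  · rw [comp_mul_lt ha t h, add_zero]
    exact Ideal.mem_sup_left (hI x hx d)
  · obtain ⟨d, rfl⟩ := Nat.exists_eq_add_of_le h
    rw [comp_mul ha]
    exact mem_sup_span.2 ⟨_, hI x hx _, _, rfl⟩

theorem HomI.bot : HomI (⊥ : Ideal (MvPolynomial σ k)) := by
  intro s hs d
  rw [Ideal.mem_bot] at hs
  simp [hs]

theorem HomI.sup_span_range {r e : ℕ} {h : Fin r → MvPolynomial σ k}
    (hh : ∀ i, (h i).IsHomogeneous e) {I : Ideal (MvPolynomial σ k)} (hI : HomI I) :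
    HomI (I ⊔ Ideal.span (Set.range h)) := by
  induction r with
  | zero => simpa using hI
  | succ r ih =>
    have := (ih (h := fun i => h i.succ) (fun i => hh _)).sup_span (hh 0)
    rw [← Fin.cons_self_tail h, Fin.range_cons, Ideal.span_insert, sup_left_comm, sup_comm]
    exact this

/-- Degree `d` part of an ideal. -/
noncomputable def gr (I : Ideal (MvPolynomial σ k)) (d : ℕ) : Submodule k (MvPolynomial σ k) :=
  I.restrictScalars k ⊓ homogeneousSubmodule σ k d

theorem mem_gr {I : Ideal (MvPolynomial σ k)} {d : ℕ} {s : MvPolynomial σ k} :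
    s ∈ gr I d ↔ s ∈ I ∧ s.IsHomogeneous d := Iff.rfl

theorem gr_le {I : Ideal (MvPolynomial σ k)} {d : ℕ} : gr I d ≤ homogeneousSubmodule σ k d :=
  inf_le_right

theorem HomI.mem_of_pow {I : Ideal (MvPolynomial σ k)} (hI : HomI I) {s : MvPolynomial σ k}
    (h : ∀ d, s ∈ I ⊔ idealOfVars σ k ^ d) : s ∈ I := by
  rw [← sum_homogeneousComponent s]
  refine I.sum_mem fun d _ => ?_
  obtain ⟨x, hx, y, hy, rfl⟩ := Submodule.mem_sup.1 (h (d + 1))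
  rw [map_add]
  have : homogeneousComponent d y = 0 := by
    apply homogeneousComponent_eq_zero'
    intro c hc
    have := (mem_pow_idealOfVars_iff (d + 1) y).1 hy c hc
    omega
  rw [this, add_zero]
  exact hI x hx d

theorem mem_pow_of_hom {s : MvPolynomial σ k} {d : ℕ} (hs : s.IsHomogeneous d) :
    s ∈ idealOfVars σ k ^ d := by
  rw [mem_pow_idealOfVars_iff]
  intro c hc
  have := hs (mem_support_iff.1 hc)
  rw [← this, Finsupp.degree_eq_weight_one]
  exact le_rfl

theorem pow_le_of_hom {I : Ideal (MvPolynomial σ k)} {D : ℕ}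
    (h : ∀ s : MvPolynomial σ k, s.IsHomogeneous D → s ∈ I) :
    idealOfVars σ k ^ D ≤ I := by
  rw [pow_idealOfVars_eq_span, Ideal.span_le]
  rintro _ ⟨c, hc, rfl⟩
  exact h _ (isHomogeneous_monomial _ hc)

variable [Finite σ]

instance gr_fin (I : Ideal (MvPolynomial σ k)) (d : ℕ) : FiniteDimensional k (gr I d) := by
  have : FiniteDimensional k (homogeneousSubmodule σ k d) :=
    Module.Finite.iff_fg.2 (homogeneousSubmodule_fg ..)
  exact Submodule.finiteDimensional_of_le gr_le

instance hs_fin (d : ℕ) : FiniteDimensional k (homogeneousSubmodule σ k d) :=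
    Module.Finite.iff_fg.2 (homogeneousSubmodule_fg ..)

/-- Hilbert function of `S/I`. -/
noncomputable def hf (I : Ideal (MvPolynomial σ k)) (d : ℕ) : ℤ :=
  Module.finrank k (homogeneousSubmodule σ k d) - Module.finrank k (gr I d)

theorem hf_mono {I J : Ideal (MvPolynomial σ k)} (h : I ≤ J) (d : ℕ) : hf J d ≤ hf I d := by
  have : gr I d ≤ gr J d := fun s hs => ⟨h hs.1, hs.2⟩
  have := Submodule.finrank_mono this
  unfold hf; omega

theorem hf_nonneg (I : Ideal (MvPolynomial σ k)) (d : ℕ) : 0 ≤ hf I d := by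
  have := Submodule.finrank_mono (gr_le (I := I) (d := d))
  unfold hf; omega

theorem hf_eq_finrank (I : Ideal (MvPolynomial σ k)) (d : ℕ) :
    (Module.finrank k (↥(homogeneousSubmodule σ k d) ⧸
            Submodule.comap (homogeneousSubmodule σ k d).subtype
              (Submodule.restrictScalars k I ⊓ homogeneousSubmodule σ k d)) : ℤ) = hf I d := by
  have h1 := Submodule.finrank_quotient_add_finrank
    (Submodule.comap (homogeneousSubmodule σ k d).subtype
              (Submodule.restrictScalars k I ⊓ homogeneousSubmodule σ k d))
  have h2 : Module.finrank k (Submodule.comap (homogeneousSubmodule σ k d).subtype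
              (Submodule.restrictScalars k I ⊓ homogeneousSubmodule σ k d)) =
      Module.finrank k (gr I d) :=
    (Submodule.comapSubtypeEquivOfLe (gr_le (I := I) (d := d))).finrank_eq
  unfold hf
  omega

theorem hf_top (d : ℕ) : hf (⊤ : Ideal (MvPolynomial σ k)) d = 0 := by
  have : gr (⊤ : Ideal (MvPolynomial σ k)) d = homogeneousSubmodule σ k d := by
    ext s; simp [gr]
  rw [hf, this, sub_self]

theorem gr_sup_span {I : Ideal (MvPolynomial σ k)} (hI : HomI I) {a : MvPolynomial σ k} {e : ℕ}
    (ha : a.IsHomogeneous e) (d : ℕ) :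
    gr (I ⊔ Ideal.span {a}) (e + d) =
      gr I (e + d) ⊔ (homogeneousSubmodule σ k d).map (LinearMap.mulLeft k a) := by
  apply le_antisymm
  · rintro s ⟨hs, hd⟩
    obtain ⟨x, hx, t, hst⟩ := mem_sup_span.1 hs
    rw [Submodule.mem_sup]
    refine ⟨homogeneousComponent (e + d) x, ⟨hI x hx _, homogeneousComponent_isHomogeneous _ _⟩,
      a * homogeneousComponent d t, ⟨_, homogeneousComponent_isHomogeneous _ _, rfl⟩, ?_⟩
    rw [← comp_mul ha, ← map_add, ← hst]
    exact homogeneousComponent_eq_self hd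
  · refine sup_le (fun s hs => ⟨Ideal.mem_sup_left hs.1, hs.2⟩) ?_
    rintro _ ⟨t, ht, rfl⟩
    exact ⟨Ideal.mem_sup_right (Ideal.mem_span_singleton.2 ⟨t, rfl⟩), ha.mul ht⟩

theorem hf_reg_ge {I : Ideal (MvPolynomial σ k)} (hI : HomI I) {a : MvPolynomial σ k} {e : ℕ}
    (ha : a.IsHomogeneous e) (d : ℕ) (hr : ∀ s : MvPolynomial σ k, s.IsHomogeneous d →
      a * s ∈ I → s ∈ I) :
    hf (I ⊔ Ideal.span {a}) (e + d) = hf I (e + d) - hf I d := by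
  by_cases ha0 : a = 0
  · subst ha0
    have : gr I d = homogeneousSubmodule σ k d := by
      apply le_antisymm gr_le
      intro s hs
      exact ⟨hr s hs (by simp), hs⟩
    have h2 : hf I d = 0 := by rw [hf, this, sub_self]
    simp [h2]
  have hinj : Function.Injective (LinearMap.mulLeft k a) := fun x y h => mul_left_cancel₀ ha0 h
  have h1 : gr I (e + d) ⊓ (homogeneousSubmodule σ k d).map (LinearMap.mulLeft k a) =
      (gr I d).map (LinearMap.mulLeft k a) := by
    apply le_antisymm
    · rintro _ ⟨h1, ⟨t, ht, rfl⟩⟩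
      exact ⟨t, ⟨hr t ht h1.1, ht⟩, rfl⟩
    · rintro _ ⟨t, ht, rfl⟩
      exact ⟨⟨I.mul_mem_left _ ht.1, ha.mul ht.2⟩, ⟨t, ht.2, rfl⟩⟩
  have h2 := Submodule.finrank_sup_add_finrank_inf_eq (gr I (e + d))
    ((homogeneousSubmodule σ k d).map (LinearMap.mulLeft k a))
  rw [h1, ← gr_sup_span hI ha,
    ← (Submodule.equivMapOfInjective _ hinj (gr I d)).finrank_eq,
    ← (Submodule.equivMapOfInjective _ hinj (homogeneousSubmodule σ k d)).finrank_eq] at h2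
  unfold hf
  omega

theorem hf_reg {I : Ideal (MvPolynomial σ k)} (hI : HomI I) {a : MvPolynomial σ k} {e : ℕ}
    (ha : a.IsHomogeneous e) (hr : Reg I a) (d : ℕ) :
    hf (I ⊔ Ideal.span {a}) (e + d) = hf I (e + d) - hf I d :=
  hf_reg_ge hI ha d fun s _ h => hr s h

/-- Artin–Rees: an ideal which is finite length modulo `I` agrees with `I` in high degree. -/
theorem artin {I J : Ideal (MvPolynomial σ k)} {N : ℕ} (h : idealOfVars σ k ^ N * J ≤ I) :
    ∃ D, ∀ d ≥ D, ∀ s : MvPolynomial σ k, s.IsHomogeneous d → s ∈ J → s ∈ I := by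
  obtain ⟨c, hc⟩ := Ideal.exists_pow_inf_eq_pow_smul (idealOfVars σ k) J
  refine ⟨c + N, fun d hd s hs hJ => ?_⟩
  have h1 : s ∈ idealOfVars σ k ^ d • ⊤ ⊓ J := ⟨by simpa using mem_pow_of_hom hs, hJ⟩
  rw [hc d (by omega)] at h1
  apply h
  have h2 : s ∈ idealOfVars σ k ^ (d - c) * J := by
    rw [← smul_eq_mul]
    exact Submodule.smul_mono le_rfl inf_le_right h1
  exact Ideal.mul_mono_left (Ideal.pow_le_pow_right (by omega)) h2

/-- The key additivity. -/
theorem hf_add {B : Ideal (MvPolynomial σ k)} (hB : HomI B) {y h : MvPolynomial σ k} {e e' : ℕ}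
    (hy : y.IsHomogeneous e') (hh : h.IsHomogeneous e) (hyh : y * h ∈ B) {N : ℕ}
    (hN : idealOfVars σ k ^ N ≤ B ⊔ Ideal.span {h} ⊔ Ideal.span {y}) :
    ∃ D, ∀ d ≥ D, hf (B ⊔ Ideal.span {h}) d + hf (B ⊔ Ideal.span {y}) d = hf B d := by
  obtain ⟨D, hD⟩ := artin (I := B) (J := (B ⊔ Ideal.span {h}) ⊓ (B ⊔ Ideal.span {y})) (N := N) (by
    refine (Ideal.mul_mono_left hN).trans ?_
    rw [Ideal.mul_le]
    rintro r hr s ⟨hs1, hs2⟩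
    obtain ⟨r', hr', u, rfl⟩ := mem_sup_span.1 hr
    obtain ⟨b, hb, v, rfl⟩ := mem_sup_span.1 hr'
    obtain ⟨b1, hb1, v1, e1⟩ := mem_sup_span.1 hs1
    obtain ⟨b2, hb2, v2, e2⟩ := mem_sup_span.1 hs2
    have : (b + h * v + y * u) * s = b * s + (h * v) * b2 + (v * v2) * (y * h) + (y * u) * b1
      + (u * v1) * (y * h) := by
      linear_combination h * v * e2 + y * u * e1
    rw [this]
    exact B.add_mem (B.add_mem (B.add_mem (B.add_mem (B.mul_mem_right _ hb) (B.mul_mem_left _ hb2))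
      (B.mul_mem_left _ hyh)) (B.mul_mem_left _ hb1)) (B.mul_mem_left _ hyh))
  refine ⟨max D (max N (e + e')), fun d hd => ?_⟩
  have hd1 : D ≤ d := (le_max_left _ _).trans hd
  have hd2 : N ≤ d := (le_max_left _ _).trans ((le_max_right _ _).trans hd)
  have hd3 : e + e' ≤ d := (le_max_right _ _).trans ((le_max_right _ _).trans hd)
  have hinf : gr (B ⊔ Ideal.span {h}) d ⊓ gr (B ⊔ Ideal.span {y}) d = gr B d := by
    apply le_antisymm
    · rintro s ⟨h1, h2⟩
      exact ⟨hD d hd1 s h1.2 ⟨h1.1, h2.1⟩, h1.2⟩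
    · exact fun s hs => ⟨⟨Ideal.mem_sup_left hs.1, hs.2⟩, ⟨Ideal.mem_sup_left hs.1, hs.2⟩⟩
  have hsup : gr (B ⊔ Ideal.span {h}) d ⊔ gr (B ⊔ Ideal.span {y}) d =
      homogeneousSubmodule σ k d := by
    apply le_antisymm (sup_le gr_le gr_le)
    intro s hs
    have h1 : s ∈ B ⊔ Ideal.span {h} ⊔ Ideal.span {y} :=
      hN (Ideal.pow_le_pow_right hd2 (mem_pow_of_hom hs))
    obtain ⟨c, rfl⟩ := Nat.exists_eq_add_of_le (show e' ≤ d by omega)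
    have h2 : s ∈ gr (B ⊔ Ideal.span {h} ⊔ Ideal.span {y}) (e' + c) := ⟨h1, hs⟩
    rw [gr_sup_span (hB.sup_span hh) hy] at h2
    have h3 : (homogeneousSubmodule σ k c).map (LinearMap.mulLeft k y) ≤
        gr (B ⊔ Ideal.span {y}) (e' + c) := by
      rw [gr_sup_span hB hy]
      exact le_sup_right
    exact (sup_le_sup (le_refl (gr (B ⊔ Ideal.span {h}) (e' + c))) h3) h2
  have := Submodule.finrank_sup_add_finrank_inf_eq (gr (B ⊔ Ideal.span {h}) d)
    (gr (B ⊔ Ideal.span {y}) d)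
  rw [hinf, hsup] at this
  unfold hf
  omega

/-- If `y` is a linear form, injective on `S/I` in high degrees, and the Hilbert function of `S/I`
is bounded, then `S/(I,y)` has finite length. -/
theorem finite_length {I J : Ideal (MvPolynomial σ k)} (hI : HomI I) {y : MvPolynomial σ k}
    (hy : y.IsHomogeneous 1) {N : ℕ} (hJ : idealOfVars σ k ^ N * J ≤ I)
    (hyJ : ∀ s, y * s ∈ I → s ∈ J) {c : ℤ} {D₀ : ℕ} (hb : ∀ d ≥ D₀, hf I d ≤ c) :
    ∃ N, idealOfVars σ k ^ N ≤ I ⊔ Ideal.span {y} := by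
  obtain ⟨D, hD⟩ := artin hJ
  have h1 : ∀ d ≥ D, hf (I ⊔ Ideal.span {y}) (1 + d) = hf I (1 + d) - hf I d := fun d hd =>
    hf_reg_ge hI hy d fun s hs h => hD d hd s hs (hyJ s h)
  -- some `hf (I, y)` vanishes
  have h2 : ∃ d ≥ D, hf (I ⊔ Ideal.span {y}) (1 + d) = 0 := by
    by_contra hcon
    push Not at hcon
    have h3 : ∀ j : ℕ, (j : ℤ) ≤ hf I (D + j) := by
      intro j
      induction j with
      | zero => exact_mod_cast hf_nonneg _ _
      | succ j ih =>
        have e1 := h1 (D + j) (by omega)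
        have e2 := hcon (D + j) (by omega)
        have e3 := hf_nonneg (I ⊔ Ideal.span {y}) (1 + (D + j))
        rw [show D + (j + 1) = 1 + (D + j) by ring]
        push_cast
        omega
    have e4 := h3 (D₀ + c.toNat + 1)
    have e5 := hb (D + (D₀ + c.toNat + 1)) (by omega)
    push_cast at e4
    omega
  obtain ⟨d, -, hd⟩ := h2
  refine ⟨1 + d, pow_le_of_hom fun s hs => ?_⟩
  have h4 : gr (I ⊔ Ideal.span {y}) (1 + d) = homogeneousSubmodule σ k (1 + d) := by
    apply Submodule.eq_of_le_of_finrank_eq gr_le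
    unfold hf at hd
    omega
  have h5 : s ∈ gr (I ⊔ Ideal.span {y}) (1 + d) := by rw [h4]; exact hs
  exact h5.1

/-- Depth descends from `S/(K,F)` to `S/K`. -/
theorem G.descend [Infinite k] {W : Submodule k (MvPolynomial σ k)} {e : ℕ}
    (hW : ∀ w ∈ W, w.IsHomogeneous e) {F : MvPolynomial σ k} (hF : F ∈ idealOfVars σ k) :
    ∀ (r : ℕ) {K : Ideal (MvPolynomial σ k)}, HomI K → Reg K F → G W r (K ⊔ Ideal.span {F}) →
      G W r K
  | 0, _, _, _, _ => trivial
  | r + 1, K, hK, hKF, hG => by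
    have h1 : ∀ d, ∀ s, (∀ w ∈ W, w * s ∈ K) → s ∈ K ⊔ idealOfVars σ k ^ d := by
      intro d
      induction d with
      | zero => intro s _; simp
      | succ d ih =>
        intro s hs
        obtain ⟨x, hx, t, rfl⟩ := mem_sup_span.1 (hG.sf s fun w hw => Ideal.mem_sup_left (hs w hw))
        have ht : t ∈ K ⊔ idealOfVars σ k ^ d := by
          apply ih
          intro w hw
          apply hKF
          have := K.sub_mem (hs w hw) (K.mul_mem_left w hx)
          convert this using 1
          ring
        obtain ⟨u, hu, v, hv, rfl⟩ := Submodule.mem_sup.1 ht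
        refine Submodule.mem_sup.2 ⟨x + F * u, K.add_mem hx (K.mul_mem_left _ hu), F * v, ?_, by ring⟩
        rw [pow_succ']
        exact Ideal.mul_mem_mul hF hv
    have h2 : SF W K := fun s hs => hK.mem_of_pow fun d => h1 d s hs
    obtain ⟨c, hc, c1, c2, -⟩ := exists_reg3 h2 hG.sf hG.sf
    have h3 := G.exchange r hG hc c2
    rw [sup_right_comm] at h3
    exact ⟨c, hc, c1, G.descend hW hF r (hK.sup_span (hW c hc)) (hKF.swap c2) h3⟩

end Graded
end CritDeg


namespace CritDeg

section Poly

/-- `u` is eventually polynomial of degree `r` with leading coefficient `c / r!`. -/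
def T : ℕ → ℤ → (ℕ → ℤ) → Prop
  | 0, c, u => ∃ D, ∀ d ≥ D, u d = c
  | r + 1, c, u => T r c (fun d => u (1 + d) - u d)

theorem T.shift {j : ℕ} : ∀ {r : ℕ} {c : ℤ} {u : ℕ → ℤ}, T r c u → T r c (fun d => u (j + d))
  | 0, _, _, ⟨D, hD⟩ => ⟨D, fun d hd => hD _ (by omega)⟩
  | r + 1, c, u, h => by
    have := T.shift (j := j) (r := r) h
    simpa only [T, ← add_assoc, add_comm 1 j] using this

theorem T.unshift {j : ℕ} : ∀ {r : ℕ} {c : ℤ} {u : ℕ → ℤ}, T r c (fun d => u (j + d)) → T r c u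
  | 0, _, u, ⟨D, hD⟩ => ⟨D + j, fun d hd => by
      have := hD (d - j) (by omega)
      simp only at this
      rwa [show j + (d - j) = d by omega] at this⟩
  | r + 1, c, u, h => by
    apply T.unshift (j := j) (r := r)
    simpa only [T, ← add_assoc, add_comm 1 j] using h

theorem T.add : ∀ {r : ℕ} {c c' : ℤ} {u v : ℕ → ℤ}, T r c u → T r c' v →
    T r (c + c') (fun d => u d + v d)
  | 0, _, _, _, _, ⟨D, hD⟩, ⟨D', hD'⟩ => ⟨D + D', fun d hd => by
      simp only [hD d (by omega), hD' d (by omega)]⟩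
  | r + 1, c, c', u, v, h, h' => by
    have := T.add (r := r) h h'
    simp only [T]
    convert this using 2
    ring

theorem T.zero : ∀ {r : ℕ}, T r 0 (fun _ => 0)
  | 0 => ⟨0, fun _ _ => rfl⟩
  | r + 1 => by simpa only [T, sub_self] using T.zero (r := r)

theorem T.diff {r : ℕ} {c : ℤ} {u : ℕ → ℤ} (h : T (r + 1) c u) (e : ℕ) :
    T r (e * c) (fun d => u (e + d) - u d) := by
  induction e with
  | zero => simpa using T.zero (r := r)
  | succ e ih =>
    have h1 : T r c (fun d => u (1 + (e + d)) - u (e + d)) := T.shift (j := e) (r := r) h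
    have := h1.add ih
    convert this using 2
    · push_cast; ring
    · rw [show ∀ d, e + 1 + d = 1 + (e + d) by intro d; ring]; ring

end Poly

section RegSeq
variable {k : Type*} [Field k] {S : Type*} [CommRing S] [Algebra k S]

/-- regular sequences -/
def RS : ∀ {j : ℕ}, Ideal S → (Fin j → S) → Prop
  | 0, _, _ => True
  | _ + 1, K, a => Reg K (a 0) ∧ RS (K ⊔ Ideal.span {a 0}) (Fin.tail a)

theorem RS.g {W : Submodule k S} : ∀ {j : ℕ} {K : Ideal S} {a : Fin j → S}, RS K a →
    (∀ i, a i ∈ W) → G W j K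
  | 0, _, _, _, _ => trivial
  | _ + 1, _, a, h, hW => ⟨a 0, hW 0, h.1, RS.g h.2 fun i => hW i.succ⟩

theorem span_cons {j : ℕ} (a : Fin (j + 1) → S) :
    Ideal.span (Set.range a) = Ideal.span {a 0} ⊔ Ideal.span (Set.range (Fin.tail a)) := by
  conv_lhs => rw [← Fin.cons_self_tail a, Fin.range_cons, Ideal.span_insert]

theorem RS.t {σ : Type*} [Finite σ] {e s : ℕ} {c : ℤ} : ∀ {j : ℕ} {K : Ideal (MvPolynomial σ k)}
    {a : Fin j → MvPolynomial σ k}, RS K a → HomI K → (∀ i, (a i).IsHomogeneous e) → 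
    T (s + j) c (hf K) → T s (e ^ j * c) (hf (K ⊔ Ideal.span (Set.range a)))
  | 0, K, a, _, _, _, h => by simpa using h
  | j + 1, K, a, h, hK, ha, hT => by
    have h1 : T (s + j) (e * c) (hf (K ⊔ Ideal.span {a 0})) := by
      have := T.diff (r := s + j) hT e
      simp only [← hf_reg hK (ha 0) h.1] at this
      exact T.unshift this
    have h2 := RS.t h.2 (hK.sup_span (ha 0)) (fun i => ha i.succ) h1
    rw [span_cons, ← sup_assoc, pow_succ, mul_assoc]
    exact h2

theorem fr_single {V : Type*} [AddCommGroup V] [Module k V] (v : V) :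
    Module.finrank k (Submodule.span k {v}) ≤ 1 :=
  (finrank_span_le_card ({v} : Set V)).trans (by simp)

/-- Choosing generic combinations. -/
theorem select [Infinite k] [IsNoetherianRing S] {r : ℕ} {V : Type*} [AddCommGroup V] [Module k V]
    [FiniteDimensional k V] (hV : Module.finrank k V = r + 1) (H : V →ₗ[k] S) (Q : Set V)
    (hQ : Q.Finite) :
    ∀ (j : ℕ) (K : Ideal S) (C : Submodule k V), Module.finrank k C + j = r → (∀ v ∈ Q, v ∉ C) →
      G (LinearMap.range H) j K → ∃ b : Fin j → V,
        Module.finrank k ↥(C ⊔ Submodule.span k (Set.range b)) = r ∧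
        (∀ v ∈ Q, v ∉ C ⊔ Submodule.span k (Set.range b)) ∧ RS K (fun i => H (b i))
  | 0, K, C, hC, hv, _ => ⟨Fin.elim0, by
      rw [Set.range_eq_empty, Submodule.span_empty, sup_bot_eq]; exact hC,
      by rw [Set.range_eq_empty]; simpa using hv, trivial⟩
  | j + 1, K, C, hC, hv, hG => by
    obtain ⟨T, fT, pT, rT⟩ := exists_subspaces H K (fun s hs => hG.sf s (by
      rintro _ ⟨v, rfl⟩; exact hs v))
    obtain ⟨b0, hb0⟩ := exists_notMem_finite
      (insert C (T ∪ (fun v => C ⊔ Submodule.span k {v}) '' Q))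
      ((fT.union (hQ.image _)).insert _) (by
        have key : ∀ p : Submodule k V, Module.finrank k p ≤ r → p ≠ ⊤ := by
          rintro p hp rfl
          rw [finrank_top] at hp; omega
        rintro p (rfl | hp | ⟨v, hv, rfl⟩)
        · exact key _ (by omega)
        · exact pT p hp
        · apply key
          show Module.finrank k ↥(C ⊔ Submodule.span k {v}) ≤ r
          have h1 := Submodule.finrank_add_le_finrank_add_finrank C (Submodule.span k {v})
          have h2 := fr_single (k := k) v
          omega)
    have hbC : b0 ∉ C := hb0 _ (Set.mem_insert _ _)
    have hreg := rT b0 fun p hp => hb0 p (Or.inr (Or.inl hp))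
    have hvC : ∀ v ∈ Q, v ∉ C ⊔ Submodule.span k {b0} := by
      intro v hvQ hmem
      obtain ⟨x, hx, y, hy, hxy⟩ := Submodule.mem_sup.1 hmem
      obtain ⟨t, rfl⟩ := Submodule.mem_span_singleton.1 hy
      by_cases ht : t = 0
      · subst ht
        apply hv v hvQ
        rw [← hxy]; simpa using hx
      · apply hb0 (C ⊔ Submodule.span k {v}) (Or.inr (Or.inr ⟨v, hvQ, rfl⟩))
        have : b0 = -(t⁻¹ • x) + t⁻¹ • v := by
          rw [← hxy, smul_add, smul_smul, inv_mul_cancel₀ ht, one_smul]; abel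
        rw [this]
        exact Submodule.add_mem_sup (C.neg_mem (C.smul_mem _ hx))
          (Submodule.smul_mem _ _ (Submodule.mem_span_singleton_self v))
    have hrank : Module.finrank k ↥(C ⊔ Submodule.span k {b0}) = Module.finrank k C + 1 := by
      have h1 := Submodule.finrank_add_le_finrank_add_finrank C (Submodule.span k {b0})
      have h2 := fr_single (k := k) b0
      have h3 : C < C ⊔ Submodule.span k {b0} := by
        refine lt_of_le_of_ne le_sup_left fun h => hbC ?_
        rw [h]; exact Submodule.mem_sup_right (Submodule.mem_span_singleton_self b0)
      have h4 := Submodule.finrank_lt_finrank_of_lt h3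
      omega
    obtain ⟨b, hb1, hb2, hb3⟩ := select hV H Q hQ j (K ⊔ Ideal.span {H b0})
      (C ⊔ Submodule.span k {b0}) (by omega) hvC (G.exchange j hG ⟨b0, rfl⟩ hreg)
    have e1 : C ⊔ Submodule.span k (Set.range (Fin.cons b0 b : Fin (j + 1) → V)) =
        C ⊔ Submodule.span k {b0} ⊔ Submodule.span k (Set.range b) := by
      rw [Fin.range_cons, Submodule.span_insert, sup_assoc]
    refine ⟨Fin.cons b0 b, ?_, ?_, ?_, ?_⟩
    · rw [e1]; exact hb1
    · rw [e1]; exact hb2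
    · exact hreg
    · exact hb3

end RegSeq

section Linear
variable {k : Type*} [Field k] {σ : Type*} [Fintype σ]

/-- Linear form with given coefficients. -/
noncomputable def L : (σ → k) →ₗ[k] MvPolynomial σ k :=
  Fintype.linearCombination k (fun i => X i)

theorem L_apply (c : σ → k) : L c = ∑ i, C (c i) * X i := by
  simp [L, Fintype.linearCombination_apply, smul_eq_C_mul]

theorem L_hom (c : σ → k) : (L c).IsHomogeneous 1 := by
  rw [L_apply]
  exact IsHomogeneous.sum _ _ _ fun i _ => by
    simpa using (isHomogeneous_C σ (c i)).mul (isHomogeneous_X k i)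

theorem L_single [DecidableEq σ] (i : σ) : L (Pi.single i (1 : k)) = X i := by
  simp [L]

/-- Ideal of a linear subspace. -/
noncomputable def Kof (C : Submodule k (σ → k)) : Ideal (MvPolynomial σ k) :=
  Ideal.span (L '' (C : Set (σ → k)))

theorem L_mem {C : Submodule k (σ → k)} {c : σ → k} (h : c ∈ C) : L c ∈ Kof C :=
  Ideal.subset_span ⟨c, h, rfl⟩

theorem Kof_sup (C : Submodule k (σ → k)) (c : σ → k) :
    Kof (C ⊔ Submodule.span k {c}) = Kof C ⊔ Ideal.span {L c} := by
  apply le_antisymm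
  · rw [Kof, Ideal.span_le]
    rintro _ ⟨v, hv, rfl⟩
    obtain ⟨x, hx, y, hy, rfl⟩ := Submodule.mem_sup.1 hv
    obtain ⟨t, rfl⟩ := Submodule.mem_span_singleton.1 hy
    rw [map_add, map_smul, smul_eq_C_mul]
    exact mem_sup_span.2 ⟨_, L_mem hx, MvPolynomial.C t, by ring⟩
  · refine sup_le (Ideal.span_mono (Set.image_mono ?_)) ?_
    · exact fun x hx => Submodule.mem_sup_left hx
    · rw [Ideal.span_le, Set.singleton_subset_iff]
      exact L_mem (Submodule.mem_sup_right (Submodule.mem_span_singleton_self c))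

theorem Kof_top : Kof (⊤ : Submodule k (σ → k)) = idealOfVars σ k := by
  classical
  apply le_antisymm
  · rw [Kof, Ideal.span_le]
    rintro _ ⟨v, hv, rfl⟩
    simpa using mem_pow_of_hom (L_hom v)
  · rw [idealOfVars, Ideal.span_le]
    rintro _ ⟨i, rfl⟩
    rw [← L_single]
    exact L_mem trivial

theorem Kof_bot : Kof (⊥ : Submodule k (σ → k)) = ⊥ := by
  simp [Kof]

theorem Kof_hom (C : Submodule k (σ → k)) : HomI (Kof C) := by
  let _ := MvPolynomial.gradedAlgebra (σ := σ) (R := k)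
  have h : (Kof C).IsHomogeneous (homogeneousSubmodule σ k) := by
    apply Ideal.homogeneous_span
    rintro _ ⟨c, -, rfl⟩
    exact ⟨1, L_hom c⟩
  exact fun s hs d => homogeneousComponent_mem_of_mem h hs d

theorem Kof_reg {C : Submodule k (σ → k)} {c : σ → k} (hc : c ∉ C) : Reg (Kof C) (L c) := by
  classical
  let B := Module.finBasis k ((σ → k) ⧸ C)
  let ι := Fin (Module.finrank k ((σ → k) ⧸ C))
  let lin : ((σ → k) ⧸ C) →ₗ[k] MvPolynomial ι k := L ∘ₗ B.equivFun.toLinearMap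
  let φ : MvPolynomial σ k →ₐ[k] MvPolynomial ι k :=
    aeval fun i => lin (C.mkQ (Pi.single i 1))
  have hφ : ∀ v : σ → k, φ (L v) = lin (C.mkQ v) := by
    have : φ.toLinearMap ∘ₗ L = lin ∘ₗ C.mkQ := by
      apply LinearMap.pi_ext'
      intro i
      ext
      simp [φ, L_single]
    exact fun v => LinearMap.congr_fun this v
  let w : ι → (σ → k) := fun j => Function.surjInv C.mkQ_surjective (B j)
  have hw : ∀ j, C.mkQ (w j) = B j := fun j => Function.surjInv_eq C.mkQ_surjective (B j)
  let ψ : MvPolynomial ι k →ₐ[k] MvPolynomial σ k := aeval fun j => L (w j)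
  have hψ : ∀ x : ι → k, ψ (L x) = L (∑ j, x j • w j) := by
    intro x
    simp [L_apply (k := k) (σ := ι), ψ, map_sum, smul_eq_C_mul]
  have hψφ : ∀ s, Ideal.Quotient.mk (Kof C) (ψ (φ s)) = Ideal.Quotient.mk (Kof C) s := by
    have : ((Ideal.Quotient.mkₐ k (Kof C)).comp ψ).comp φ = Ideal.Quotient.mkₐ k (Kof C) := by
      apply MvPolynomial.algHom_ext
      intro i
      have h1 : φ (X i) = L (B.equivFun (C.mkQ (Pi.single i 1))) := by
        rw [← L_single, hφ]; rfl
      simp only [AlgHom.comp_apply, h1, hψ]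
      rw [Ideal.Quotient.mkₐ_eq_mk, Ideal.Quotient.eq, ← L_single, ← map_sub]
      apply L_mem
      rw [← Submodule.Quotient.mk_eq_zero, ← Submodule.mkQ_apply, map_sub, map_sum]
      simp only [map_smul, hw]
      rw [B.sum_equivFun, sub_self]
    exact fun s => DFunLike.congr_fun this s
  have hker : ∀ s, φ s = 0 → s ∈ Kof C := by
    intro s hs
    have := hψφ s
    rw [hs, map_zero, map_zero] at this
    exact Ideal.Quotient.eq_zero_iff_mem.1 this.symm
  have hker' : ∀ s ∈ Kof C, φ s = 0 := by
    intro s hs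
    have : Kof C ≤ RingHom.ker φ := by
      rw [Kof, Ideal.span_le]
      rintro _ ⟨v, hv, rfl⟩
      have hv0 : C.mkQ v = 0 := by simpa using hv
      simp [RingHom.mem_ker, hφ, hv0]
    exact this hs
  have hLinj : ∀ x : ι → k, L x = 0 → x = 0 := by
    intro x hx
    funext j
    have := congrArg (coeff (Finsupp.single j 1)) hx
    rw [L_apply, coeff_sum] at this
    rw [Finset.sum_eq_single j] at this
    · simpa using this
    · intro b _ hb
      simp [coeff_C_mul, coeff_X, Finsupp.single_left_inj, hb]
    · simp
  intro s hs
  have h1 := hker' _ hs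
  rw [map_mul, hφ] at h1
  rcases mul_eq_zero.1 h1 with h | h
  · exfalso
    apply hc
    have h2 := hLinj _ h
    rw [← Submodule.Quotient.mk_eq_zero]
    simpa using h2
  · exact hker s h

theorem finrank_sup_singleton {V : Type*} [AddCommGroup V] [Module k V] [FiniteDimensional k V]
    {C : Submodule k V} {b0 : V} (hbC : b0 ∉ C) :
    Module.finrank k ↥(C ⊔ Submodule.span k {b0}) = Module.finrank k C + 1 := by
  have h1 := Submodule.finrank_add_le_finrank_add_finrank C (Submodule.span k {b0})
  have h2 := fr_single (k := k) b0
  have h3 : C < C ⊔ Submodule.span k {b0} := by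
    refine lt_of_le_of_ne le_sup_left fun h => hbC ?_
    rw [h]; exact Submodule.mem_sup_right (Submodule.mem_span_singleton_self b0)
  have h4 := Submodule.finrank_lt_finrank_of_lt h3
  omega

theorem exists_notMem_of_finrank {C : Submodule k (σ → k)}
    (h : Module.finrank k C < Fintype.card σ) : ∃ c, c ∉ C := by
  by_contra hcon
  push Not at hcon
  have : C = ⊤ := by ext; simp [hcon]
  subst this
  rw [finrank_top, Module.finrank_fintype_fun_eq_card] at h
  omega

theorem hf_vars (d : ℕ) : hf (idealOfVars σ k) (1 + d) = 0 := by
  have : gr (idealOfVars σ k) (1 + d) = homogeneousSubmodule σ k (1 + d) := by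
    apply le_antisymm gr_le
    intro s hs
    refine ⟨?_, hs⟩
    have := Ideal.pow_le_pow_right (show 1 ≤ 1 + d by omega) (mem_pow_of_hom hs)
    simpa using this
  rw [hf, this, sub_self]

theorem hf_zero {I : Ideal (MvPolynomial σ k)} (hI : I ≤ idealOfVars σ k) : hf I 0 = 1 := by
  have h0 : gr I 0 = ⊥ := by
    rw [eq_bot_iff]
    rintro s ⟨h1, h2⟩
    have h3 : s ∈ idealOfVars σ k ^ 1 := by simpa using hI h1
    rw [mem_pow_idealOfVars_iff'] at h3
    have h4 := h3 0 (by simp)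
    have h5 := homogeneousComponent_eq_self h2
    rw [homogeneousComponent_zero, h4] at h5
    simpa using h5.symm
  have h1 : Module.finrank k (homogeneousSubmodule σ k 0) = 1 := by
    rw [homogeneousSubmodule_zero]
    have := finrank_span_singleton (K := k) (v := (1 : MvPolynomial σ k)) one_ne_zero
    rw [← Submodule.one_eq_span] at this
    exact this
  rw [hf, h0, h1]
  simp

theorem Kof_le (C : Submodule k (σ → k)) : Kof C ≤ idealOfVars σ k := by
  rw [← Kof_top]
  exact Ideal.span_mono (Set.image_mono fun _ _ => trivial)

theorem Kof_T : ∀ (r : ℕ) (C : Submodule k (σ → k)),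
    Module.finrank k C + (r + 1) = Fintype.card σ → T r 1 (hf (Kof C))
  | 0, C, h => by
    obtain ⟨c, hc⟩ := exists_notMem_of_finrank (C := C) (by omega)
    have h1 := finrank_sup_singleton hc
    have h2 : C ⊔ Submodule.span k {c} = ⊤ := by
      apply Submodule.eq_top_of_finrank_eq
      rw [Module.finrank_fintype_fun_eq_card]; omega
    have h3 : ∀ d, hf (Kof C) (1 + d) - hf (Kof C) d = 0 := by
      intro d
      rw [← hf_reg (Kof_hom C) (L_hom c) (Kof_reg hc), ← Kof_sup, h2, Kof_top, hf_vars]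
    refine ⟨0, fun d _ => ?_⟩
    induction d with
    | zero => exact hf_zero (Kof_le C)
    | succ d ih =>
      have := h3 d
      rw [add_comm]; have := ih (by omega); omega
  | r + 1, C, h => by
    obtain ⟨c, hc⟩ := exists_notMem_of_finrank (C := C) (by omega)
    have h1 := finrank_sup_singleton hc
    have h2 := (Kof_T r (C ⊔ Submodule.span k {c}) (by omega)).shift (j := 1)
    simp only [Kof_sup, hf_reg (Kof_hom C) (L_hom c) (Kof_reg hc)] at h2
    exact h2

theorem Kof_G {W : Submodule k (MvPolynomial σ k)} (hW : ∀ c, L c ∈ W) :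
    ∀ (r : ℕ) (C : Submodule k (σ → k)),
    Module.finrank k C + r = Fintype.card σ → G W r (Kof C)
  | 0, _, _ => trivial
  | r + 1, C, h => by
    obtain ⟨c, hc⟩ := exists_notMem_of_finrank (C := C) (by omega)
    have h1 := finrank_sup_singleton hc
    have h2 := Kof_G hW r (C ⊔ Submodule.span k {c}) (by omega)
    rw [Kof_sup] at h2
    exact ⟨L c, hW c, Kof_reg hc, h2⟩

/-- Saturation. -/
theorem exists_sat (I : Ideal (MvPolynomial σ k)) : ∃ (J : Ideal (MvPolynomial σ k)) (N : ℕ),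
    I ≤ J ∧ idealOfVars σ k ^ N * J ≤ I ∧ ∀ s, (∀ i, X i * s ∈ J) → s ∈ J := by
  obtain ⟨J, ⟨hIJ, N, hN⟩, hmax⟩ := set_has_maximal_iff_noetherian.2
    (inferInstanceAs (IsNoetherian (MvPolynomial σ k) (MvPolynomial σ k)))
    {J : Ideal (MvPolynomial σ k) | I ≤ J ∧ ∃ N, idealOfVars σ k ^ N * J ≤ I}
    ⟨I, le_rfl, 0, by simp⟩
  refine ⟨J, N, hIJ, hN, fun s hs => ?_⟩
  by_contra hsJ
  apply hmax (J ⊔ Ideal.span {s}) ⟨hIJ.trans le_sup_left, N + 1, ?_⟩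
  · refine lt_of_le_of_ne le_sup_left fun h => hsJ ?_
    rw [h]; exact Ideal.mem_sup_right (Ideal.mem_span_singleton_self s)
  · rw [pow_succ, mul_assoc]
    refine (Ideal.mul_mono_right ?_).trans hN
    rw [Ideal.mul_sup]
    refine sup_le Ideal.mul_le_right ?_
    rw [idealOfVars, Ideal.span_mul_span', Ideal.span_le]
    rintro _ ⟨_, ⟨i, rfl⟩, _, rfl, rfl⟩
    exact hs i

end Linear
end CritDeg


namespace CritDeg

section Main
variable {k : Type*} [Field k]

theorem comb {ι E : Type*} [Fintype ι] [DecidableEq ι] [AddCommGroup E] [Module k E]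
    {A B : Matrix ι ι k} (h : B * A = 1) (x : ι → E) (a : ι) :
    ∑ j, B a j • ∑ c, A j c • x c = x a := by
  simp_rw [Finset.smul_sum, smul_smul]
  rw [Finset.sum_comm]
  simp_rw [← Finset.sum_smul]
  have : ∀ c, ∑ j, B a j * A j c = (1 : Matrix ι ι k) a c := by
    intro c; rw [← h, Matrix.mul_apply]
  simp_rw [this, Matrix.one_apply]
  simp

theorem change {r : ℕ} (b : Fin r → (Fin (r + 1) → k))
    (hb : Module.finrank k (Submodule.span k (Set.range b)) = r) :
    ∃ M N : Matrix (Fin (r + 1)) (Fin (r + 1)) k, M * N = 1 ∧ N * M = 1 ∧ (∀ i, M i.succ = b i) ∧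
      ∀ v : Fin (r + 1) → k, v ⬝ᵥ (fun a => N a 0) = 0 → v ∈ Submodule.span k (Set.range b) := by
  obtain ⟨v0, hv0⟩ := exists_notMem_of_finrank (σ := Fin (r + 1))
    (C := Submodule.span k (Set.range b)) (by rw [hb]; simp)
  have hli : LinearIndependent k b := by
    rw [linearIndependent_iff_card_eq_finrank_span]
    simpa [Set.finrank] using hb.symm
  have hli2 : LinearIndependent k (Fin.cons v0 b : Fin (r + 1) → _) :=
    linearIndependent_finCons.2 ⟨hli, hv0⟩
  let M : Matrix (Fin (r + 1)) (Fin (r + 1)) k := Matrix.of (Fin.cons v0 b)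
  have hM : IsUnit M := Matrix.linearIndependent_rows_iff_isUnit.1 hli2
  have hdet : IsUnit M.det := (Matrix.isUnit_iff_isUnit_det M).1 hM
  refine ⟨M, M⁻¹, Matrix.mul_nonsing_inv _ hdet, Matrix.nonsing_inv_mul _ hdet, fun i => rfl, ?_⟩
  intro v hv
  have h1 : v = Matrix.vecMul (Matrix.vecMul v M⁻¹) M := by
    rw [Matrix.vecMul_vecMul, Matrix.nonsing_inv_mul _ hdet, Matrix.vecMul_one]
  have h0 : Matrix.vecMul v M⁻¹ 0 = 0 := hv
  rw [Matrix.vecMul_eq_sum, Fin.sum_univ_succ, h0, zero_smul, zero_add] at h1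
  rw [h1]
  exact Submodule.sum_mem _ fun i _ => Submodule.smul_mem _ _ (Submodule.subset_span ⟨i, rfl⟩)

theorem exists_perp {r : ℕ} {p : Submodule k (Fin r → k)} (hp : p ≠ ⊤) :
    ∃ v : Fin r → k, v ≠ 0 ∧ ∀ c ∈ p, v ⬝ᵥ c = 0 := by
  obtain ⟨f, hf0, hf⟩ := Submodule.exists_le_ker_of_lt_top p (lt_top_iff_ne_top.2 hp)
  have key : ∀ c, (fun i => f (Pi.single i 1)) ⬝ᵥ c = f c := by
    intro c
    rw [LinearMap.pi_apply_eq_sum_univ f c, dotProduct]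
    refine Finset.sum_congr rfl fun i _ => ?_
    rw [smul_eq_mul, mul_comm]
    congr 2
    ext j; simp [Pi.single_apply, eq_comm]
  refine ⟨fun i => f (Pi.single i 1), ?_, fun c hc => ?_⟩
  · intro h
    apply hf0
    ext c
    rw [h] at key
    simpa using (key (Pi.single c 1)).symm
  · rw [key]; exact hf hc

/-- The expected degree. -/
def Jn (e : ℕ) : ℕ → ℤ
  | 0 => 1
  | r + 1 => (e : ℤ) ^ (r + 1) - Jn e r

theorem Jn_mul (e : ℕ) : ∀ r, Jn e r * ((e : ℤ) + 1) = (e : ℤ) ^ (r + 1) - (-1) ^ (r + 1)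
  | 0 => by simp [Jn]
  | r + 1 => by rw [Jn, sub_mul, Jn_mul e r]; ring

theorem span_tail {E : Type*} [AddCommGroup E] [Module k E] {j : ℕ} (a : Fin (j + 1) → E) :
    Submodule.span k (Set.range a) =
      Submodule.span k {a 0} ⊔ Submodule.span k (Set.range (Fin.tail a)) := by
  conv_lhs => rw [← Fin.cons_self_tail a, Fin.range_cons, Submodule.span_insert]

theorem span_eq_of_comb {E : Type*} [AddCommGroup E] [Module k E] {ι : Type*} [Fintype ι]
    [DecidableEq ι] {A B : Matrix ι ι k} (h : B * A = 1) (x : ι → E) :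
    Submodule.span k (Set.range fun j => ∑ c, A j c • x c) = Submodule.span k (Set.range x) := by
  apply le_antisymm
  · rw [Submodule.span_le]
    rintro _ ⟨j, rfl⟩
    exact Submodule.sum_mem _ fun i _ => Submodule.smul_mem _ _ (Submodule.subset_span ⟨i, rfl⟩)
  · rw [Submodule.span_le]
    rintro _ ⟨a, rfl⟩
    rw [← comb h x a]
    exact Submodule.sum_mem _ fun i _ => Submodule.smul_mem _ _ (Submodule.subset_span ⟨i, rfl⟩)

theorem ideal_span_eq {S : Type*} [CommRing S] [Algebra k S] {s t : Set S}
    (h : Submodule.span k s = Submodule.span k t) : Ideal.span s = Ideal.span t := by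
  have key : ∀ s t : Set S, Submodule.span k s = Submodule.span k t →
      Ideal.span s ≤ Ideal.span t := by
    intro s t h
    rw [Ideal.span_le]
    intro x hx
    have h1 : x ∈ Submodule.span k t := h ▸ Submodule.subset_span hx
    have h2 : Submodule.span k t ≤ (Ideal.span t).restrictScalars k :=
      Submodule.span_le.2 Ideal.subset_span
    exact h2 h1
  exact le_antisymm (key _ _ h) (key _ _ h.symm)

variable {σ : Type*} [Fintype σ]

theorem notMem_of_sup_top {j : ℕ} {C : Submodule k (σ → k)} {u : Fin (j + 1) → (σ → k)}
    (hC : Module.finrank k C + (j + 1) = Fintype.card σ)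
    (hu : C ⊔ Submodule.span k (Set.range u) = ⊤) : u 0 ∉ C := by
  intro h
  rw [span_tail, ← sup_assoc, sup_eq_left.2 ((Submodule.span_singleton_le_iff_mem _ _).2 h)] at hu
  have h1 := Submodule.finrank_add_le_finrank_add_finrank C
    (Submodule.span k (Set.range (Fin.tail u)))
  have h2 := finrank_range_le_card (R := k) (Fin.tail u)
  rw [Set.finrank] at h2
  rw [hu, finrank_top, Module.finrank_fintype_fun_eq_card] at h1
  simp at h2
  omega

theorem main [Infinite k] (e : ℕ) : ∀ (r : ℕ) (C : Submodule k (σ → k)) (u : Fin (r + 1) → (σ → k))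
    (h : Fin (r + 1) → MvPolynomial σ k), Module.finrank k C + (r + 1) = Fintype.card σ →
    C ⊔ Submodule.span k (Set.range u) = ⊤ → (∀ i, (h i).IsHomogeneous e) →
    ∑ i, L (u i) * h i ∈ Kof C → G (Submodule.span k (Set.range h)) r (Kof C) →
    ∃ D, ∀ d ≥ D, hf (Kof C ⊔ Ideal.span (Set.range h)) d = Jn e r
  | 0, C, u, h, hC, hu, hh, hs, hG => by
    have h0 : h 0 ∈ Kof C := by
      apply Kof_reg (notMem_of_sup_top hC hu)
      simpa using hs
    have : Kof C ⊔ Ideal.span (Set.range h) = Kof C := by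
      rw [sup_eq_left, Ideal.span_le]
      rintro _ ⟨i, rfl⟩
      rw [show i = 0 from Fin.ext (by simp)]; exact h0
    rw [this]
    exact Kof_T 0 C hC
  | r + 1, C, u, h, hC, hu, hh, hs, hG => by
    obtain ⟨J, N₀, hIJ, hNJ, hsat⟩ := exists_sat (Kof C ⊔ Ideal.span (Set.range h))
    -- bad subspaces for `y`
    obtain ⟨T, fT, pT, rT⟩ := exists_subspaces
      ((L : (σ → k) →ₗ[k] MvPolynomial σ k) ∘ₗ Fintype.linearCombination k u) J (by
        intro s hs'
        classical
        apply hsat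
        intro i
        have hmem : (Pi.single i (1 : k)) ∈ C ⊔ Submodule.span k (Set.range u) := by
          rw [hu]; trivial
        obtain ⟨x, hx, z, hz, hxz⟩ := Submodule.mem_sup.1 hmem
        rw [← Fintype.range_linearCombination] at hz
        obtain ⟨c, rfl⟩ := hz
        rw [← L_single (k := k), ← hxz, map_add, add_mul]
        exact J.add_mem (J.mul_mem_right _ (hIJ (Ideal.mem_sup_left (L_mem hx)))) (hs' c))
    choose! vp hvp0 hvp using fun (p : Submodule k (Fin (r + 2) → k)) (hp : p ≠ ⊤) =>
      exists_perp hp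
    obtain ⟨b, hb1, hb2, hb3⟩ := select (k := k) (r := r + 1) (V := Fin (r + 2) → k) (by simp)
      (Fintype.linearCombination k h) (vp '' T) (fT.image _) (r + 1) (Kof C) ⊥ (by simp)
      (by
        rintro _ ⟨p, hp, rfl⟩ h0
        exact hvp0 p (pT p hp) (by simpa using h0))
      (by rw [Fintype.range_linearCombination]; exact hG)
    rw [bot_sup_eq] at hb1 hb2
    obtain ⟨M, N, hMN, hNM, hMb, hN⟩ := change b hb1
    let u' : Fin (r + 2) → (σ → k) := fun j => ∑ a, N.transpose j a • u a
    let h' : Fin (r + 2) → MvPolynomial σ k := fun j => ∑ a, M j a • h a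
    have hspanu : Submodule.span k (Set.range u') = Submodule.span k (Set.range u) :=
      span_eq_of_comb (B := M.transpose)
        (by rw [← Matrix.transpose_mul, hNM, Matrix.transpose_one]) u
    have hspanh : Submodule.span k (Set.range h') = Submodule.span k (Set.range h) :=
      span_eq_of_comb hNM h
    have hu' : C ⊔ Submodule.span k (Set.range u') = ⊤ := by rw [hspanu, hu]
    have hh' : ∀ j, (h' j).IsHomogeneous e := fun j =>
      (homogeneousSubmodule σ k e).sum_mem fun a _ => Submodule.smul_mem _ _ (hh a)
    have hs' : ∑ j, L (u' j) * h' j ∈ Kof C := by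
      have : ∑ j, L (u' j) * h' j = ∑ b, L (u b) * h b := by
        have e1 : ∀ j, L (u' j) * h' j = ∑ b, L (u b) * (N b j • h' j) := by
          intro j
          simp only [u', map_sum, map_smul, Finset.sum_mul, Matrix.transpose_apply]
          refine Finset.sum_congr rfl fun b _ => ?_
          rw [smul_mul_assoc, mul_smul_comm]
        simp_rw [e1]
        rw [Finset.sum_comm]
        refine Finset.sum_congr rfl fun b _ => ?_
        rw [← Finset.mul_sum, comb hNM h b]
      rw [this]; exact hs
    have hRS : RS (Kof C) (Fin.tail h') := by
      have : Fin.tail h' = fun i => Fintype.linearCombination k h (b i) := by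
        funext i
        simp only [Fin.tail, h', hMb, Fintype.linearCombination_apply]
      rw [this]; exact hb3
    have hyJ : Reg J (L (u' 0)) := by
      have := rT (fun a => N a 0) (by
        intro p hp hmem
        exact hb2 (vp p) ⟨p, hp, rfl⟩ (hN _ (hvp p (pT p hp) _ hmem)))
      simpa [Fintype.linearCombination_apply, u'] using this
    have huC := notMem_of_sup_top hC hu'
    set y := L (u' 0) with hy
    set t := Fin.tail h' with ht
    have hB : HomI (Kof C ⊔ Ideal.span (Set.range t)) :=
      HomI.sup_span_range (fun i => hh' i.succ) (Kof_hom C)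
    have hI : Kof C ⊔ Ideal.span (Set.range h) =
        Kof C ⊔ Ideal.span (Set.range t) ⊔ Ideal.span {h' 0} := by
      rw [← ideal_span_eq hspanh, span_cons, sup_assoc, sup_comm (Ideal.span {h' 0})]
    have hyh : y * h' 0 ∈ Kof C ⊔ Ideal.span (Set.range t) := by
      rw [Fin.sum_univ_succ] at hs'
      have : y * h' 0 = (L (u' 0) * h' 0 + ∑ i : Fin (r + 1), L (u' i.succ) * h' i.succ) -
        ∑ i : Fin (r + 1), L (u' i.succ) * h' i.succ := by rw [hy]; ring
      rw [this]
      exact Ideal.sub_mem _ (Ideal.mem_sup_left hs') (Ideal.mem_sup_right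
        (Ideal.sum_mem _ fun i _ => Ideal.mul_mem_left _ _ (Ideal.subset_span ⟨i, rfl⟩)))
    obtain ⟨D₀, hD₀⟩ : CritDeg.T 0 ((e : ℤ) ^ (r + 1) * 1)
        (hf (Kof C ⊔ Ideal.span (Set.range t))) := by
      refine RS.t hRS (Kof_hom C) (fun i => hh' i.succ) ?_
      rw [zero_add]; exact Kof_T (r + 1) C hC
    obtain ⟨N₁, hN₁⟩ := finite_length (hI ▸ hB.sup_span (hh' 0)) (L_hom (u' 0)) hNJ
      (fun s hs => hyJ s (hIJ hs)) (D₀ := D₀) (c := (e : ℤ) ^ (r + 1) * 1) (fun d hd => by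
        rw [← hD₀ d hd, hI]; exact hf_mono le_sup_left d)
    rw [hI] at hN₁
    obtain ⟨D₁, hD₁⟩ := hf_add hB (L_hom (u' 0)) (hh' 0) hyh hN₁
    -- next stage
    have hK' := Kof_sup C (u' 0)
    have hrank := finrank_sup_singleton huC
    obtain ⟨D₂, hD₂⟩ := main e r (C ⊔ Submodule.span k {u' 0}) (Fin.tail u') t (by omega)
      (by rw [sup_assoc, ← span_tail]; exact hu') (fun i => hh' i.succ) (by
        rw [Fin.sum_univ_succ] at hs'
        have : ∑ i, L (Fin.tail u' i) * t i =
          (L (u' 0) * h' 0 + ∑ i : Fin (r + 1), L (u' i.succ) * h' i.succ) - y * h' 0 := by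
            simp only [Fin.tail, ht, hy]; ring
        rw [this, hK']
        exact Ideal.sub_mem _ (Ideal.mem_sup_left hs') (Ideal.mem_sup_right
          (Ideal.mul_mem_right _ _ (Ideal.mem_span_singleton_self _))))
      (by
        have g1 : G (Submodule.span k (Set.range t) ⊔ Submodule.span k {y}) (r + 1) (Kof C) :=
          RS.g hRS fun i => Submodule.mem_sup_left (Submodule.subset_span ⟨i, rfl⟩)
        have g2 := G.exchange r g1 (Submodule.mem_sup_right (Submodule.mem_span_singleton_self y))
          (Kof_reg huC)
        rw [hK']
        refine G.conv le_sup_left r _ ?_ g2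
        intro K hK hSF s hs2
        apply hSF
        intro w hw
        obtain ⟨w1, hw1, w2, hw2, rfl⟩ := Submodule.mem_sup.1 hw
        obtain ⟨c, rfl⟩ := Submodule.mem_span_singleton.1 hw2
        rw [add_mul]
        refine K.add_mem (hs2 w1 hw1) (K.mul_mem_right _ ?_)
        rw [smul_eq_C_mul]
        exact K.mul_mem_left _ (hK (Ideal.mem_sup_right (Ideal.mem_span_singleton_self _))))
    refine ⟨D₀ + D₁ + D₂, fun d hd => ?_⟩
    have q0 := hD₀ d (by omega)
    have q1 := hD₁ d (by omega)
    have q2 := hD₂ d (by omega)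
    rw [hK', sup_assoc, sup_comm (Ideal.span {L (u' 0)}), ← sup_assoc] at q2
    rw [hI, Jn]
    rw [q0, q2] at q1
    linarith

end Main

section Final
variable {k : Type*} [Field k] [IsAlgClosed k] {n m : ℕ}

theorem final (hm : 2 ≤ m) (hm0 : (m : k) = 0)
    (F : MvPolynomial (Fin (n + 1)) k) (hhom : F.IsHomogeneous m)
    (hsmooth : ∀ x : Fin (n + 1) → k,
      eval x F = 0 → (∀ i, eval x (pderiv i F) = 0) → x = 0) :
    ∃ D : ℕ, ∀ d ≥ D, hf (Ideal.span (Set.range fun i => pderiv i F)) d = Jn (m - 1) n := by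
  have : Infinite k := IsAlgClosed.instInfinite
  set f : Fin (n + 1) → MvPolynomial (Fin (n + 1)) k := fun i => pderiv i F with hf
  have hfh : ∀ i, (f i).IsHomogeneous (m - 1) := fun i => hhom.pderiv
  have hF0 : F ≠ 0 := by
    rintro rfl
    have := congrFun (hsmooth (fun _ => 1) (by simp) (by simp)) 0
    simp at this
  have hFm : F ∈ idealOfVars (Fin (n + 1)) k := by
    simpa using Ideal.pow_le_pow_right (show 1 ≤ m by omega) (mem_pow_of_hom hhom)
  have hfm : ∀ i, f i ∈ idealOfVars (Fin (n + 1)) k := fun i => by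
    simpa using Ideal.pow_le_pow_right (show 1 ≤ m - 1 by omega) (mem_pow_of_hom (hfh i))
  -- Nullstellensatz
  obtain ⟨N, hN⟩ : ∃ N, idealOfVars (Fin (n + 1)) k ^ N ≤
      Ideal.span (Set.range f) ⊔ Ideal.span {F} := by
    apply Ideal.exists_pow_le_of_le_radical_of_fg _ (IsNoetherian.noetherian _)
    rw [idealOfVars, Ideal.span_le]
    rintro _ ⟨i, rfl⟩
    rw [SetLike.mem_coe, ← vanishingIdeal_zeroLocus_eq_radical (K := k), mem_vanishingIdeal_iff]
    intro x hx
    rw [mem_zeroLocus_iff] at hx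
    have hx0 := hsmooth x
      (by simpa [aeval_eq_eval] using hx F (Ideal.mem_sup_right (Ideal.mem_span_singleton_self F)))
      (fun i => by
        simpa [aeval_eq_eval] using hx (f i) (Ideal.mem_sup_left (Ideal.subset_span ⟨i, rfl⟩)))
    simp [hx0]
  have hreg : Reg (⊥ : Ideal (MvPolynomial (Fin (n + 1)) k)) F := by
    intro s hs
    simpa [hF0] using hs
  let Wm := (idealOfVars (Fin (n + 1)) k).restrictScalars k
  have g0 : G Wm (n + 1) (⊥ : Ideal (MvPolynomial (Fin (n + 1)) k)) := by
    rw [← Kof_bot]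
    apply Kof_G
    · intro c
      have := mem_pow_of_hom (L_hom c)
      simpa [Wm] using this
    · simp
  have g1 := G.exchange n g0 (show F ∈ Wm from hFm) hreg
  have g2 : G (Submodule.span k (Set.range f)) n (⊥ ⊔ Ideal.span {F}) := by
    refine G.conv ?_ n _ ?_ g1
    · rw [Submodule.span_le]
      rintro _ ⟨i, rfl⟩
      exact hfm i
    · intro K hK hSF s hs
      have h1 : ∀ z ∈ idealOfVars (Fin (n + 1)) k ^ N, z * s ∈ K := by
        intro z hz
        have h2 : Ideal.span (Set.range f) ⊔ Ideal.span {F} ≤ K.colon {s} := by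
          refine sup_le ?_ ?_
          · rw [Ideal.span_le]
            rintro _ ⟨i, rfl⟩
            simpa [Submodule.mem_colon_singleton] using hs _ (Submodule.subset_span ⟨i, rfl⟩)
          · rw [Ideal.span_le, Set.singleton_subset_iff]
            have : F * s ∈ K := K.mul_mem_right _
              (hK (Ideal.mem_sup_right (Ideal.mem_span_singleton_self _)))
            simpa [Submodule.mem_colon_singleton] using this
        simpa [Submodule.mem_colon_singleton] using h2 (hN hz)
      have h3 : ∀ (N : ℕ) (s), (∀ z ∈ idealOfVars (Fin (n + 1)) k ^ N, z * s ∈ K) → s ∈ K := by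
        intro N
        induction N with
        | zero => intro s hs; simpa using hs 1 (by simp)
        | succ N ih =>
          intro s hs
          apply hSF
          intro w hw
          apply ih
          intro z hz
          rw [← mul_assoc]
          exact hs _ (by rw [pow_succ]; exact Ideal.mul_mem_mul hz hw)
      exact h3 N s h1
  have g3 : G (Submodule.span k (Set.range f)) n (⊥ : Ideal (MvPolynomial (Fin (n + 1)) k)) := by
    refine G.descend (e := m - 1) ?_ hFm n HomI.bot hreg g2
    intro w hw
    have : Submodule.span k (Set.range f) ≤ homogeneousSubmodule _ k (m - 1) := by
      rw [Submodule.span_le]; rintro _ ⟨i, rfl⟩; exact hfh i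
    exact this hw
  have := main (k := k) (m - 1) n ⊥ (fun i : Fin (n + 1) => Pi.single i 1) f (by simp)
    (by
      rw [bot_sup_eq]
      have := (Pi.basisFun k (Fin (n + 1))).span_eq
      convert this using 3
      ext i j; simp) hfh
    (by
      simp_rw [L_single]
      rw [hhom.sum_X_mul_pderiv, nsmul_eq_mul, ← map_natCast (C (σ := Fin (n + 1)) (R := k)), hm0]
      simp)
    (by rw [Kof_bot]; exact g3)
  simpa [Kof_bot] using this

end Final
end CritDeg

theorem stmt16 {k : Type*} [Field k] [IsAlgClosed k]
    (p : ℕ) (hp : 0 < p) (hchar : ringChar k = p)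
    (n m : ℕ) (hn : 1 ≤ n) (hm : 2 ≤ m) (hpm : p ∣ m)
    (F : MvPolynomial (Fin (n + 1)) k) (hhom : F.IsHomogeneous m)
    (hsmooth : ∀ x : Fin (n + 1) → k,
      eval x F = 0 → (∀ i, eval x (pderiv i F) = 0) → x = 0) :
    ∃ D : ℕ, ∀ d : ℕ, D ≤ d →
      (Module.finrank k
          (↥(homogeneousSubmodule (Fin (n + 1)) k d) ⧸
            Submodule.comap (homogeneousSubmodule (Fin (n + 1)) k d).subtype
              (Submodule.restrictScalars k
                  (Ideal.span (Set.range fun i => pderiv i F)) ⊓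
                homogeneousSubmodule (Fin (n + 1)) k d)) : ℤ) =
        (((m : ℤ) - 1) ^ (n + 1) - (-1 : ℤ) ^ (n + 1)) / (m : ℤ) := by
  have hm0 : (m : k) = 0 := (ringChar.spec k m).2 (hchar ▸ hpm)
  obtain ⟨D, hD⟩ := CritDeg.final hm hm0 F hhom hsmooth
  refine ⟨D, fun d hd => ?_⟩
  rw [CritDeg.hf_eq_finrank, hD d hd]
  have h1 := CritDeg.Jn_mul (m - 1) n
  rw [Nat.cast_sub (by omega)] at h1
  push_cast at h1
  rw [← h1, sub_add_cancel, Int.mul_ediv_cancel _ (by omega)]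
end

section
/- Let k be an algebraically closed field of arbitrary characteristic, and let F ∈ k[x₀,x₁,x₂,x₃] be a homogeneous polynomial of degree 3 such that the cubic surface V(F) is smooth and F is symmetric: F(x_{σ(0)}, x_{σ(1)}, x_{σ(2)}, x_{σ(3)}) = F(x₀,x₁,x₂,x₃) for every permutation σ of {0,1,2,3}. Then there exist a matrix A ∈ GL₄(k) commuting with every 4×4 permutation matrix, λ ∈ kˣ, and c ∈ k such that λ·F(A·x) = x₀³ + x₁³ + x₂³ + x₃³ + c·(x₀x₁x₂ + x₀x₁x₃ + x₀x₂x₃ + x₁x₂x₃). -/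
open MvPolynomial Matrix

/-- The key algebraic fact: existence of a good parameter `v` for `A = 1 + v J`. -/
theorem exists_param {k : Type*} [Field k] [IsAlgClosed k] (a b c : k)
    (hs : ∀ x y z w : k,
      a * (x ^ 3 + y ^ 3 + z ^ 3 + w ^ 3)
        + b * (x ^ 2 * (y + z + w) + y ^ 2 * (x + z + w) + z ^ 2 * (x + y + w)
          + w ^ 2 * (x + y + z))
        + c * (x * y * z + x * y * w + x * z * w + y * z * w) = 0 →
      3 * a * x ^ 2 + b * (2 * x * (y + z + w) + y ^ 2 + z ^ 2 + w ^ 2)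
        + c * (y * z + y * w + z * w) = 0 →
      3 * a * y ^ 2 + b * (2 * y * (x + z + w) + x ^ 2 + z ^ 2 + w ^ 2)
        + c * (x * z + x * w + z * w) = 0 →
      3 * a * z ^ 2 + b * (2 * z * (x + y + w) + x ^ 2 + y ^ 2 + w ^ 2)
        + c * (x * y + x * w + y * w) = 0 →
      3 * a * w ^ 2 + b * (2 * w * (x + y + z) + x ^ 2 + y ^ 2 + z ^ 2)
        + c * (x * y + x * z + y * z) = 0 → x = 0) :
    ∃ v : k, 1 + 4 * v ≠ 0 ∧
      b + (3 * a + 7 * b + 2 * c) * v + 9 * (a + 3 * b + c) * v ^ 2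
        + 12 * (a + 3 * b + c) * v ^ 3 = 0 := by
  have he : a + 3 * b + c ≠ 0 := by
    intro h
    refine one_ne_zero (hs 1 1 1 1 ?_ ?_ ?_ ?_ ?_)
    · linear_combination 4 * h
    all_goals linear_combination 3 * h
  by_cases h2 : (2 : k) = 0
  · obtain ⟨v, hv⟩ := IsAlgClosed.exists_root
      (Polynomial.C (a + 3 * b + c) * Polynomial.X ^ 2 + Polynomial.C (a + b) * Polynomial.X
        + Polynomial.C b) (by rw [Polynomial.degree_quadratic he]; decide)
    simp [Polynomial.IsRoot] at hv
    refine ⟨v, ?_, ?_⟩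
    · intro h
      exact one_ne_zero (α := k) (by linear_combination h - 2 * v * h2)
    · linear_combination hv + (a * v + 3 * b * v + c * v + 4 * (a + 3 * b + c) * v ^ 2
        + 6 * (a + 3 * b + c) * v ^ 3) * h2
  by_cases h3 : (3 : k) = 0
  · by_cases hb : b = 0
    · refine ⟨0, by simp, by simp [hb]⟩
    by_cases hc : c = 0
    · exfalso
      refine one_ne_zero (hs 1 1 1 0 ?_ ?_ ?_ ?_ ?_)
      · linear_combination (a + 2 * b) * h3 + hc
      · linear_combination (a + 2 * b) * h3 + hc
      · linear_combination (a + 2 * b) * h3 + hc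
      · linear_combination (a + 2 * b) * h3 + hc
      · linear_combination b * h3 + 3 * hc
    by_cases hbc : b = c
    · exfalso
      subst hbc
      refine one_ne_zero (hs 1 1 (-1) (-1) ?_ ?_ ?_ ?_ ?_)
      · ring
      · linear_combination a * h3
      · linear_combination a * h3
      · linear_combination a * h3
      · linear_combination a * h3
    · have hbc' : b - c ≠ 0 := sub_ne_zero.2 hbc
      refine ⟨-b / (b - c), ?_, ?_⟩
      · intro h
        field_simp at h
        apply hc
        linear_combination -h - b * h3
      · have hv : (b - c) * (-b / (b - c)) = -b := by field_simp
        generalize -b / (b - c) = v at hv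
        linear_combination hv + ((a + 2 * b + c) * v + 3 * (a + 3 * b + c) * v ^ 2
          + 4 * (a + 3 * b + c) * v ^ 3) * h3
  have h4 : (4 : k) ≠ 0 := by
    intro h
    exact h2 (mul_self_eq_zero.1 (by linear_combination h))
  have h16 : (16 : k) ≠ 0 := by
    intro h
    exact h4 (mul_self_eq_zero.1 (by linear_combination h))
  have key : ∃ t : k, t ≠ 0 ∧ 3 * (a + 3 * b + c) * t ^ 3 + (3 * a + b - c) * t
      + (-6 * a + 6 * b - 2 * c) = 0 := by
    by_cases hQ : -6 * a + 6 * b - 2 * c = 0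
    · by_cases hP : 3 * a + b - c = 0
      · exfalso
        have hb : b = 3 * a := by
          apply mul_left_cancel₀ h4
          linear_combination hQ - 2 * hP
        have hc : c = 6 * a := by linear_combination hb - hP
        subst hb hc
        refine one_ne_zero (hs 1 (-1) 0 0 ?_ ?_ ?_ ?_ ?_) <;> ring
      · obtain ⟨t, ht⟩ := IsAlgClosed.exists_pow_nat_eq
          (-(3 * a + b - c) / (3 * (a + 3 * b + c))) (n := 2) (by norm_num)
        have h3e : 3 * (a + 3 * b + c) ≠ 0 := mul_ne_zero h3 he
        rw [eq_div_iff h3e] at ht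
        refine ⟨t, ?_, ?_⟩
        · rintro rfl
          apply hP
          linear_combination ht
        · linear_combination t * ht + hQ
    · obtain ⟨t, ht⟩ := IsAlgClosed.exists_root
        (Polynomial.C (3 * (a + 3 * b + c)) * Polynomial.X ^ 3 + Polynomial.C 0 * Polynomial.X ^ 2
          + Polynomial.C (3 * a + b - c) * Polynomial.X
          + Polynomial.C (-6 * a + 6 * b - 2 * c))
        (by rw [Polynomial.degree_cubic (mul_ne_zero h3 he)]; decide)
      simp only [Polynomial.IsRoot, Polynomial.eval_add, Polynomial.eval_mul, Polynomial.eval_C,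
        Polynomial.eval_pow, Polynomial.eval_X] at ht
      refine ⟨t, ?_, ?_⟩
      · rintro rfl
        apply hQ
        linear_combination ht
      · linear_combination ht
  obtain ⟨t, ht0, ht⟩ := key
  obtain ⟨v, hv⟩ : ∃ v : k, t = 1 + 4 * v := ⟨(t - 1) / 4, by field_simp; ring⟩
  subst hv
  refine ⟨v, ht0, ?_⟩
  apply mul_left_cancel₀ h16
  linear_combination ht

/-- A symmetric cubic form is a combination of the three monomial symmetric forms. -/
theorem symm_cubic_form {k : Type*} [Field k]
    (F : MvPolynomial (Fin 4) k) (hhom : F.IsHomogeneous 3)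
    (hsymm : ∀ σ : Equiv.Perm (Fin 4), rename σ F = F) :
    ∃ a b c : k, F = C a * (X 0 ^ 3 + X 1 ^ 3 + X 2 ^ 3 + X 3 ^ 3)
        + C b * (X 0 ^ 2 * (X 1 + X 2 + X 3) + X 1 ^ 2 * (X 0 + X 2 + X 3)
          + X 2 ^ 2 * (X 0 + X 1 + X 3) + X 3 ^ 2 * (X 0 + X 1 + X 2))
        + C c * (X 0 * X 1 * X 2 + X 0 * X 1 * X 3 + X 0 * X 2 * X 3 + X 1 * X 2 * X 3) := by
  let E := (Finsupp.equivFunOnFinite (α := Fin 4) (M := ℕ)).symm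
  have hf : ∀ (σ : Equiv.Perm (Fin 4)) (d : Fin 4 → ℕ),
      coeff (E (d ∘ σ)) F = coeff (E d) F := by
    intro σ d
    have h := coeff_rename_mapDomain (σ : Fin 4 → Fin 4) σ.injective F (E (d ∘ σ))
    rw [hsymm] at h
    rw [← h]
    congr 1
    ext i
    obtain ⟨j, rfl⟩ := σ.surjective i
    rw [Finsupp.mapDomain_apply σ.injective]
    rfl
  have hsum : F = ∑ d ∈ Finset.Nat.antidiagonalTuple 4 3, monomial (E d) (coeff (E d) F) := by
    ext m
    rw [coeff_sum]
    simp only [coeff_monomial]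
    obtain ⟨d, rfl⟩ := E.surjective m
    simp only [E.injective.eq_iff]
    rw [Finset.sum_ite_eq']
    split_ifs with h
    · rfl
    · by_contra h0
      apply h
      rw [Finset.Nat.mem_antidiagonalTuple]
      have := hhom h0
      rw [← this, Finsupp.weight_apply, Finsupp.sum_fintype _ _ (by simp)]
      simp [E]
  have hmon : ∀ (d : Fin 4 → ℕ) (r : k), monomial (E d) r
      = C r * (X 0 ^ d 0 * X 1 ^ d 1 * X 2 ^ d 2 * X 3 ^ d 3) := by
    intro d r
    rw [monomial_eq, Finsupp.prod_fintype _ _ (by simp)]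
    simp [Fin.prod_univ_four, E]
  have hlist : Finset.Nat.antidiagonalTuple 4 3 =
    {![3,0,0,0], ![0,3,0,0], ![0,0,3,0], ![0,0,0,3],
     ![2,1,0,0], ![2,0,1,0], ![2,0,0,1], ![1,2,0,0], ![0,2,1,0], ![0,2,0,1],
     ![1,0,2,0], ![0,1,2,0], ![0,0,2,1], ![1,0,0,2], ![0,1,0,2], ![0,0,1,2],
     ![1,1,1,0], ![1,1,0,1], ![1,0,1,1], ![0,1,1,1]} := by decide
  have horb : ∀ d e : Fin 4 → ℕ, (∃ σ : Equiv.Perm (Fin 4), e ∘ σ = d) →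
      coeff (E d) F = coeff (E e) F := by
    rintro d e ⟨σ, rfl⟩
    exact hf σ e
  refine ⟨coeff (E ![3,0,0,0]) F, coeff (E ![2,1,0,0]) F, coeff (E ![1,1,1,0]) F, ?_⟩
  have a1 := horb ![0,3,0,0] ![3,0,0,0] (by decide)
  have a2 := horb ![0,0,3,0] ![3,0,0,0] (by decide)
  have a3 := horb ![0,0,0,3] ![3,0,0,0] (by decide)
  have b1 := horb ![2,0,1,0] ![2,1,0,0] (by decide)
  have b2 := horb ![2,0,0,1] ![2,1,0,0] (by decide)
  have b3 := horb ![1,2,0,0] ![2,1,0,0] (by decide)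
  have b4 := horb ![0,2,1,0] ![2,1,0,0] (by decide)
  have b5 := horb ![0,2,0,1] ![2,1,0,0] (by decide)
  have b6 := horb ![1,0,2,0] ![2,1,0,0] (by decide)
  have b7 := horb ![0,1,2,0] ![2,1,0,0] (by decide)
  have b8 := horb ![0,0,2,1] ![2,1,0,0] (by decide)
  have b9 := horb ![1,0,0,2] ![2,1,0,0] (by decide)
  have b10 := horb ![0,1,0,2] ![2,1,0,0] (by decide)
  have b11 := horb ![0,0,1,2] ![2,1,0,0] (by decide)
  have c1 := horb ![1,1,0,1] ![1,1,1,0] (by decide)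
  have c2 := horb ![1,0,1,1] ![1,1,1,0] (by decide)
  have c3 := horb ![0,1,1,1] ![1,1,1,0] (by decide)
  simp only [hmon] at hsum
  rw [hlist] at hsum
  iterate 19 rw [Finset.sum_insert (by decide)] at hsum
  rw [Finset.sum_singleton, a1, a2, a3, b1, b2, b3, b4, b5, b6, b7, b8, b9, b10, b11,
    c1, c2, c3] at hsum
  generalize coeff (E ![3,0,0,0]) F = a at *
  generalize coeff (E ![2,1,0,0]) F = b at *
  generalize coeff (E ![1,1,1,0]) F = c at *
  rw [hsum]
  simp
  ring

/-- Every smooth cubic surface defined by a symmetric cubic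
form can be brought, by a linear change of variables commuting with all
permutation matrices and a scaling, to the normal form
`x₀³+x₁³+x₂³+x₃³ + c·(x₀x₁x₂ + x₀x₁x₃ + x₀x₂x₃ + x₁x₂x₃)`. -/
theorem stmt17 {k : Type*} [Field k] [IsAlgClosed k]
    (F : MvPolynomial (Fin 4) k) (hF0 : F ≠ 0) (hhom : F.IsHomogeneous 3)
    (hsmooth : ∀ x : Fin 4 → k,
      eval x F = 0 → (∀ i, eval x (pderiv i F) = 0) → x = 0)
    (hsymm : ∀ σ : Equiv.Perm (Fin 4), rename σ F = F) :
    ∃ (A : Matrix (Fin 4) (Fin 4) k) (lam : kˣ) (c : k),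
      IsUnit A.det ∧
      (∀ σ : Equiv.Perm (Fin 4), A * σ.permMatrix k = σ.permMatrix k * A) ∧
      (lam : k) • substMatrix A F =
        X 0 ^ 3 + X 1 ^ 3 + X 2 ^ 3 + X 3 ^ 3 +
          C c * (X 0 * X 1 * X 2 + X 0 * X 1 * X 3 +
            X 0 * X 2 * X 3 + X 1 * X 2 * X 3) := by
  obtain ⟨a, b, c, hF⟩ := symm_cubic_form F hhom hsymm
  have hs : ∀ x y z w : k,
      a * (x ^ 3 + y ^ 3 + z ^ 3 + w ^ 3)
        + b * (x ^ 2 * (y + z + w) + y ^ 2 * (x + z + w) + z ^ 2 * (x + y + w)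
          + w ^ 2 * (x + y + z))
        + c * (x * y * z + x * y * w + x * z * w + y * z * w) = 0 →
      3 * a * x ^ 2 + b * (2 * x * (y + z + w) + y ^ 2 + z ^ 2 + w ^ 2)
        + c * (y * z + y * w + z * w) = 0 →
      3 * a * y ^ 2 + b * (2 * y * (x + z + w) + x ^ 2 + z ^ 2 + w ^ 2)
        + c * (x * z + x * w + z * w) = 0 →
      3 * a * z ^ 2 + b * (2 * z * (x + y + w) + x ^ 2 + y ^ 2 + w ^ 2)
        + c * (x * y + x * w + y * w) = 0 →
      3 * a * w ^ 2 + b * (2 * w * (x + y + z) + x ^ 2 + y ^ 2 + z ^ 2)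
        + c * (x * y + x * z + y * z) = 0 → ![x, y, z, w] = 0 := by
    intro x y z w h h0 h1 h2 h3
    apply hsmooth
    · rw [hF]
      simp
      linear_combination h
    · intro i
      rw [hF]
      fin_cases i
      · simp [pderiv_X]
        linear_combination h0
      · simp [pderiv_X]
        linear_combination h1
      · simp [pderiv_X]
        linear_combination h2
      · simp [pderiv_X]
        linear_combination h3
  obtain ⟨v, hv, hB⟩ := exists_param a b c
    (fun x y z w h h0 h1 h2 h3 => by simpa using congrFun (hs x y z w h h0 h1 h2 h3) 0)
  set al : k := a + (3 * a + 3 * b) * v + 3 * (a + 3 * b + c) * v ^ 2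
    + 4 * (a + 3 * b + c) * v ^ 3 with hal
  set ga : k := c + (12 * b + 6 * c) * v + 18 * (a + 3 * b + c) * v ^ 2
    + 24 * (a + 3 * b + c) * v ^ 3 with hga
  have hal0 : al ≠ 0 := by
    intro h
    rw [hal] at h
    have e0 : 3 * a * (1 + v) ^ 2 + b * (2 * (1 + v) * (v + v + v) + v ^ 2 + v ^ 2 + v ^ 2)
        + c * (v * v + v * v + v * v) = 0 := by
      apply mul_left_cancel₀ hv
      linear_combination (1 + 3 * v) * 3 * h - 3 * v * hB
    have e1 : 3 * a * v ^ 2 + b * (2 * v * ((1 + v) + v + v) + (1 + v) ^ 2 + v ^ 2 + v ^ 2)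
        + c * ((1 + v) * v + (1 + v) * v + v * v) = 0 := by
      apply mul_left_cancel₀ hv
      linear_combination (1 + v) * hB - v * 3 * h
    have hp := hs (1 + v) v v v (by linear_combination h) e0 e1
      (by linear_combination e1) (by linear_combination e1)
    have p0 : 1 + v = 0 := by simpa using congrFun hp 0
    have p1 : v = 0 := by simpa using congrFun hp 1
    exact one_ne_zero (α := k) (by linear_combination p0 - p1)
  refine ⟨Matrix.of (fun i j => if i = j then 1 + v else v), (Units.mk0 al hal0)⁻¹, al⁻¹ * ga, ?_, ?_, ?_⟩
  · have : Matrix.det (Matrix.of (fun i j : Fin 4 => if i = j then 1 + v else v)) = 1 + 4 * v := by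
      rw [Matrix.det_succ_row_zero]
      simp [Fin.sum_univ_four, Matrix.det_fin_three, Fin.succAbove]
      ring
    rw [this]
    exact hv.isUnit
  · intro σ
    rw [Equiv.Perm.permMatrix, PEquiv.mul_toMatrix_toPEquiv, PEquiv.toMatrix_toPEquiv_mul]
    ext i j
    simp [Equiv.eq_symm_apply]
  · have hsub : substMatrix (Matrix.of (fun i j => if i = j then 1 + v else v)) F
        = C al * (X 0 ^ 3 + X 1 ^ 3 + X 2 ^ 3 + X 3 ^ 3) +
          C ga * (X 0 * X 1 * X 2 + X 0 * X 1 * X 3 +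
            X 0 * X 2 * X 3 + X 1 * X 2 * X 3) := by
      have hB' := congrArg (C : k → MvPolynomial (Fin 4) k) hB
      rw [hF, hal, hga, substMatrix]
      simp only [map_add, map_mul, map_pow, map_ofNat, aeval_X, aeval_C, algebraMap_eq, map_zero,
        Fin.sum_univ_four, map_one, Matrix.of_apply] at hB' ⊢
      simp only [Fin.reduceEq, if_true, if_false, map_add, map_one]
      linear_combination (X 0 ^ 2 * (X 1 + X 2 + X 3) + X 1 ^ 2 * (X 0 + X 2 + X 3)
          + X 2 ^ 2 * (X 0 + X 1 + X 3) + X 3 ^ 2 * (X 0 + X 1 + X 2)) * hB'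
    rw [hsub, smul_eq_C_mul, Units.val_inv_eq_inv_val, Units.val_mk0, C_mul]
    have h1 : (C al⁻¹ * C al : MvPolynomial (Fin 4) k) = 1 := by
      rw [← C_mul, inv_mul_cancel₀ hal0, C_1]
    linear_combination (X 0 ^ 3 + X 1 ^ 3 + X 2 ^ 3 + X 3 ^ 3) * h1
end
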